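/- arXiv:math/0107085 — 8 statements merged into one kernel-verified Lean document; each statement's English description precedes it below -/
import Mathlib

section
/- Kopell's Lemma: Let a < b be real numbers and let f and g be orientation-preserving C² diffeomorphisms of the half-open interval [a,b) (i.e., bijections of [a,b) onto itself, twice continuously differentiable with everywhere positive derivative, necessarily fixing a) such that f ∘ g = g ∘ f. If f has no fixed point in the open interval (a,b) and g has at least one fixed point in (a,b), then g is the identity map of [a,b). -/
open Set Filter Topology

namespace Kopell

lemma fix_left {a b : ℝ} (hab : a < b) {f : ℝ → ℝ}
    (hm : MapsTo f (Ico a b) (Ico a b)) (hs : StrictMonoOn f (Ico a b))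
    (hsurj : SurjOn f (Ico a b) (Ico a b)) : f a = a := by
  have ha : a ∈ Ico a b := ⟨le_rfl, hab⟩
  obtain ⟨y, hy, hya⟩ := hsurj ha
  have h1 := hs.monotoneOn ha hy hy.1
  have h2 := (hm ha).1
  linarith

lemma iter_lt {a b : ℝ} (hab : a < b) {f : ℝ → ℝ}
    (hm : MapsTo f (Ico a b) (Ico a b)) (hs : StrictMonoOn f (Ico a b))
    (hsurj : SurjOn f (Ico a b) (Ico a b)) (hlt : ∀ x ∈ Ioo a b, f x < x)
    {x : ℝ} (hx : x ∈ Ico a b) {c : ℝ} (hc : a < c) : ∃ n : ℕ, f^[n] x < c := by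
  by_contra! hcon
  have hbdd : BddBelow (range fun n : ℕ => f^[n] x) := ⟨c, by rintro _ ⟨n, rfl⟩; exact hcon n⟩
  have hcL : c ≤ ⨅ n : ℕ, f^[n] x := le_ciInf hcon
  have hLx : (⨅ n : ℕ, f^[n] x) ≤ x := ciInf_le hbdd 0
  have hmem : ∀ n : ℕ, f^[n] x ∈ Ico a b := fun n => hm.iterate n hx
  obtain ⟨y, hy, hyL⟩ := hsurj (show (⨅ n : ℕ, f^[n] x) ∈ Ico a b from
    ⟨by linarith, by linarith [hx.2]⟩)
  have hay : a < y := by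
    rcases eq_or_lt_of_le hy.1 with h | h
    · rw [← h, fix_left hab hm hs hsurj] at hyL; linarith
    · exact h
  have h1 : (⨅ n : ℕ, f^[n] x) < y := by rw [← hyL]; exact hlt y ⟨hay, hy.2⟩
  obtain ⟨n, hn⟩ := exists_lt_of_ciInf_lt h1
  have h2 : f (f^[n] x) < f y := hs (hmem n) hy hn
  have h3 : (⨅ n : ℕ, f^[n] x) ≤ f^[n+1] x := ciInf_le hbdd (n+1)
  rw [Function.iterate_succ_apply'] at h3
  linarith

/-- Distortion control. -/
def Dist (a : ℝ) (f : ℝ → ℝ) (p C : ℝ) : Prop :=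
  ∀ s t u v u' v' : ℝ, a ≤ s → t ≤ p → u ∈ Icc s t → v ∈ Icc s t → u' ∈ Icc s t → v' ∈ Icc s t →
    u < v → u' < v' →
    (f v - f u) * (v' - u') ≤ Real.exp (C * ((t - s) + (f t - f s))) * ((f v' - f u') * (v - u))

lemma iter_strict {a b : ℝ} {f : ℝ → ℝ}
    (hm : MapsTo f (Ico a b) (Ico a b)) (hs : StrictMonoOn f (Ico a b)) (n : ℕ) :
    StrictMonoOn f^[n] (Ico a b) := by
  induction n with
  | zero => intro x _ y _ h; simpa using h
  | succ n ih =>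
    intro x hx y hy h
    rw [Function.iterate_succ_apply', Function.iterate_succ_apply']
    exact hs (hm.iterate n hx) (hm.iterate n hy) (ih hx hy h)

lemma dist_iter {a b : ℝ} {f : ℝ → ℝ}
    (hm : MapsTo f (Ico a b) (Ico a b)) (hs : StrictMonoOn f (Ico a b))
    (hle : ∀ x ∈ Ico a b, f x ≤ x)
    {p C : ℝ} (hp : p ∈ Ico a b) (hD : Dist a f p C)
    {u v u' v' : ℝ} (hu : u ∈ Icc (f p) p) (hv : v ∈ Icc (f p) p)
    (hu' : u' ∈ Icc (f p) p) (hv' : v' ∈ Icc (f p) p) (huv : u < v) (huv' : u' < v') (n : ℕ) :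
    (f^[n] v - f^[n] u) * (v' - u') ≤
      Real.exp (C * ((p - f^[n] p) + (f p - f^[n+1] p))) * ((f^[n] v' - f^[n] u') * (v - u)) := by
  have hfp := hm hp
  have hS : ∀ {w}, w ∈ Icc (f p) p → w ∈ Ico a b :=
    fun hw => ⟨hfp.1.trans hw.1, hw.2.trans_lt hp.2⟩
  induction n with
  | zero => simp [mul_comm]
  | succ n ih =>
    have mono := (iter_strict hm hs n).monotoneOn
    have hI : ∀ {w}, w ∈ Icc (f p) p → f^[n] w ∈ Icc (f^[n+1] p) (f^[n] p) := fun hw =>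
      ⟨by rw [Function.iterate_succ_apply]; exact mono hfp (hS hw) hw.1, mono (hS hw) hp hw.2⟩
    have hnp : f^[n] p ≤ p := by
      clear ih mono hI
      induction n with
      | zero => simp
      | succ n ih =>
        rw [Function.iterate_succ_apply']
        exact (hle _ (hm.iterate n hp)).trans ih
    have hA := iter_strict hm hs n (hS hu) (hS hv) huv
    have hA' := iter_strict hm hs n (hS hu') (hS hv') huv'
    have key := hD (f^[n+1] p) (f^[n] p) _ _ _ _ (hm.iterate (n+1) hp).1 hnp
      (hI hu) (hI hv) (hI hu') (hI hv') hA hA'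
    simp only [← Function.iterate_succ_apply' f] at key
    set A := f^[n] v - f^[n] u
    set A' := f^[n] v' - f^[n] u'
    have hA0 : 0 < A := sub_pos.2 hA
    have hA0' : 0 < A' := sub_pos.2 hA'
    have hB0 : 0 < v' - u' := sub_pos.2 huv'
    set X := f^[n+1] v - f^[n+1] u
    set X' := f^[n+1] v' - f^[n+1] u'
    have hX' : 0 < X' := sub_pos.2 (iter_strict hm hs (n+1) (hS hu') (hS hv') huv')
    have hmul := mul_le_mul key ih (by positivity) (by positivity)
    have hexp : Real.exp (C * ((p - f^[n+1] p) + (f p - f^[n+1+1] p)))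
      = Real.exp (C * (f^[n] p - f^[n+1] p + (f^[n+1] p - f^[n+1+1] p))) *
        Real.exp (C * ((p - f^[n] p) + (f p - f^[n+1] p))) := by
      rw [← Real.exp_add]; congr 1; ring
    rw [hexp]
    refine le_of_mul_le_mul_right ?_ (mul_pos hA0 hA0')
    refine le_trans (le_of_eq ?_) (hmul.trans (le_of_eq ?_)) <;> ring

lemma g_iter_lower {a b : ℝ} {g : ℝ → ℝ}
    (hm : MapsTo g (Ico a b) (Ico a b)) (hs : StrictMonoOn g (Ico a b))
    {q ε : ℝ} (hq : q ∈ Ico a b) (hgq : g q = q) (hε : ε ≤ 1)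
    (hG : ∀ u v, a ≤ u → u < v → v ≤ q → (1 - ε) * (v - u) ≤ g v - g u)
    {u v : ℝ} (hu : a ≤ u) (huv : u < v) (hv : v ≤ q) (k : ℕ) :
    (1 - ε) ^ k * (v - u) ≤ g^[k] v - g^[k] u := by
  have huS : u ∈ Ico a b := ⟨hu, by linarith [hq.2]⟩
  have hvS : v ∈ Ico a b := ⟨by linarith, by linarith [hq.2]⟩
  induction k with
  | zero => simp
  | succ k ih =>
    have h1 := iter_strict hm hs k huS hvS huv
    have h2 : g^[k] v ≤ q := by
      have := (iter_strict hm hs k).monotoneOn hvS hq hv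
      rwa [Function.iterate_fixed hgq] at this
    have h3 := hG _ _ (hm.iterate k huS).1 h1 h2
    rw [Function.iterate_succ_apply', Function.iterate_succ_apply', pow_succ']
    have := mul_le_mul_of_nonneg_left ih (sub_nonneg.2 hε)
    linarith

lemma core_step {a b : ℝ} (hab : a < b) {f g : ℝ → ℝ}
    (hm : MapsTo f (Ico a b) (Ico a b)) (hs : StrictMonoOn f (Ico a b))
    (hsurj : SurjOn f (Ico a b) (Ico a b)) (hlt : ∀ x ∈ Ioo a b, f x < x)
    (hgm : MapsTo g (Ico a b) (Ico a b)) (hgs : StrictMonoOn g (Ico a b))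
    (hgc : ContinuousOn g (Ico a b))
    (hcomm : ∀ x ∈ Ico a b, f (g x) = g (f x))
    (hG : ∀ ε > 0, ∃ δ > 0, a + δ < b ∧
      ∀ u v, a ≤ u → u < v → v ≤ a + δ → (1 - ε) * (v - u) ≤ g v - g u)
    {p C : ℝ} (hC : 0 ≤ C) (hp : p ∈ Ioo a b) (hgp : g p = p) (hD : Dist a f p C) :
    ∀ x ∈ Icc (f p) p, g x = x := by
  have hfa := fix_left hab hm hs hsurj
  have haS : a ∈ Ico a b := ⟨le_rfl, hab⟩
  have hpS : p ∈ Ico a b := ⟨hp.1.le, hp.2⟩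
  have hfp := hm hpS
  have hafp : a < f p := by have := hs haS hpS hp.1; rwa [hfa] at this
  have hle : ∀ x ∈ Ico a b, f x ≤ x := by
    intro x hx
    rcases eq_or_lt_of_le hx.1 with h | h
    · rw [← h, hfa]
    · exact (hlt x ⟨h, hx.2⟩).le
  have hS : ∀ {w}, w ∈ Icc (f p) p → w ∈ Ico a b :=
    fun hw => ⟨hfp.1.trans hw.1, hw.2.trans_lt hp.2⟩
  have hgfp : g (f p) = f p := by rw [← hcomm p hpS, hgp]
  have hgI : ∀ {w}, w ∈ Icc (f p) p → g w ∈ Icc (f p) p := fun {w} hw => by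
    have h1 := hgs.monotoneOn hfp (hS hw) hw.1
    have h2 := hgs.monotoneOn (hS hw) hpS hw.2
    rw [hgfp] at h1; rw [hgp] at h2; exact ⟨h1, h2⟩
  have hgIk : ∀ (k : ℕ) {w}, w ∈ Icc (f p) p → g^[k] w ∈ Icc (f p) p := fun k w hw =>
    MapsTo.iterate (s := Icc (f p) p) (fun _ h => hgI h) k hw
  have hcomm1 : ∀ (n : ℕ), ∀ x ∈ Ico a b, f^[n] (g x) = g (f^[n] x) := by
    intro n
    induction n with
    | zero => intro x _; rfl
    | succ n ih =>
      intro x hx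
      rw [Function.iterate_succ_apply', Function.iterate_succ_apply', ih x hx,
        hcomm _ (hm.iterate n hx)]
  have hcommk : ∀ (n k : ℕ), ∀ x ∈ Ico a b, f^[n] (g^[k] x) = g^[k] (f^[n] x) := by
    intro n k
    induction k with
    | zero => intro x _; rfl
    | succ k ih =>
      intro x hx
      rw [Function.iterate_succ_apply', Function.iterate_succ_apply',
        hcomm1 n _ (hgm.iterate k hx), ih x hx]
  set M := Real.exp (C * ((p - a) + (p - a))) with hM
  have hM0 : 0 < M := Real.exp_pos _
  have lower : ∀ (k : ℕ) {u v}, u ∈ Icc (f p) p → v ∈ Icc (f p) p → u < v →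
      v - u ≤ 2 * M * (g^[k] v - g^[k] u) := by
    intro k u v hu hv huv
    have hk : (0:ℝ) < 2 * (k + 1) := by positivity
    obtain ⟨δ, hδ, -, hGδ⟩ := hG (1 / (2 * (k + 1))) (by positivity)
    obtain ⟨n, hn⟩ := iter_lt hab hm hs hsurj hlt hpS (show a < a + δ by linarith)
    have hε1 : 1 / (2 * ((k:ℝ) + 1)) ≤ 1 := by
      rw [div_le_one hk]; have : (0:ℝ) ≤ k := by positivity
      linarith
    have hgq : g (f^[n] p) = f^[n] p := by rw [← hcomm1 n p hpS, hgp]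
    have hstr := iter_strict hm hs n
    have h1 := g_iter_lower hgm hgs (hm.iterate n hpS) hgq hε1
      (fun u v h h' h'' => hGδ u v h h' (h''.trans hn.le))
      (hm.iterate n (hS hu)).1 (hstr (hS hu) (hS hv) huv)
      (hstr.monotoneOn (hS hv) hpS hv.2) k
    have hbern : (1:ℝ) / 2 ≤ (1 - 1 / (2 * ((k:ℝ) + 1))) ^ k := by
      have := one_add_mul_le_pow (a := -(1 / (2 * ((k:ℝ) + 1)))) (by linarith) k
      have h2 : (k:ℝ) * (1 / (2 * ((k:ℝ) + 1))) ≤ 1 / 2 := by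
        rw [mul_one_div, div_le_div_iff₀ hk (by norm_num)]; linarith
      rw [← sub_eq_add_neg] at this
      linarith
    rw [← hcommk n k v (hS hv), ← hcommk n k u (hS hu)] at h1
    have hgk := iter_strict hgm hgs k (hS hu) (hS hv) huv
    have h3 := dist_iter hm hs hle hpS hD (hgIk k hu) (hgIk k hv) hu hv hgk huv n
    set A := f^[n] v - f^[n] u
    have hA0 : 0 < A := sub_pos.2 (hstr (hS hu) (hS hv) huv)
    have hE : Real.exp (C * ((p - f^[n] p) + (f p - f^[n+1] p))) ≤ M := by
      apply Real.exp_le_exp.2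
      apply mul_le_mul_of_nonneg_left _ hC
      have := (hm.iterate n hpS).1
      have := (hm.iterate (n+1) hpS).1
      have := hle p hpS
      linarith
    have hw : 0 < g^[k] v - g^[k] u := sub_pos.2 hgk
    have hd : 0 < v - u := sub_pos.2 huv
    have h4 : 1 / 2 * A * (v - u) ≤ M * (A * (g^[k] v - g^[k] u)) :=
      calc 1 / 2 * A * (v - u) ≤ (1 - 1 / (2 * ((k:ℝ) + 1))) ^ k * A * (v - u) := by gcongr
        _ ≤ (f^[n] (g^[k] v) - f^[n] (g^[k] u)) * (v - u) := by gcongr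
        _ ≤ _ := h3
        _ ≤ _ := by gcongr
    refine le_of_mul_le_mul_left ?_ hA0
    linarith
  have lowerabs : ∀ (k : ℕ) {u v}, u ∈ Icc (f p) p → v ∈ Icc (f p) p →
      |v - u| ≤ 2 * M * |g^[k] v - g^[k] u| := by
    intro k u v hu hv
    rcases lt_trichotomy u v with h | h | h
    · have h1 := lower k hu hv h
      rw [abs_of_pos (sub_pos.2 h)]
      exact h1.trans (by gcongr; exact le_abs_self _)
    · simp [h]
    · have h1 := lower k hv hu h
      rw [abs_sub_comm, abs_of_pos (sub_pos.2 h), abs_sub_comm]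
      exact h1.trans (by gcongr; exact le_abs_self _)
  intro x hx
  have hconv : ∃ d, Tendsto (fun k : ℕ => g^[k] x) atTop (𝓝 d) := by
    rcases le_total x (g x) with h | h
    · refine ⟨_, tendsto_atTop_ciSup (monotone_nat_of_le_succ fun k => ?_)
        ⟨p, by rintro _ ⟨k, rfl⟩; exact (hgIk k hx).2⟩⟩
      show g^[k] x ≤ g^[k+1] x
      rw [Function.iterate_succ_apply]
      exact (iter_strict hgm hgs k).monotoneOn (hS hx) (hS (hgI hx)) h
    · refine ⟨_, tendsto_atTop_ciInf (antitone_nat_of_succ_le fun k => ?_)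
        ⟨f p, by rintro _ ⟨k, rfl⟩; exact (hgIk k hx).1⟩⟩
      show g^[k+1] x ≤ g^[k] x
      rw [Function.iterate_succ_apply]
      exact (iter_strict hgm hgs k).monotoneOn (hS (hgI hx)) (hS hx) h
  obtain ⟨d, hd⟩ := hconv
  have hdI : d ∈ Icc (f p) p := isClosed_Icc.mem_of_tendsto hd (Eventually.of_forall fun k => hgIk k hx)
  have hcd : ContinuousAt g d := hgc.continuousAt
    (Ico_mem_nhds (hafp.trans_le hdI.1) (hdI.2.trans_lt hp.2))
  have hgd : g d = d := isFixedPt_of_tendsto_iterate hd hcd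
  have hlim : Tendsto (fun k : ℕ => 2 * M * |g^[k] x - d|) atTop (𝓝 (2 * M * |d - d|)) :=
    ((hd.sub_const d).abs).const_mul _
  have hxd : |x - d| ≤ 2 * M * |d - d| := ge_of_tendsto' hlim fun k => by
    have := lowerabs k hdI hx
    rwa [Function.iterate_fixed hgd] at this
  have : x = d := by
    simp only [sub_self, abs_zero, mul_zero] at hxd
    exact sub_eq_zero.1 (abs_nonpos_iff.1 hxd)
  rw [this, hgd]

lemma core {a b : ℝ} (hab : a < b) {f g : ℝ → ℝ}
    (hm : MapsTo f (Ico a b) (Ico a b)) (hs : StrictMonoOn f (Ico a b))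
    (hsurj : SurjOn f (Ico a b) (Ico a b)) (hlt : ∀ x ∈ Ioo a b, f x < x)
    (hgm : MapsTo g (Ico a b) (Ico a b)) (hgs : StrictMonoOn g (Ico a b))
    (hgsurj : SurjOn g (Ico a b) (Ico a b))
    (hgc : ContinuousOn g (Ico a b))
    (hcomm : ∀ x ∈ Ico a b, f (g x) = g (f x))
    (hG : ∃ m : ℝ, ∀ ε > 0, ∃ δ > 0, a + δ < b ∧
      ∀ u v, a ≤ u → u < v → v ≤ a + δ → |g v - g u - m * (v - u)| ≤ ε * (v - u))
    (hD : ∀ p ∈ Ioo a b, ∃ C, 0 ≤ C ∧ Dist a f p C)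
    (hgfix : ∃ x ∈ Ioo a b, g x = x) : ∀ x ∈ Ico a b, g x = x := by
  obtain ⟨p, hp, hgp⟩ := hgfix
  have hfa := fix_left hab hm hs hsurj
  have hga := fix_left hab hgm hgs hgsurj
  have haS : a ∈ Ico a b := ⟨le_rfl, hab⟩
  have hpS : p ∈ Ico a b := ⟨hp.1.le, hp.2⟩
  have hpos : ∀ n : ℕ, ∀ x ∈ Ioo a b, f^[n] x ∈ Ioo a b := by
    intro n x hx
    refine MapsTo.iterate (s := Ioo a b) (fun y hy => ?_) n hx
    have h := hm (Ioo_subset_Ico_self hy)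
    have := hs haS (Ioo_subset_Ico_self hy) hy.1
    rw [hfa] at this
    exact ⟨this, h.2⟩
  have hcomm1 : ∀ (n : ℕ), ∀ x ∈ Ico a b, f^[n] (g x) = g (f^[n] x) := by
    intro n
    induction n with
    | zero => intro x _; rfl
    | succ n ih =>
      intro x hx
      rw [Function.iterate_succ_apply', Function.iterate_succ_apply', ih x hx,
        hcomm _ (hm.iterate n hx)]
  have hfixn : ∀ n : ℕ, g (f^[n] p) = f^[n] p := fun n => by rw [← hcomm1 n p hpS, hgp]
  obtain ⟨m, hG⟩ := hG
  have hm1 : m = 1 := by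
    by_contra hne
    have habs : 0 < |1 - m| := abs_pos.2 (sub_ne_zero.2 (Ne.symm hne))
    obtain ⟨δ, hδ, -, h⟩ := hG (|1 - m| / 2) (by positivity)
    obtain ⟨n, hn⟩ := iter_lt hab hm hs hsurj hlt hpS (show a < a + δ by linarith)
    have hq := hpos n p hp
    have := h a (f^[n] p) le_rfl hq.1 hn.le
    rw [hfixn, hga, show f^[n] p - a - m * (f^[n] p - a) = (1 - m) * (f^[n] p - a) by ring,
      abs_mul, abs_of_pos (sub_pos.2 hq.1)] at this
    have := le_of_mul_le_mul_right this (sub_pos.2 hq.1)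
    linarith
  subst hm1
  have hG' : ∀ ε > 0, ∃ δ > 0, a + δ < b ∧
      ∀ u v, a ≤ u → u < v → v ≤ a + δ → (1 - ε) * (v - u) ≤ g v - g u := by
    intro ε hε
    obtain ⟨δ, hδ, hb, h⟩ := hG ε hε
    refine ⟨δ, hδ, hb, fun u v h1 h2 h3 => ?_⟩
    have := (abs_le.1 (h u v h1 h2 h3)).1
    linarith
  have step : ∀ n : ℕ, ∀ x ∈ Icc (f^[n+1] p) (f^[n] p), g x = x := by
    intro n
    obtain ⟨C, hC, hDC⟩ := hD _ (hpos n p hp)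
    rw [Function.iterate_succ_apply']
    exact core_step hab hm hs hsurj hlt hgm hgs hgc hcomm hG' hC (hpos n p hp) (hfixn n) hDC
  have small : ∀ x ∈ Ioc a p, g x = x := by
    intro x hx
    classical
    have hex : ∃ n : ℕ, f^[n] p < x := iter_lt hab hm hs hsurj hlt hpS hx.1
    have h1 := Nat.find_spec hex
    have h2 := fun k => Nat.find_min hex (m := k)
    set N := Nat.find hex
    rcases Nat.eq_zero_or_pos N with h0 | h0
    · rw [h0] at h1; simp at h1; linarith [hx.2]
    · obtain ⟨k, hk⟩ := Nat.exists_eq_succ_of_ne_zero h0.ne'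
      refine step k x ⟨?_, not_lt.1 (h2 k (by omega))⟩
      rw [hk] at h1; exact h1.le
  intro x hx
  rcases eq_or_lt_of_le hx.1 with h | h
  · rw [← h, hga]
  · obtain ⟨n, hn⟩ := iter_lt hab hm hs hsurj hlt hx hp.1
    have h1 := small (f^[n] x) ⟨(hpos n x ⟨h, hx.2⟩).1, hn.le⟩
    rw [← hcomm1 n x hx] at h1
    exact (iter_strict hm hs n).injOn (hgm hx) hx h1

section diff
variable {a b : ℝ} {f : ℝ → ℝ}

lemma mvt (hf : ContDiffOn ℝ 2 f (Ico a b)) {u v : ℝ} (hu : a ≤ u) (huv : u < v) (hv : v < b) :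
    ∃ ξ ∈ Ioo u v, f v - f u = derivWithin f (Ico a b) ξ * (v - u) := by
  have hsub : Icc u v ⊆ Ico a b := fun x hx => ⟨hu.trans hx.1, hx.2.trans_lt hv⟩
  have hd : ∀ x ∈ Ioo u v, HasDerivAt f (derivWithin f (Ico a b) x) x := by
    intro x hx
    have := (hf.differentiableOn (by norm_num) x (hsub (Ioo_subset_Icc_self hx))).hasDerivWithinAt
    exact this.hasDerivAt (Ico_mem_nhds (hu.trans_lt hx.1) (hx.2.trans hv))
  obtain ⟨ξ, hξ, h⟩ := exists_hasDerivAt_eq_slope f _ huv (hf.continuousOn.mono hsub) hd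
  refine ⟨ξ, hξ, ?_⟩
  rw [h, div_mul_cancel₀ _ (sub_pos.2 huv).ne']

lemma dwC1 (hab : a < b) (hf : ContDiffOn ℝ 2 f (Ico a b)) :
    ContDiffOn ℝ 1 (derivWithin f (Ico a b)) (Ico a b) :=
  hf.derivWithin (uniqueDiffOn_Ico a b) (by norm_num)

lemma strict (hf : ContDiffOn ℝ 2 f (Ico a b))
    (hf' : ∀ x ∈ Ico a b, 0 < derivWithin f (Ico a b) x) : StrictMonoOn f (Ico a b) := by
  intro u hu v hv huv
  obtain ⟨ξ, hξ, h⟩ := mvt hf hu.1 huv hv.2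
  have := hf' ξ ⟨hu.1.trans hξ.1.le, hξ.2.trans hv.2⟩
  have := mul_pos this (sub_pos.2 huv)
  linarith

lemma gder (hab : a < b) (hf : ContDiffOn ℝ 2 f (Ico a b)) :
    ∃ m : ℝ, ∀ ε > 0, ∃ δ > 0, a + δ < b ∧
      ∀ u v, a ≤ u → u < v → v ≤ a + δ → |f v - f u - m * (v - u)| ≤ ε * (v - u) := by
  refine ⟨derivWithin f (Ico a b) a, fun ε hε => ?_⟩
  have hc := (dwC1 hab hf).continuousOn a ⟨le_rfl, hab⟩
  obtain ⟨δ, hδ, h⟩ := Metric.continuousWithinAt_iff.1 hc ε hε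
  refine ⟨min (δ / 2) ((b - a) / 2), by apply lt_min <;> linarith, ?_, ?_⟩
  · linarith [min_le_right (δ / 2) ((b - a) / 2)]
  · intro u v hu huv hv
    have h1 := min_le_left (δ / 2) ((b - a) / 2)
    have h2 := min_le_right (δ / 2) ((b - a) / 2)
    obtain ⟨ξ, hξ, e⟩ := mvt hf hu huv (by linarith)
    have h3 := h (x := ξ) ⟨hu.trans hξ.1.le, by linarith [hξ.2]⟩ (by
      rw [Real.dist_eq, abs_of_nonneg] <;> linarith [hξ.1, hξ.2])
    rw [Real.dist_eq] at h3
    rw [e, ← sub_mul, abs_mul, abs_of_pos (sub_pos.2 huv)]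
    have := sub_pos.2 huv
    gcongr

lemma distF (hab : a < b) (hf : ContDiffOn ℝ 2 f (Ico a b))
    (hf' : ∀ x ∈ Ico a b, 0 < derivWithin f (Ico a b) x) {p : ℝ} (hp : p ∈ Ioo a b) :
    ∃ C, 0 ≤ C ∧ ∀ s t u v u' v' : ℝ, a ≤ s → t ≤ p → u ∈ Icc s t → v ∈ Icc s t →
      u' ∈ Icc s t → v' ∈ Icc s t → u < v → u' < v' →
      (f v - f u) * (v' - u') ≤ Real.exp (C * (t - s)) * ((f v' - f u') * (v - u)) := by
  set φ := derivWithin f (Ico a b) with hφ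
  have hsub : Icc a p ⊆ Ico a b := fun x hx => ⟨hx.1, hx.2.trans_lt hp.2⟩
  have hφ1 := (dwC1 hab hf).mono hsub
  obtain ⟨K, hK⟩ := hφ1.exists_lipschitzOnWith (by norm_num) (convex_Icc a p) isCompact_Icc
  obtain ⟨z, hz, hzmin⟩ := isCompact_Icc.exists_isMinOn (nonempty_Icc.2 hp.1.le) hφ1.continuousOn
  have hz0 : 0 < φ z := hf' z (hsub hz)
  refine ⟨K / φ z, by positivity, ?_⟩
  intro s t u v u' v' has htp hu hv hu' hv' huv huv'
  obtain ⟨ξ, hξ, e⟩ := mvt hf (has.trans hu.1) huv ((hv.2.trans htp).trans_lt hp.2)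
  obtain ⟨η, hη, e'⟩ := mvt hf (has.trans hu'.1) huv' ((hv'.2.trans htp).trans_lt hp.2)
  have hξI : ξ ∈ Icc a p := ⟨by linarith [hξ.1, hu.1], by linarith [hξ.2, hv.2]⟩
  have hηI : η ∈ Icc a p := ⟨by linarith [hη.1, hu'.1], by linarith [hη.2, hv'.2]⟩
  have hmin : φ z ≤ φ η := hzmin hηI
  have hL := hK.dist_le_mul ξ hξI η hηI
  rw [Real.dist_eq, Real.dist_eq] at hL
  have hts : |ξ - η| ≤ t - s := by
    rw [abs_le]; constructor <;> linarith [hξ.1, hξ.2, hη.1, hη.2, hu.1, hv.2, hu'.1, hv'.2]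
  have hts0 : 0 ≤ t - s := (abs_nonneg _).trans hts
  have hr : φ ξ ≤ Real.exp (K / φ z * (t - s)) * φ η := by
    have h1 : φ ξ ≤ φ η + K * (t - s) := by
      have h2 := (le_abs_self _).trans hL
      have h3 : (K:ℝ) * |ξ - η| ≤ K * (t - s) := by gcongr
      linarith
    have h4 : K * (t - s) ≤ K / φ z * (t - s) * φ η := by
      have : K * (t - s) = K / φ z * (t - s) * φ z := by field_simp
      rw [this]; gcongr
    have h5 := Real.add_one_le_exp (K / φ z * (t - s))
    have h6 := mul_le_mul_of_nonneg_right h5 (hz0.le.trans hmin)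
    linarith
  rw [e, e']
  have h7 : 0 ≤ (v - u) * (v' - u') := (mul_pos (sub_pos.2 huv) (sub_pos.2 huv')).le
  have := mul_le_mul_of_nonneg_right hr h7
  linarith

end diff

end Kopell

open Kopell


/-- **Kopell's Lemma.** If `f` and `g` are commuting orientation-preserving C²
diffeomorphisms of the half-open interval `[a, b)`, `f` has no fixed point in `(a, b)`,
and `g` has a fixed point in `(a, b)`, then `g` is the identity on `[a, b)`. -/
theorem kopell_lemma (a b : ℝ) (hab : a < b) (f g : ℝ → ℝ)
    (hfbij : Set.BijOn f (Set.Ico a b) (Set.Ico a b))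
    (hgbij : Set.BijOn g (Set.Ico a b) (Set.Ico a b))
    (hf2 : ContDiffOn ℝ 2 f (Set.Ico a b))
    (hg2 : ContDiffOn ℝ 2 g (Set.Ico a b))
    (hf' : ∀ x ∈ Set.Ico a b, 0 < derivWithin f (Set.Ico a b) x)
    (hg' : ∀ x ∈ Set.Ico a b, 0 < derivWithin g (Set.Ico a b) x)
    (hcomm : ∀ x ∈ Set.Ico a b, f (g x) = g (f x))
    (hfnofix : ∀ x ∈ Set.Ioo a b, f x ≠ x)
    (hgfix : ∃ x ∈ Set.Ioo a b, g x = x) :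
    ∀ x ∈ Set.Ico a b, g x = x := by
  have hs := strict hf2 hf'
  have hgs := strict hg2 hg'
  have hfa := fix_left hab hfbij.mapsTo hs hfbij.surjOn
  have haS : a ∈ Ico a b := ⟨le_rfl, hab⟩
  -- constant sign of `f x - x`
  have hsign : (∀ x ∈ Ioo a b, f x < x) ∨ (∀ x ∈ Ioo a b, x < f x) := by
    by_contra! hcon
    obtain ⟨⟨x, hx, h1⟩, ⟨y, hy, h2⟩⟩ := hcon
    have hc : ContinuousOn (fun z => f z - z) (Ioo a b) :=
      (hf2.continuousOn.mono Ioo_subset_Ico_self).sub continuousOn_id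
    obtain ⟨z, hz, h0⟩ := isPreconnected_Ioo.intermediate_value hy hx hc
      (show (0:ℝ) ∈ Icc (f y - y) (f x - x) from ⟨by linarith, by linarith⟩)
    exact hfnofix z hz (sub_eq_zero.1 h0)
  rcases hsign with hlt | hgt
  · refine core hab hfbij.mapsTo hs hfbij.surjOn hlt hgbij.mapsTo hgs hgbij.surjOn
      hg2.continuousOn hcomm (gder hab hg2) ?_ hgfix
    intro p hp
    obtain ⟨C, hC, h⟩ := distF hab hf2 hf' hp
    refine ⟨C, hC, ?_⟩
    intro s t u v u' v' has htp hu hv hu' hv' huv huv'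
    refine (h s t u v u' v' has htp hu hv hu' hv' huv huv').trans ?_
    have hst : s ≤ t := hu.1.trans hu.2
    have hsS : s ∈ Ico a b := ⟨has, by linarith [hp.2]⟩
    have htS : t ∈ Ico a b := ⟨by linarith, by linarith [hp.2]⟩
    have hmon := hs.monotoneOn hsS htS hst
    have hu'S : u' ∈ Ico a b := ⟨by linarith [hu'.1], by linarith [hu'.2, htS.2]⟩
    have hv'S : v' ∈ Ico a b := ⟨by linarith [hv'.1], by linarith [hv'.2, htS.2]⟩
    have h1 := hs hu'S hv'S huv'
    have h2 : 0 ≤ (f v' - f u') * (v - u) := (mul_pos (sub_pos.2 h1) (sub_pos.2 huv)).le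
    refine mul_le_mul_of_nonneg_right (Real.exp_le_exp.2 ?_) h2
    refine mul_le_mul_of_nonneg_left ?_ hC
    linarith
  · set h := Function.invFunOn f (Ico a b) with hdef
    have hinv : InvOn h f (Ico a b) (Ico a b) := hfbij.invOn_invFunOn
    have hhb : BijOn h (Ico a b) (Ico a b) := hinv.symm.bijOn hfbij.surjOn.mapsTo_invFunOn hfbij.mapsTo
    have hhm := hhb.mapsTo
    have hfh : ∀ x ∈ Ico a b, f (h x) = x := hinv.2
    have hhs : StrictMonoOn h (Ico a b) := by
      intro x hx y hy hxy
      rw [← hs.lt_iff_lt (hhm hx) (hhm hy), hfh x hx, hfh y hy]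
      exact hxy
    have hha := fix_left hab hhm hhs hhb.surjOn
    have hhlt : ∀ x ∈ Ioo a b, h x < x := by
      intro x hx
      have hxS := Ioo_subset_Ico_self hx
      have h1 := hhs haS hxS hx.1
      rw [hha] at h1
      have := hgt (h x) ⟨h1, (hhm hxS).2⟩
      rwa [hfh x hxS] at this
    have hhcomm : ∀ x ∈ Ico a b, h (g x) = g (h x) := by
      intro x hx
      apply hs.injOn (hhm (hgbij.mapsTo hx)) (hgbij.mapsTo (hhm hx))
      rw [hfh _ (hgbij.mapsTo hx), hcomm _ (hhm hx), hfh x hx]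
    refine core hab hhm hhs hhb.surjOn hhlt hgbij.mapsTo hgs hgbij.surjOn
      hg2.continuousOn hhcomm (gder hab hg2) ?_ hgfix
    intro p hp
    obtain ⟨C, hC, hd⟩ := distF hab hf2 hf' hp
    refine ⟨C, hC, ?_⟩
    intro s t u v u' v' has htp hu hv hu' hv' huv huv'
    have hst : s ≤ t := hu.1.trans hu.2
    have hsS : s ∈ Ico a b := ⟨has, by linarith [hp.2]⟩
    have htS : t ∈ Ico a b := ⟨by linarith, by linarith [hp.2]⟩
    have hS : ∀ {w}, w ∈ Icc s t → w ∈ Ico a b :=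
      fun hw => ⟨has.trans hw.1, hw.2.trans_lt htS.2⟩
    have hI : ∀ {w}, w ∈ Icc s t → h w ∈ Icc (h s) (h t) := fun hw =>
      ⟨hhs.monotoneOn hsS (hS hw) hw.1, hhs.monotoneOn (hS hw) htS hw.2⟩
    have hmon := hhs.monotoneOn hsS htS hst
    have hpS := Ioo_subset_Ico_self hp
    have h3 := hhs (hS hu) (hS hv) huv
    have h3' := hhs (hS hu') (hS hv') huv'
    have h1 := hd (h s) (h t) (h u') (h v') (h u) (h v) (hhm hsS).1
      ((hhs.monotoneOn htS hpS htp).trans (hhlt p hp).le) (hI hu') (hI hv') (hI hu) (hI hv) h3' h3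
    rw [hfh _ (hS hu), hfh _ (hS hv), hfh _ (hS hu'), hfh _ (hS hv')] at h1
    have h2 : 0 ≤ (h v' - h u') * (v - u) := (mul_pos (sub_pos.2 h3') (sub_pos.2 huv)).le
    have h4 : Real.exp (C * (h t - h s)) ≤ Real.exp (C * ((t - s) + (h t - h s))) := by
      refine Real.exp_le_exp.2 (mul_le_mul_of_nonneg_left ?_ hC)
      linarith
    have h5 := mul_le_mul_of_nonneg_right h4 h2
    linarith
end

section
/- Hölder's Theorem: Let G be a group of orientation-preserving homeomorphisms of ℝ and let X ⊆ ℝ be a nonempty closed set invariant under every element of G. Suppose the action of G on X is free and effective, i.e., any element of G that fixes some point of X is the identity element of G. Then G is abelian. -/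
theorem holder_floor {G : Type*} [Group G] [LinearOrder G] [MulLeftStrictMono G]
    [MulRightStrictMono G]
    (arch : ∀ g : G, 1 < g → ∀ h : G, ∃ n : ℕ, h < g ^ n) (d : G) (hd : 1 < d) (g : G) :
    ∃ n : ℤ, d ^ n ≤ g ∧ g < d ^ (n + 1) := by
  have hmono : StrictMono (fun n : ℤ => d ^ n) := by
    apply strictMono_int_of_lt_succ
    intro n
    show d ^ n < d ^ (n + 1)
    rw [zpow_add_one]
    exact lt_mul_of_one_lt_right' _ hd
  obtain ⟨N, hN⟩ := arch d hd g
  obtain ⟨M, hM⟩ := arch d hd g⁻¹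
  have hbd : ∃ b : ℤ, ∀ z : ℤ, d ^ z ≤ g → z ≤ b := by
    refine ⟨N, fun z hz => ?_⟩
    have : d ^ z < d ^ (N : ℤ) := by
      rw [zpow_natCast]; exact lt_of_le_of_lt hz hN
    exact (hmono.lt_iff_lt.1 this).le
  have hin : ∃ z : ℤ, d ^ z ≤ g := by
    refine ⟨-(M : ℤ), ?_⟩
    rw [zpow_neg, zpow_natCast]
    have h1 := mul_lt_mul_right hM g
    have h2 := mul_lt_mul_left h1 (d ^ M)⁻¹
    simp at h2
    exact h2.le
  obtain ⟨n, hn, hmax⟩ := Int.exists_greatest_of_bdd hbd hin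
  refine ⟨n, hn, ?_⟩
  by_contra hc
  have := hmax (n + 1) (not_lt.1 hc)
  omega

theorem holder_abstract {G : Type*} [Group G] [LinearOrder G] [MulLeftStrictMono G]
    [MulRightStrictMono G]
    (arch : ∀ g : G, 1 < g → ∀ h : G, ∃ n : ℕ, h < g ^ n) (a b : G) : a * b = b * a := by
  have := mulLeftMono_of_mulLeftStrictMono G
  have := mulRightMono_of_mulRightStrictMono G
  by_cases hmin : ∃ c : G, 1 < c ∧ ∀ f : G, 1 < f → c ≤ f
  · obtain ⟨c, hc, hcm⟩ := hmin
    have key : ∀ g : G, ∃ n : ℤ, g = c ^ n := by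
      intro g
      obtain ⟨n, h1, h2⟩ := holder_floor arch c hc g
      refine ⟨n, ?_⟩
      by_contra hne
      have h3 : c ^ n < g := lt_of_le_of_ne h1 (Ne.symm hne)
      have h4 : 1 < (c ^ n)⁻¹ * g := by
        rw [lt_inv_mul_iff_mul_lt]; simpa using h3
      have h5 := hcm _ h4
      rw [le_inv_mul_iff_mul_le, ← zpow_add_one] at h5
      exact absurd h2 (not_lt.2 h5)
    obtain ⟨m, rfl⟩ := key a
    obtain ⟨n, rfl⟩ := key b
    rw [← zpow_add, ← zpow_add, add_comm]
  · push Not at hmin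
    have half : ∀ e : G, 1 < e → ∃ d : G, 1 < d ∧ d * d ≤ e := by
      intro e he
      obtain ⟨f, hf, hfe⟩ := hmin e he
      by_cases h : f * f ≤ e
      · exact ⟨f, hf, h⟩
      · refine ⟨e * f⁻¹, ?_, ?_⟩
        · rw [lt_mul_inv_iff_mul_lt]; simpa using hfe
        · have h1 : f⁻¹ * (e * f⁻¹) ≤ 1 := by
            rw [inv_mul_le_iff_le_mul, mul_inv_le_iff_le_mul]
            simpa using (not_le.1 h).le
          calc e * f⁻¹ * (e * f⁻¹) = e * (f⁻¹ * (e * f⁻¹)) := by group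
            _ ≤ e * 1 := mul_le_mul_right h1 e
            _ = e := mul_one e
    have key : ∀ a b : G, ¬ (b * a < a * b) := by
      intro a b hlt
      have he : 1 < a * b * (b * a)⁻¹ := by
        rw [lt_mul_inv_iff_mul_lt]; simpa using hlt
      obtain ⟨d, hd, hde⟩ := half _ he
      obtain ⟨m, hm1, hm2⟩ := holder_floor arch d hd a
      obtain ⟨n, hn1, hn2⟩ := holder_floor arch d hd b
      rw [le_mul_inv_iff_mul_le] at hde
      have h1 : d ^ n * d ^ m ≤ b * a := mul_le_mul' hn1 hm1
      have h2 : a * b < d ^ (m + 1) * d ^ (n + 1) := mul_lt_mul_of_lt_of_lt hm2 hn2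
      have h3 : d * d * (d ^ n * d ^ m) ≤ a * b := (mul_le_mul_right h1 (d * d)).trans hde
      have h4 : d * d * (d ^ n * d ^ m) = d ^ (m + 1) * d ^ (n + 1) := by
        rw [← zpow_add, ← zpow_add, ← zpow_two, ← zpow_add]
        congr 1; ring
      rw [h4] at h3
      exact absurd h2 (not_lt.2 h3)
    exact le_antisymm (not_lt.1 (key a b)) (not_lt.1 (key b a))

theorem holder_unbounded (G : Subgroup (Equiv.Perm ℝ))
    (hmono : ∀ g ∈ G, StrictMono (g : ℝ → ℝ))
    (X : Set ℝ) (hXcl : IsClosed X)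
    (hXinv : ∀ g ∈ G, (g : ℝ → ℝ) '' X = X)
    (hfree : ∀ g ∈ G, (∃ x ∈ X, g x = x) → g = 1)
    (g : Equiv.Perm ℝ) (hg : g ∈ G) (x : ℝ) (hx : x ∈ X) (hxg : x < g x) (y : ℝ) :
    ∃ n : ℕ, y < (g ^ n) x := by
  by_contra hcon
  push Not at hcon
  have hbdd : BddAbove (Set.range fun n : ℕ => (g ^ n) x) := ⟨y, by rintro _ ⟨n, rfl⟩; exact hcon n⟩
  have hne : (Set.range fun n : ℕ => (g ^ n) x).Nonempty := ⟨_, 0, rfl⟩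
  have hsub : (Set.range fun n : ℕ => (g ^ n) x) ⊆ X := by
    rintro _ ⟨n, rfl⟩
    rw [← hXinv _ (G.pow_mem hg n)]
    exact ⟨x, hx, rfl⟩
  have hs : sSup (Set.range fun n : ℕ => (g ^ n) x) ∈ X :=
    hXcl.closure_subset_iff.2 hsub (csSup_mem_closure hne hbdd)
  set s := sSup (Set.range fun n : ℕ => (g ^ n) x) with hsdef
  have hle : ∀ n : ℕ, (g ^ n) x ≤ s := fun n => le_csSup hbdd ⟨n, rfl⟩
  have h1 : s ≤ g⁻¹ s := by
    apply csSup_le hne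
    rintro _ ⟨n, rfl⟩
    rw [← (hmono g hg).le_iff_le]
    have := hle (n + 1)
    rw [pow_succ'] at this
    simpa using this
  have h2 : g s ≤ s := by
    have := (hmono g hg).monotone h1
    simpa using this
  have h3 : s ≤ g s := by
    apply csSup_le hne
    rintro _ ⟨n, rfl⟩
    have h4 : (g ^ n) x < (g ^ (n + 1)) x := by
      rw [pow_succ]
      exact hmono _ (G.pow_mem hg n) hxg
    rw [pow_succ'] at h4
    exact h4.le.trans ((hmono g hg).monotone (hle n))
  have := hfree g hg ⟨s, hs, le_antisymm h2 h3⟩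
  subst this
  simp at hxg

theorem holder_cross (G : Subgroup (Equiv.Perm ℝ))
    (hmono : ∀ g ∈ G, StrictMono (g : ℝ → ℝ))
    (X : Set ℝ) (hXcl : IsClosed X)
    (hXinv : ∀ g ∈ G, (g : ℝ → ℝ) '' X = X)
    (hfree : ∀ g ∈ G, (∃ x ∈ X, g x = x) → g = 1)
    (g : Equiv.Perm ℝ) (hg : g ∈ G) (x y : ℝ) (hx : x ∈ X) (hxg : x < g x) (hxy : x ≤ y) :
    y < g y := by
  by_contra hy
  obtain ⟨n, hn⟩ := holder_unbounded G hmono X hXcl hXinv hfree g hg x hx hxg y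
  have h : ∀ n : ℕ, (g ^ n) y ≤ y := by
    intro n
    induction n with
    | zero => simp
    | succ k ih =>
      rw [pow_succ']
      exact ((hmono g hg).monotone ih).trans (not_lt.1 hy)
  exact absurd hn (not_lt.2 (((hmono _ (G.pow_mem hg n)).monotone hxy).trans (h n)))

theorem holder_sign (G : Subgroup (Equiv.Perm ℝ))
    (hmono : ∀ g ∈ G, StrictMono (g : ℝ → ℝ))
    (X : Set ℝ) (hXcl : IsClosed X)
    (hXinv : ∀ g ∈ G, (g : ℝ → ℝ) '' X = X)
    (hfree : ∀ g ∈ G, (∃ x ∈ X, g x = x) → g = 1)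
    (g : Equiv.Perm ℝ) (hg : g ∈ G) (x y : ℝ) (hx : x ∈ X) (hy : y ∈ X) (hxg : x < g x) :
    y < g y := by
  rcases le_total x y with h | h
  · exact holder_cross G hmono X hXcl hXinv hfree g hg x y hx hxg h
  · rcases lt_trichotomy y (g y) with h1 | h1 | h1
    · exact h1
    · have := hfree g hg ⟨y, hy, h1.symm⟩
      subst this
      simp at hxg
    · have h2 : y < g⁻¹ y := by
        rw [← (hmono g hg).lt_iff_lt]; simpa using h1
      have h3 := holder_cross G hmono X hXcl hXinv hfree g⁻¹ (G.inv_mem hg) y x hy h2 h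
      have h4 := hmono g hg h3
      simp at h4
      exact absurd hxg (not_lt.2 h4.le)

/-- **Hölder's Theorem.** A group `G` of orientation-preserving homeomorphisms of `ℝ`
(modelled as strictly increasing bijections of `ℝ`; such maps are automatically
homeomorphisms) acting freely and effectively on a nonempty closed invariant set
`X ⊆ ℝ` is abelian. -/
theorem holder_theorem (G : Subgroup (Equiv.Perm ℝ))
    (hmono : ∀ g ∈ G, StrictMono (g : ℝ → ℝ))
    (X : Set ℝ) (hXne : X.Nonempty) (hXcl : IsClosed X)
    (hXinv : ∀ g ∈ G, (g : ℝ → ℝ) '' X = X)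
    (hfree : ∀ g ∈ G, (∃ x ∈ X, g x = x) → g = 1) :
    ∀ g ∈ G, ∀ h ∈ G, g * h = h * g := by
  obtain ⟨x, hx⟩ := hXne
  have hinj : Function.Injective (fun g : G => (g : Equiv.Perm ℝ) x) := by
    intro g h hgh
    have h1 : (g : Equiv.Perm ℝ) x = (h : Equiv.Perm ℝ) x := hgh
    have := hfree ((h : Equiv.Perm ℝ)⁻¹ * g) (G.mul_mem (G.inv_mem h.2) g.2) ⟨x, hx, by simp [h1]⟩
    exact Subtype.ext (inv_mul_eq_one.1 this).symm
  letI : LinearOrder G := LinearOrder.lift' (fun g : G => (g : Equiv.Perm ℝ) x) hinj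
  have hlt : ∀ g h : G, g < h ↔ (g : Equiv.Perm ℝ) x < (h : Equiv.Perm ℝ) x := fun g h => Iff.rfl
  haveI : MulLeftStrictMono G := ⟨by
    intro k g h hgh
    rw [hlt] at hgh ⊢
    exact hmono k k.2 hgh⟩
  haveI : MulRightStrictMono G := ⟨by
    intro k g h hgh
    rw [hlt] at hgh
    show ((g * k : G) : Equiv.Perm ℝ) x < ((h * k : G) : Equiv.Perm ℝ) x
    have hk : (k : Equiv.Perm ℝ) x ∈ X := by
      rw [← hXinv _ k.2]; exact ⟨x, hx, rfl⟩
    have h1 : x < ((g : Equiv.Perm ℝ)⁻¹ * h) x := by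
      rw [← (hmono g g.2).lt_iff_lt]; simpa using hgh
    have h2 := holder_sign G hmono X hXcl hXinv hfree _ (G.mul_mem (G.inv_mem g.2) h.2) x _ hx hk h1
    have h3 := hmono g g.2 h2
    simpa using h3⟩
  have arch : ∀ g : G, 1 < g → ∀ h : G, ∃ n : ℕ, h < g ^ n := by
    intro g hg h
    rw [hlt] at hg
    obtain ⟨n, hn⟩ := holder_unbounded G hmono X hXcl hXinv hfree g g.2 x hx (by simpa using hg)
      ((h : Equiv.Perm ℝ) x)
    exact ⟨n, by rw [hlt]; simpa using hn⟩
  intro g hg h hh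
  exact congrArg Subtype.val (holder_abstract arch (⟨g, hg⟩ : G) ⟨h, hh⟩)
end

section
/- Let μ be a Borel measure on ℝ that is finite on compact sets, invariant under the translation T(x) = x + 1, and satisfies μ([x, x+1)) = 1 for all x ∈ ℝ (i.e., μ is the lift of a Borel probability measure on S¹ = ℝ/ℤ). Let F be an orientation-preserving homeomorphism of ℝ commuting with T and preserving μ. For x ∈ ℝ define the mean translation number τ_μ(F) = μ([x, F(x))) if F(x) > x, τ_μ(F) = 0 if F(x) = x, and τ_μ(F) = −μ([F(x), x)) if F(x) < x. Then τ_μ(F) is independent of the point x used to define it, and τ_μ(F) equals the translation number τ(F) = lim_{n→∞} (Fⁿ(x) − x)/n. Moreover, if G is another orientation-preserving homeomorphism of ℝ commuting with T and preserving μ, then τ_μ(F ∘ G) = τ_μ(F) + τ_μ(G). -/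
open MeasureTheory Filter

/-- The mean translation number `τ_μ(F)` of `F` computed at the point `x`:
`μ([x, F x))` if `F x > x`, `0` if `F x = x`, and `−μ([F x, x))` if `F x < x`. -/
noncomputable def meanTranslationNumber (μ : Measure ℝ) (F : ℝ → ℝ) (x : ℝ) : ℝ :=
  if x < F x then (μ (Set.Ico x (F x))).toReal
  else if F x = x then 0
  else -(μ (Set.Ico (F x) x)).toReal

/-- Signed mass of the half-open interval from `a` to `b`. -/
noncomputable def signedMass (μ : Measure ℝ) (a b : ℝ) : ℝ :=
  if a < b then (μ (Set.Ico a b)).toReal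
  else if b = a then 0
  else -(μ (Set.Ico b a)).toReal

theorem signedMass_of_le (μ : Measure ℝ) {a b : ℝ} (h : a ≤ b) :
    signedMass μ a b = μ.real (Set.Ico a b) := by
  rcases h.lt_or_eq with h | h
  · simp [signedMass, h, Measure.real]
  · simp [signedMass, h, Measure.real]

theorem signedMass_antisymm (μ : Measure ℝ) (a b : ℝ) :
    signedMass μ a b = - signedMass μ b a := by
  rcases lt_trichotomy a b with h | h | h
  · simp [signedMass, h, h.not_gt, h.ne]
  · simp [signedMass, h]
  · simp [signedMass, h, h.not_gt, h.ne]

theorem signedMass_add_of_le (μ : Measure ℝ) [IsFiniteMeasureOnCompacts μ] {a b c : ℝ}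
    (hab : a ≤ b) (hbc : b ≤ c) :
    signedMass μ a b + signedMass μ b c = signedMass μ a c := by
  rw [signedMass_of_le μ hab, signedMass_of_le μ hbc, signedMass_of_le μ (hab.trans hbc),
    ← Set.Ico_union_Ico_eq_Ico hab hbc, measureReal_union Set.Ico_disjoint_Ico_same
      measurableSet_Ico measure_Ico_lt_top.ne measure_Ico_lt_top.ne]

theorem signedMass_add (μ : Measure ℝ) [IsFiniteMeasureOnCompacts μ] (a b c : ℝ) :
    signedMass μ a b + signedMass μ b c = signedMass μ a c := by
  have key := fun {a b c : ℝ} => @signedMass_add_of_le μ _ a b c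
  have h1 := signedMass_antisymm μ a b
  have h2 := signedMass_antisymm μ b c
  have h3 := signedMass_antisymm μ a c
  rcases le_total a b with h | h <;> rcases le_total b c with h' | h' <;>
    rcases le_total a c with h'' | h''
  · linarith [key h h']
  · linarith [key h h', key h' h'', key h'' h]
  · linarith [key h'' h']
  · linarith [key h'' h]
  · linarith [key h h'']
  · linarith [key h' h'']
  · linarith [key h' h, key h h'', key h'' h']
  · linarith [key h' h]

theorem signedMass_map (μ : Measure ℝ) {F : ℝ → ℝ} (hFm : StrictMono F)
    (hFμ : MeasurePreserving F μ μ) (a b : ℝ) :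
    signedMass μ (F a) (F b) = signedMass μ a b := by
  have key : ∀ a b, a ≤ b → signedMass μ (F a) (F b) = signedMass μ a b := by
    intro a b h
    rw [signedMass_of_le μ h, signedMass_of_le μ (hFm.monotone h), Measure.real, Measure.real,
      ← hFμ.measure_preimage measurableSet_Ico.nullMeasurableSet]
    congr 2
    ext x
    simp [hFm.le_iff_le, hFm.lt_iff_lt]
  rcases le_total a b with h | h
  · exact key a b h
  · rw [signedMass_antisymm, key b a h, ← signedMass_antisymm]

theorem meanTranslationNumber_eq_signedMass (μ : Measure ℝ) (F : ℝ → ℝ) (x : ℝ) :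
    meanTranslationNumber μ F x = signedMass μ x (F x) := rfl

theorem meanTranslationNumber_const (μ : Measure ℝ) [IsFiniteMeasureOnCompacts μ] {F : ℝ → ℝ}
    (hFm : StrictMono F) (hFμ : MeasurePreserving F μ μ) (x y : ℝ) :
    meanTranslationNumber μ F x = meanTranslationNumber μ F y := by
  simp only [meanTranslationNumber_eq_signedMass]
  have h1 := signedMass_add μ x (F x) (F y)
  have h2 := signedMass_add μ x y (F y)
  have h3 := signedMass_map μ hFm hFμ x y
  linarith

/-- The distribution function of `μ` as a degree one lift. -/
noncomputable def massLift (μ : Measure ℝ) [IsFiniteMeasureOnCompacts μ]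
    (hμ1 : ∀ x : ℝ, μ (Set.Ico x (x + 1)) = 1) : CircleDeg1Lift where
  toFun x := signedMass μ 0 x
  monotone' := by
    intro a b h
    have h1 := signedMass_add μ 0 a b
    have h2 : 0 ≤ signedMass μ a b := by
      rw [signedMass_of_le μ h]; exact measureReal_nonneg
    change signedMass μ 0 a ≤ signedMass μ 0 b
    linarith
  map_add_one' := by
    intro x
    have h1 := signedMass_add μ 0 x (x + 1)
    have h2 : signedMass μ x (x + 1) = 1 := by
      rw [signedMass_of_le μ (by linarith), Measure.real, hμ1]; rfl
    change signedMass μ 0 (x + 1) = signedMass μ 0 x + 1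
    linarith

theorem abs_signedMass_sub_le (μ : Measure ℝ) [IsFiniteMeasureOnCompacts μ]
    (hμ1 : ∀ x : ℝ, μ (Set.Ico x (x + 1)) = 1) (x : ℝ) : |signedMass μ 0 x - x| ≤ 1 := by
  have h1 := (massLift μ hμ1).map_le_of_map_zero x
  have h2 := (massLift μ hμ1).le_map_of_map_zero x
  change signedMass μ 0 x ≤ signedMass μ 0 0 + _ at h1
  change signedMass μ 0 0 + _ ≤ signedMass μ 0 x at h2
  have h0 : signedMass μ 0 0 = 0 := by simp [signedMass]
  rw [abs_le]
  constructor <;> linarith [Int.ceil_lt_add_one x, Int.lt_floor_add_one x]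

theorem signedMass_iterate (μ : Measure ℝ) [IsFiniteMeasureOnCompacts μ] {F : ℝ → ℝ}
    (hFm : StrictMono F) (hFμ : MeasurePreserving F μ μ) (x : ℝ) (k : ℕ) :
    signedMass μ 0 (F^[k] x) = signedMass μ 0 x + k * meanTranslationNumber μ F x := by
  induction k with
  | zero => simp
  | succ k ih =>
    rw [Function.iterate_succ_apply', ← signedMass_add μ 0 (F^[k] x), ih,
      ← meanTranslationNumber_eq_signedMass, meanTranslationNumber_const μ hFm hFμ (F^[k] x) x]
    push_cast
    ring

/-- Let `μ` be a Borel measure on `ℝ`, finite on compacts, invariant under `T x = x + 1`,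
with `μ [x, x+1) = 1` for all `x` (the lift of a probability measure on the circle).
If `F` is an orientation-preserving homeomorphism of `ℝ` commuting with `T` and
preserving `μ`, then the mean translation number of `F` is independent of the base
point, equals the translation number `lim (Fⁿ(x) − x)/n`, and is additive:
`τ_μ(F ∘ G) = τ_μ(F) + τ_μ(G)` for `G` satisfying the same hypotheses. -/
theorem meanTranslationNumber_props (μ : Measure ℝ) [IsFiniteMeasureOnCompacts μ]
    (hμ1 : ∀ x : ℝ, μ (Set.Ico x (x + 1)) = 1)
    (hμT : MeasurePreserving (fun x : ℝ => x + 1) μ μ)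
    (F G : ℝ → ℝ)
    (hFm : StrictMono F) (hFs : Function.Surjective F)
    (hFT : ∀ x, F (x + 1) = F x + 1) (hFμ : MeasurePreserving F μ μ)
    (hGm : StrictMono G) (hGs : Function.Surjective G)
    (hGT : ∀ x, G (x + 1) = G x + 1) (hGμ : MeasurePreserving G μ μ) :
    (∀ x y : ℝ, meanTranslationNumber μ F x = meanTranslationNumber μ F y) ∧
    (∀ x : ℝ, Tendsto (fun k : ℕ => (F^[k] x - x) / (k : ℝ)) atTop
      (nhds (meanTranslationNumber μ F x))) ∧
    (∀ x : ℝ, meanTranslationNumber μ (F ∘ G) x =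
      meanTranslationNumber μ F x + meanTranslationNumber μ G x) := by
  refine ⟨meanTranslationNumber_const μ hFm hFμ, fun x => ?_, fun x => ?_⟩
  · rw [tendsto_iff_dist_tendsto_zero]
    refine squeeze_zero' (Eventually.of_forall fun _ => dist_nonneg) ?_
      (tendsto_const_div_atTop_nhds_zero_nat (2 : ℝ))
    filter_upwards [eventually_gt_atTop 0] with k hk
    have hk' : (0 : ℝ) < k := by exact_mod_cast hk
    have h1 := abs_le.1 (abs_signedMass_sub_le μ hμ1 x)
    have h2 := abs_le.1 (abs_signedMass_sub_le μ hμ1 (F^[k] x))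
    have h3 := signedMass_iterate μ hFm hFμ x k
    have h4 : (F^[k] x - x) / (k : ℝ) - meanTranslationNumber μ F x =
        (F^[k] x - x - k * meanTranslationNumber μ F x) / k := by
      field_simp
    rw [Real.dist_eq, h4, abs_div, abs_of_pos hk']
    gcongr
    rw [abs_le]
    constructor <;> linarith
  · rw [meanTranslationNumber_const μ hFm hFμ x (G x)]
    simp only [meanTranslationNumber_eq_signedMass, Function.comp]
    linarith [signedMass_add μ x (G x) (F (G x))]
end

section
/- Suppose f₀ and g₀ are orientation-preserving homeomorphisms of the circle S¹ = ℝ/ℤ which both preserve a Borel probability measure μ₀ on S¹, and suppose their rotation numbers are equal: ρ(f₀) = ρ(g₀). Then f₀(x) = g₀(x) for every x in the topological support of μ₀. -/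
open MeasureTheory

namespace RotAux

lemma coe_eq_imp {a b : ℝ} (h : (a : AddCircle (1 : ℝ)) = b) : ∃ n : ℤ, b = a + n := by
  have h1 := (QuotientAddGroup.eq (s := AddSubgroup.zmultiples (1 : ℝ))).1 h
  obtain ⟨n, hn⟩ := AddSubgroup.mem_zmultiples_iff.1 h1
  refine ⟨n, ?_⟩
  simp at hn
  linarith

lemma coe_add_int (a : ℝ) (n : ℤ) : ((a + n : ℝ) : AddCircle (1 : ℝ)) = a := by
  have h := AddCircle.coe_period (1 : ℝ)
  have : ((n : ℝ) : AddCircle (1 : ℝ)) = 0 := by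
    have h2 : (n : ℝ) = n • (1 : ℝ) := by simp
    rw [h2, AddCircle.coe_zsmul, h, smul_zero]
  rw [AddCircle.coe_add, this, add_zero]

/-- the arc `[x, y)` in the circle -/
def arc (x y : ℝ) : Set (AddCircle (1 : ℝ)) := (fun t : ℝ => (t : AddCircle (1 : ℝ))) '' Set.Ico x y

lemma injOn_coe {x y : ℝ} (h : y ≤ x + 1) :
    Set.InjOn (fun t : ℝ => (t : AddCircle (1 : ℝ))) (Set.Ico x y) := by
  intro a ha b hb hab
  obtain ⟨n, hn⟩ := coe_eq_imp hab
  obtain ⟨h1, h2⟩ := ha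
  obtain ⟨h3, h4⟩ := hb
  have h5 : (n : ℝ) < 1 := by linarith
  have h6 : (-1 : ℝ) < n := by linarith
  have h7 : n < 1 := by exact_mod_cast h5
  have h8 : -1 < n := by exact_mod_cast h6
  have : n = 0 := by omega
  subst this
  simp at hn
  exact hn.symm

lemma measurableSet_arc {x y : ℝ} (h : y ≤ x + 1) : MeasurableSet (arc x y) :=
  measurableSet_Ico.image_of_continuousOn_injOn
    (AddCircle.continuous_mk' (1 : ℝ)).continuousOn (injOn_coe h)

lemma arc_disjoint {x y z : ℝ} (hz : z ≤ x + 1) (hxy : x ≤ y) (hyz : y ≤ z) :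
    Disjoint (arc x y) (arc y z) := by
  rw [Set.disjoint_left]
  rintro _ ⟨a, ha, rfl⟩ ⟨b, hb, hab⟩
  have := injOn_coe hz ⟨hxy.trans hb.1, hb.2⟩ ⟨ha.1, ha.2.trans_le hyz⟩ hab
  have h1 := ha.2
  have h2 := hb.1
  linarith

lemma arc_union {x y z : ℝ} (hxy : x ≤ y) (hyz : y ≤ z) :
    arc x y ∪ arc y z = arc x z := by
  rw [arc, arc, arc, ← Set.image_union, Set.Ico_union_Ico_eq_Ico hxy hyz]

lemma arc_add_int (x y : ℝ) (n : ℤ) : arc (x + n) (y + n) = arc x y := by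
  ext p
  constructor
  · rintro ⟨a, ⟨h1, h2⟩, rfl⟩
    refine ⟨a - n, ⟨by linarith, by linarith⟩, ?_⟩
    have := coe_add_int (a - n) n
    simp only [sub_add_cancel] at this
    exact this.symm
  · rintro ⟨a, ⟨h1, h2⟩, rfl⟩
    exact ⟨a + n, ⟨by linarith, by linarith⟩, coe_add_int a n⟩

lemma arc_full (x : ℝ) : arc x (x + 1) = Set.univ := by
  ext p
  simp only [Set.mem_univ, iff_true]
  induction p using QuotientAddGroup.induction_on with
  | H z =>
    refine ⟨z + ((-⌊z - x⌋ : ℤ) : ℝ), ⟨?_, ?_⟩, coe_add_int z _⟩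
    · push_cast
      linarith [Int.floor_le (z - x)]
    · push_cast
      linarith [Int.lt_floor_add_one (z - x)]

section
variable (μ : Measure (AddCircle (1 : ℝ))) [IsProbabilityMeasure μ]

lemma arc_add {x y z : ℝ} (hz : z ≤ x + 1) (hxy : x ≤ y) (hyz : y ≤ z) :
    μ.real (arc x z) = μ.real (arc x y) + μ.real (arc y z) := by
  rw [← arc_union hxy hyz, measureReal_union (arc_disjoint hz hxy hyz)
    (measurableSet_arc (by linarith))]

/-- the distribution function of the lifted measure -/
noncomputable def cdfLift (x : ℝ) : ℝ := ⌊x⌋ + μ.real (arc ⌊x⌋ x)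

lemma cdfLift_add_one (x : ℝ) : cdfLift μ (x + 1) = cdfLift μ x + 1 := by
  have h := arc_add_int ⌊x⌋ x 1
  simp only [Int.cast_one] at h
  simp only [cdfLift, Int.floor_add_one, Int.cast_add, Int.cast_one, h]
  ring

lemma cdfLift_sub {x y : ℝ} (hxy : x ≤ y) (hy : y ≤ x + 1) :
    cdfLift μ y = cdfLift μ x + μ.real (arc x y) := by
  have a1 := Int.floor_le x
  have a2 := Int.lt_floor_add_one x
  by_cases h : y < ⌊x⌋ + 1
  · have hf : ⌊y⌋ = ⌊x⌋ := Int.floor_eq_iff.2 ⟨by linarith, h⟩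
    rw [cdfLift, cdfLift, hf, arc_add μ h.le a1 hxy]
    ring
  · push Not at h
    have hf : ⌊y⌋ = ⌊x⌋ + 1 := Int.floor_eq_iff.2 ⟨by push_cast; linarith, by push_cast; linarith⟩
    have e1 := arc_add μ hy a2.le h
    have e2 := arc_add μ le_rfl a1 a2.le
    rw [arc_full, probReal_univ] at e2
    rw [cdfLift, cdfLift, hf, e1]
    push_cast
    linarith

lemma cdfLift_mono : Monotone (cdfLift μ) := by
  intro x y hxy
  by_cases hy : y ≤ x + 1
  · rw [cdfLift_sub μ hxy hy]
    linarith [measureReal_nonneg (μ := μ) (s := arc x y)]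
  · push Not at hy
    have h1 : ⌊x⌋ + 1 ≤ ⌊y⌋ := by
      rw [← Int.floor_add_one]
      exact Int.floor_mono hy.le
    have h2 : (⌊x⌋ : ℝ) + 1 ≤ ⌊y⌋ := by exact_mod_cast h1
    have h3 : μ.real (arc ⌊x⌋ x) ≤ 1 := measureReal_le_one
    have h4 := measureReal_nonneg (μ := μ) (s := arc ⌊y⌋ y)
    rw [cdfLift, cdfLift]
    linarith

lemma cdfLift_add_int (x : ℝ) (n : ℤ) : cdfLift μ (x + n) = cdfLift μ x + n :=
  (⟨⟨cdfLift μ, cdfLift_mono μ⟩, cdfLift_add_one μ⟩ : CircleDeg1Lift).map_add_int x n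

lemma preimage_arc (F : CircleDeg1Lift) (hF : StrictMono F)
    (f : AddCircle (1 : ℝ) → AddCircle (1 : ℝ)) (hf : ∀ x : ℝ, f ↑x = ↑(F x)) (x y : ℝ) :
    f ⁻¹' (arc (F x) (F y)) = arc x y := by
  ext p
  induction p using QuotientAddGroup.induction_on with
  | H z =>
    constructor
    · rintro ⟨w, ⟨h1, h2⟩, hw⟩
      have hw' : ((F z : ℝ) : AddCircle (1 : ℝ)) = w := by
        rw [← hf]; exact hw.symm
      obtain ⟨n, hn⟩ := coe_eq_imp hw'
      rw [← F.map_add_int] at hn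
      subst hn
      exact ⟨z + n, ⟨hF.le_iff_le.1 h1, hF.lt_iff_lt.1 h2⟩, coe_add_int z n⟩
    · rintro ⟨w, ⟨h1, h2⟩, hw⟩
      refine ⟨F w, ⟨hF.monotone h1, hF h2⟩, ?_⟩
      rw [← hw]
      exact (hf w).symm

lemma cdfLift_semiconj (F : CircleDeg1Lift) (hF : StrictMono F)
    (f : AddCircle (1 : ℝ) → AddCircle (1 : ℝ)) (hf : ∀ x : ℝ, f ↑x = ↑(F x))
    (hμ : MeasurePreserving f μ μ) (x : ℝ) :
    cdfLift μ (F x) = cdfLift μ x + F.translationNumber := by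
  have key : ∀ x y : ℝ, x ≤ y → y ≤ x + 1 →
      cdfLift μ (F x) - cdfLift μ x = cdfLift μ (F y) - cdfLift μ y := by
    intro x y hxy hy
    have hy' : F y ≤ F x + 1 := by
      rw [← F.map_add_one]; exact F.monotone hy
    have e : μ.real (arc (F x) (F y)) = μ.real (arc x y) := by
      rw [← preimage_arc F hF f hf x y, measureReal_def, measureReal_def,
        hμ.measure_preimage (measurableSet_arc hy').nullMeasurableSet]
    rw [cdfLift_sub μ hxy hy, cdfLift_sub μ (F.monotone hxy) hy', e]
    ring
  set c := cdfLift μ (F 0) - cdfLift μ 0 with hc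
  have hall : ∀ x, cdfLift μ (F x) = cdfLift μ x + c := by
    intro x
    have h1 := key 0 (Int.fract x) (Int.fract_nonneg x) (by linarith [Int.fract_lt_one x])
    have h2 : x = Int.fract x + ⌊x⌋ := (Int.fract_add_floor x).symm
    rw [h2, F.map_add_int, cdfLift_add_int, cdfLift_add_int]
    linarith
  have hsc : Function.Semiconj
      (⟨⟨cdfLift μ, cdfLift_mono μ⟩, cdfLift_add_one μ⟩ : CircleDeg1Lift) F
      (CircleDeg1Lift.translate (Multiplicative.ofAdd c) : CircleDeg1Lift) := by
    intro x
    rw [CircleDeg1Lift.translate_apply]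
    exact (hall x).trans (add_comm _ _)
  have := CircleDeg1Lift.translationNumber_eq_of_semiconj hsc
  rw [CircleDeg1Lift.translationNumber_translate] at this
  rw [this, hall]

lemma no_lt (A B : ℝ → ℝ) (hA : StrictMono A) (hAc : Continuous A) (hBc : Continuous B)
    (c : ℝ) (hcA : ∀ x, cdfLift μ (A x) = cdfLift μ x + c)
    (hcB : ∀ x, cdfLift μ (B x) = cdfLift μ x + c) (x : ℝ) 
    (hx : ∀ U : Set (AddCircle (1 : ℝ)), IsOpen U → (x : AddCircle (1 : ℝ)) ∈ U → 0 < μ U) :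
    B x ≤ A x := by
  by_contra! hlt
  have h1 : ∀ᶠ t in nhdsWithin x (Set.Iio x), A x < B t :=
    (hBc.continuousAt.eventually (lt_mem_nhds hlt)).filter_mono nhdsWithin_le_nhds
  have h2 : ∀ᶠ t in nhdsWithin x (Set.Iio x), x - 1 < t :=
    (lt_mem_nhds (by linarith)).filter_mono nhdsWithin_le_nhds
  obtain ⟨x', ⟨h3, h4⟩, h5 : x' < x⟩ := ((h1.and h2).and self_mem_nhdsWithin).exists
  have h6 : ∀ᶠ t in nhdsWithin x (Set.Ioi x), A t < B x' :=
    (hAc.continuousAt.eventually (gt_mem_nhds h3)).filter_mono nhdsWithin_le_nhds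
  have h7 : ∀ᶠ t in nhdsWithin x (Set.Ioi x), t < x' + 1 :=
    (gt_mem_nhds (by linarith)).filter_mono nhdsWithin_le_nhds
  obtain ⟨y, ⟨h8, h9⟩, h10 : x < y⟩ := ((h6.and h7).and self_mem_nhdsWithin).exists
  have e1 := cdfLift_mono μ h8.le
  rw [hcA, hcB] at e1
  have e2 := cdfLift_sub μ (h5.trans h10).le h9.le
  have e3 : μ.real (arc x' y) = 0 :=
    le_antisymm (by linarith) measureReal_nonneg
  have e4 : μ (arc x' y) = 0 := (measureReal_eq_zero_iff).1 e3
  have hop : IsOpen ((fun t : ℝ => (t : AddCircle (1 : ℝ))) '' Set.Ioo x' y) :=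
    QuotientAddGroup.isOpenMap_coe _ isOpen_Ioo
  have h11 := hx _ hop ⟨x, ⟨h5, h10⟩, rfl⟩
  have h12 := measure_mono (μ := μ) (Set.image_mono (f := fun t : ℝ => (t : AddCircle (1 : ℝ)))
    (Set.Ioo_subset_Ico_self (a := x') (b := y)))
  change _ ≤ μ (arc x' y) at h12
  rw [e4] at h12
  exact absurd h11 (not_lt.2 h12)

end

end RotAux

/-- If two orientation-preserving circle homeomorphisms `f₀, g₀` (given by lifts
`F, G : ℝ → ℝ` which are increasing homeomorphisms of `ℝ` commuting with `x ↦ x + 1`)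
both preserve a Borel probability measure `μ₀` on `S¹ = ℝ/ℤ` and have equal rotation
numbers (their translation numbers differ by an integer), then `f₀ = g₀` on the
topological support of `μ₀` (the points all of whose open neighborhoods have positive
measure). -/
theorem eq_on_support_of_equal_rotation_number
    (F G : ℝ → ℝ) (hFm : Monotone F) (hGm : Monotone G)
    (hFsm : StrictMono F) (hGsm : StrictMono G)
    (hFs : Function.Surjective F) (hGs : Function.Surjective G)
    (hFT : ∀ x, F (x + 1) = F x + 1) (hGT : ∀ x, G (x + 1) = G x + 1)
    (f₀ g₀ : AddCircle (1 : ℝ) → AddCircle (1 : ℝ))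
    (hfF : ∀ x : ℝ, f₀ ↑x = ↑(F x)) (hgG : ∀ x : ℝ, g₀ ↑x = ↑(G x))
    (μ₀ : Measure (AddCircle (1 : ℝ))) [IsProbabilityMeasure μ₀]
    (hfμ : MeasurePreserving f₀ μ₀ μ₀) (hgμ : MeasurePreserving g₀ μ₀ μ₀)
    (hρ : ∃ k : ℤ,
      (⟨⟨F, hFm⟩, hFT⟩ : CircleDeg1Lift).translationNumber =
        (⟨⟨G, hGm⟩, hGT⟩ : CircleDeg1Lift).translationNumber + k) :
    ∀ p : AddCircle (1 : ℝ),
      (∀ U : Set (AddCircle (1 : ℝ)), IsOpen U → p ∈ U → 0 < μ₀ U) →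
      f₀ p = g₀ p := by
  obtain ⟨k, hk⟩ := hρ
  intro p hp
  induction p using QuotientAddGroup.induction_on with
  | H x =>
    have hF := RotAux.cdfLift_semiconj μ₀ ⟨⟨F, hFm⟩, hFT⟩ hFsm f₀ hfF hfμ
    have hG := RotAux.cdfLift_semiconj μ₀ ⟨⟨G, hGm⟩, hGT⟩ hGsm g₀ hgG hgμ
    have hG' : ∀ x, RotAux.cdfLift μ₀ (G x + k) = RotAux.cdfLift μ₀ x +
        (⟨⟨F, hFm⟩, hFT⟩ : CircleDeg1Lift).translationNumber := by
      intro x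
      have h := hG x
      change RotAux.cdfLift μ₀ (G x) = _ at h
      rw [RotAux.cdfLift_add_int, h, hk]
      ring
    have hFc : Continuous F := hFm.continuous_of_surjective hFs
    have hGc : Continuous G := hGm.continuous_of_surjective hGs
    have hGk : StrictMono fun x => G x + k := fun a b hab => by
      have := hGsm hab
      simpa using this
    have hGkc : Continuous fun x => G x + k := hGc.add continuous_const
    have l1 := RotAux.no_lt μ₀ F (fun x => G x + k) hFsm hFc hGkc _ hF hG' x hp
    have l2 := RotAux.no_lt μ₀ (fun x => G x + k) F hGk hGkc hFc _ hG' hF x hp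
    have e : F x = G x + k := le_antisymm l2 l1
    have h1 := hfF x
    rw [e, RotAux.coe_add_int, ← hgG x] at h1
    exact h1
end

section
/- Let f and g be commuting orientation-preserving C² diffeomorphisms of I = [0,1]. Then f maps every connected component of Fix(g) onto itself (and vice versa), and the frontier ∂Fix(f) = Fix(f) \ Int(Fix(f)) is contained in Fix(g) (and vice versa). In particular, if both Fix(f) and Fix(g) have empty interior, then Fix(f) = Fix(g). -/
/-- The fixed point set of a self-map of `I = [0,1]`, as a subset of `ℝ`. -/
def fixedIn (f : ℝ → ℝ) : Set ℝ := {x | x ∈ Set.Icc (0 : ℝ) 1 ∧ f x = x}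

namespace Kopell

open Set Filter Topology

/-- Extended diffeomorphisms: the data used in the argument. -/
structure Nice (f f' : ℝ → ℝ) : Prop where
  mono : StrictMono f
  cont : Continuous f
  zero : f 0 = 0
  one : f 1 = 1
  cont' : ContinuousOn f' (Icc 0 1)
  pos' : ∀ x ∈ Icc (0 : ℝ) 1, 0 < f' x
  mvt : ∀ u ∈ Icc (0 : ℝ) 1, ∀ v ∈ Icc (0 : ℝ) 1, u < v →
    ∃ c ∈ Ioo u v, f v - f u = f' c * (v - u)
  lip : ∃ L : ℝ, 0 ≤ L ∧ ∀ x ∈ Icc (0 : ℝ) 1, ∀ y ∈ Icc (0 : ℝ) 1,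
    f' x ≤ f' y * Real.exp (L * |x - y|)

lemma Nice.mapsTo {f f' : ℝ → ℝ} (h : Nice f f') {x : ℝ} (hx : x ∈ Icc (0 : ℝ) 1) :
    f x ∈ Icc (0 : ℝ) 1 := by
  constructor
  · rw [← h.zero]; exact h.mono.monotone hx.1
  · rw [← h.one]; exact h.mono.monotone hx.2

lemma Nice.iter_mapsTo {f f' : ℝ → ℝ} (h : Nice f f') {x : ℝ} (hx : x ∈ Icc (0 : ℝ) 1) (n : ℕ) :
    f^[n] x ∈ Icc (0 : ℝ) 1 := by
  induction n with
  | zero => simpa using hx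
  | succ k ih => rw [Function.iterate_succ_apply']; exact h.mapsTo ih

lemma Nice.refl {f f' : ℝ → ℝ} (h : Nice f f') :
    Nice (fun x => 1 - f (1 - x)) (fun x => f' (1 - x)) := by
  have hI : ∀ x ∈ Icc (0 : ℝ) 1, 1 - x ∈ Icc (0 : ℝ) 1 := fun x hx =>
    ⟨by linarith [hx.2], by linarith [hx.1]⟩
  refine ⟨?_, ?_, ?_, ?_, ?_, ?_, ?_, ?_⟩
  · intro x y hxy
    have := h.mono (show 1 - y < 1 - x by linarith)
    simp only; linarith
  · exact continuous_const.sub (h.cont.comp (continuous_const.sub continuous_id))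
  · simp [h.one]
  · simp [h.zero]
  · exact h.cont'.comp (by fun_prop) hI
  · exact fun x hx => h.pos' _ (hI x hx)
  · intro u hu v hv huv
    obtain ⟨c, hc, e⟩ := h.mvt (1 - v) (hI v hv) (1 - u) (hI u hu) (by linarith)
    refine ⟨1 - c, ⟨by linarith [hc.2], by linarith [hc.1]⟩, ?_⟩
    simp only [sub_sub_cancel]
    linarith
  · obtain ⟨L, hL, H⟩ := h.lip
    refine ⟨L, hL, fun x hx y hy => ?_⟩
    have := H (1 - x) (hI x hx) (1 - y) (hI y hy)
    rw [show (1 - x) - (1 - y) = -(x - y) by ring, abs_neg] at this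
    exact this

lemma expand_le {f : ℝ → ℝ} (hm : StrictMono f) (hc : Continuous f) {p q M : ℝ}
    (hp : f p = p) (hq : f q = q)
    (hM : ∀ k : ℕ, ∀ u ∈ Icc p q, ∀ v ∈ Icc p q, u < v →
      f^[k] v - f^[k] u ≤ M * (v - u)) :
    ∀ z ∈ Icc p q, f z ≤ z := by
  intro z hz
  by_contra! hlt
  have hcpt : IsCompact (Icc p z ∩ {y | f y = y}) :=
    isCompact_Icc.inter_right (isClosed_eq hc continuous_id)
  obtain ⟨c, ⟨⟨hpc, hcz⟩, hfc⟩, hcmax⟩ := hcpt.exists_isGreatest ⟨p, ⟨le_rfl, hz.1⟩, hp⟩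
  have hfc : f c = c := hfc
  have hcz' : c < z := lt_of_le_of_ne hcz (by rintro rfl; linarith)
  have hno : ∀ y, c < y → y ≤ z → f y ≠ y := fun y h1 h2 h3 =>
    absurd (hcmax ⟨⟨by linarith, h2⟩, h3⟩) (not_le.2 h1)
  have key : ∀ u, c < u → u ≤ z → z - c ≤ M * (u - c) := by
    intro u hcu huz
    have hfu : u ≤ f u := by
      by_contra! hlt2
      have : (0 : ℝ) ∈ (fun y => f y - y) '' Icc u z :=
        intermediate_value_Icc huz (by fun_prop) ⟨by linarith, by linarith⟩
      obtain ⟨y, hy, e⟩ := this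
      exact hno y (by linarith [hy.1]) hy.2 (by simp only at e; linarith)
    have hmon : Monotone (fun n => f^[n] u) := hm.monotone.monotone_iterate_of_le_map hfu
    have hbd : ∀ n, f^[n] u ≤ q := fun n => by
      have := (hm.monotone.iterate n) (show u ≤ q by linarith [hz.2])
      rwa [Function.iterate_fixed hq] at this
    have hlim := tendsto_atTop_ciSup hmon ⟨q, by rintro _ ⟨n, rfl⟩; exact hbd n⟩
    set e := ⨆ n, f^[n] u
    have hfe : f e = e := isFixedPt_of_tendsto_iterate hlim hc.continuousAt
    have hue : u ≤ e := hmon.ge_of_tendsto hlim 0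
    have hze : z < e := by
      by_contra! h
      exact hno e (by linarith) h hfe
    have : e - c ≤ M * (u - c) := by
      refine le_of_tendsto (hlim.sub_const c) (Eventually.of_forall fun n => ?_)
      have := hM n c ⟨hpc, by linarith [hz.2]⟩ u ⟨by linarith, by linarith [hz.2]⟩ hcu
      rwa [Function.iterate_fixed hfc] at this
    linarith
  have hlim : Tendsto (fun u => M * (u - c)) (𝓝[>] c) (𝓝 0) := by
    have : Continuous (fun u => M * (u - c)) := by fun_prop
    have h2 := this.tendsto c
    simp only [sub_self, mul_zero] at h2
    exact h2.mono_left nhdsWithin_le_nhds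
  have : z - c ≤ 0 := by
    refine ge_of_tendsto hlim ?_
    filter_upwards [Ioc_mem_nhdsGT hcz'] with u hu using key u hu.1 hu.2
  linarith

lemma expand_eq {f : ℝ → ℝ} (hm : StrictMono f) (hc : Continuous f) {p q M : ℝ}
    (hp : f p = p) (hq : f q = q)
    (hM : ∀ k : ℕ, ∀ u ∈ Icc p q, ∀ v ∈ Icc p q, u < v →
      f^[k] v - f^[k] u ≤ M * (v - u)) :
    ∀ z ∈ Icc p q, f z = z := by
  intro z hz
  refine le_antisymm (expand_le hm hc hp hq hM z hz) ?_
  have hit : ∀ (k : ℕ) y, (fun x => -f (-x))^[k] y = -(f^[k] (-y)) := by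
    intro k
    induction k with
    | zero => intro y; simp
    | succ k ih =>
      intro y
      rw [Function.iterate_succ_apply, ih, Function.iterate_succ_apply]
      simp
  have := expand_le (f := fun x => -f (-x)) (p := -q) (q := -p) (M := M)
    (fun x y h => neg_lt_neg (hm (neg_lt_neg h))) (by fun_prop) (by simp [hq]) (by simp [hp])
    (by
      intro k u hu v hv huv
      rw [hit, hit]
      have := hM k (-v) ⟨by linarith [hv.2], by linarith [hv.1]⟩ (-u)
        ⟨by linarith [hu.2], by linarith [hu.1]⟩ (by linarith)
      linarith) (-z) ⟨by linarith [hz.2], by linarith [hz.1]⟩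
  simp only [neg_neg] at this
  linarith

lemma distortion {g g' : ℝ → ℝ} (hg : Nice g g') {L : ℝ} (hL : 0 ≤ L)
    (H : ∀ x ∈ Icc (0 : ℝ) 1, ∀ y ∈ Icc (0 : ℝ) 1, g' x ≤ g' y * Real.exp (L * |x - y|))
    {x : ℝ} (hx : x ∈ Icc (0 : ℝ) 1) {s t s' t' : ℝ}
    (hs : g x ≤ s) (hst : s < t) (ht : t ≤ x) (hs' : g x ≤ s') (hst' : s' < t') (ht' : t' ≤ x)
    (n : ℕ) :
    (g^[n] t - g^[n] s) * (t' - s') ≤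
      Real.exp (L * (x - g^[n] x)) * ((g^[n] t' - g^[n] s') * (t - s)) := by
  induction n with
  | zero => simp [mul_comm]
  | succ n ih =>
    have hmn := hg.mono.iterate n
    have e1 : g^[n] (g x) = g (g^[n] x) := by
      rw [← Function.iterate_succ_apply, Function.iterate_succ_apply']
    have hI1 := hg.iter_mapsTo hx n
    have hI2 := hg.mapsTo hI1
    have b1 := hmn.monotone hs
    have b2 := hmn hst
    have b3 := hmn.monotone ht
    have b1' := hmn.monotone hs'
    have b2' := hmn hst'
    have b3' := hmn.monotone ht'
    rw [e1] at b1 b1'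
    simp only [Function.iterate_succ_apply']
    have hI1l := hI1.1
    have hI1r := hI1.2
    have hI2l := hI2.1
    have hI2r := hI2.2
    obtain ⟨c, ⟨hc1, hc2⟩, ec⟩ := hg.mvt (g^[n] s) ⟨by linarith, by linarith⟩ (g^[n] t)
      ⟨by linarith, by linarith⟩ b2
    obtain ⟨d, ⟨hd1, hd2⟩, ed⟩ := hg.mvt (g^[n] s') ⟨by linarith, by linarith⟩ (g^[n] t')
      ⟨by linarith, by linarith⟩ b2'
    rw [ec, ed]
    have hdI : d ∈ Icc (0 : ℝ) 1 := ⟨by linarith, by linarith⟩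
    have h1 : g' c ≤ g' d * Real.exp (L * (g^[n] x - g (g^[n] x))) := by
      refine (H c ⟨by linarith, by linarith⟩ d hdI).trans ?_
      have := hg.pos' d hdI
      gcongr
      rw [abs_le]; constructor <;> linarith
    have hd0 := hg.pos' d hdI
    calc g' c * (g^[n] t - g^[n] s) * (t' - s')
        = g' c * ((g^[n] t - g^[n] s) * (t' - s')) := by ring
      _ ≤ (g' d * Real.exp (L * (g^[n] x - g (g^[n] x)))) *
          (Real.exp (L * (x - g^[n] x)) * ((g^[n] t' - g^[n] s') * (t - s))) := by
          refine mul_le_mul h1 ih ?_ (by positivity)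
          exact mul_nonneg (by linarith) (by linarith)
      _ = (Real.exp (L * (g^[n] x - g (g^[n] x))) * Real.exp (L * (x - g^[n] x))) *
          (g' d * (g^[n] t' - g^[n] s') * (t - s)) := by ring
      _ = _ := by rw [← Real.exp_add]; congr 2; ring

lemma core_s4 {f f' g g' : ℝ → ℝ} (hf : Nice f f') (hg : Nice g g') (hcomm : Function.Commute f g)
    {x : ℝ} (hx : x ∈ Icc (0 : ℝ) 1) (hfx : f x = x) (hgx : g x < x) :
    ∀ z ∈ Icc (g x) x, f z = z := by
  obtain ⟨L, hL, H⟩ := hg.lip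
  have hfix : ∀ n, f (g^[n] x) = g^[n] x := fun n => by
    rw [(hcomm.iterate_right n).eq x, hfx]
  have hanti : StrictAnti (fun n => g^[n] x) := by
    refine strictAnti_nat_of_succ_lt fun n => ?_
    rw [Function.iterate_succ_apply]
    exact hg.mono.iterate n hgx
  have hIn := hg.iter_mapsTo hx
  have hlim := tendsto_atTop_ciInf hanti.antitone ⟨0, by rintro _ ⟨n, rfl⟩; exact (hIn n).1⟩
  set a := ⨅ n, g^[n] x
  have hle : ∀ n, a ≤ g^[n] x := hanti.antitone.le_of_tendsto hlim
  have haI : a ∈ Icc (0 : ℝ) 1 := isClosed_Icc.mem_of_tendsto hlim (Eventually.of_forall hIn)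
  -- the derivative of f at a is one
  have hfa : f' a = 1 := by
    choose ξ hξ hξe using fun n => hf.mvt _ (hIn (n + 1)) _ (hIn n) (hanti (Nat.lt_succ_self n))
    have h1 : ∀ n, f' (ξ n) = 1 := fun n => by
      have e := hξe n
      rw [hfix, hfix] at e
      have : 0 < g^[n] x - g^[n + 1] x := sub_pos.2 (hanti (Nat.lt_succ_self n))
      have e2 : (f' (ξ n) - 1) * (g^[n] x - g^[n + 1] x) = 0 := by linarith
      rcases mul_eq_zero.1 e2 with h | h <;> linarith
    have hξl : Tendsto ξ atTop (𝓝 a) :=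
      tendsto_of_tendsto_of_tendsto_of_le_of_le (hlim.comp (tendsto_add_atTop_nat 1)) hlim
        (fun n => (hξ n).1.le) (fun n => (hξ n).2.le)
    have hξI : ∀ n, ξ n ∈ Icc (0 : ℝ) 1 := fun n =>
      ⟨(hIn (n + 1)).1.trans (hξ n).1.le, (hξ n).2.le.trans (hIn n).2⟩
    have h2 := (hf.cont' a haI).tendsto.comp
      (tendsto_nhdsWithin_iff.2 ⟨hξl, Eventually.of_forall hξI⟩)
    refine tendsto_nhds_unique h2 ?_
    simp [Function.comp_def, h1]
  have hffa : f a = a := by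
    have h1 := (hf.cont.tendsto a).comp hlim
    refine tendsto_nhds_unique h1 ?_
    simpa [Function.comp_def, hfix] using hlim
  refine expand_eq hf.mono hf.cont (M := Real.exp L * Real.exp 1) (hfix 1) hfx ?_
  intro k u hu v hv huv
  -- pick n so that the derivative of f is close to one
  have hk : (1 : ℝ) < Real.exp (1 / (k + 1)) := Real.one_lt_exp_iff.2 (by positivity)
  obtain ⟨n, hn⟩ : ∃ n, ∀ y ∈ Icc a (g^[n] x), f' y ≤ Real.exp (1 / (k + 1)) := by
    have h1 : ∀ᶠ y in 𝓝[Icc 0 1] a, f' y < Real.exp (1 / (k + 1)) :=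
      (hf.cont' a haI).eventually_lt_const (by rw [hfa]; exact hk)
    rw [eventually_nhdsWithin_iff, Metric.eventually_nhds_iff] at h1
    obtain ⟨ε, hε, h1⟩ := h1
    obtain ⟨n, hn⟩ := (hlim.eventually_lt_const (show a < a + ε by linarith)).exists
    refine ⟨n, fun y hy => (h1 ?_ ⟨haI.1.trans hy.1, hy.2.trans (hIn n).2⟩).le⟩
    rw [Real.dist_eq, abs_lt]
    constructor <;> linarith [hy.1, hy.2]
  have hit : ∀ (j : ℕ) (U V : ℝ), a ≤ U → U < V → V ≤ g^[n] x →
      f^[j] V - f^[j] U ≤ Real.exp (1 / (k + 1)) ^ j * (V - U) := by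
    intro j
    induction j with
    | zero => intro U V _ _ _; simp
    | succ j ih =>
      intro U V h1 h2 h3
      have hn1 := (hIn n).2
      have ha0 := haI.1
      obtain ⟨c, ⟨hc1, hc2⟩, ec⟩ := hf.mvt U ⟨by linarith, by linarith⟩ V
        ⟨by linarith, by linarith⟩ h2
      have h4 := ih (f U) (f V) (by rw [← hffa]; exact hf.mono.monotone h1) (hf.mono h2)
        (by rw [← hfix]; exact hf.mono.monotone h3)
      rw [Function.iterate_succ_apply, Function.iterate_succ_apply]
      refine h4.trans ?_
      rw [ec, pow_succ, mul_assoc]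
      have := hn c ⟨by linarith, by linarith⟩
      have hVU : 0 ≤ V - U := by linarith
      gcongr
  have hfk := hf.mono.iterate k
  have k1 : f^[k] (g x) = g x := Function.iterate_fixed (hfix 1) k
  have k2 : f^[k] x = x := Function.iterate_fixed hfx k
  have hD := distortion hg hL H hx hu.1 huv hv.2
    (by rw [← k1]; exact hfk.monotone hu.1) (hfk huv) (by
      have := hfk.monotone hv.2
      rwa [k2] at this) n
  have hcc : ∀ y, g^[n] (f^[k] y) = f^[k] (g^[n] y) := fun y =>
    ((hcomm.iterate_iterate k n).eq y).symm
  rw [hcc, hcc] at hD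
  have hgn := hg.mono.iterate n
  have hUV := hgn huv
  have hI := hit k (g^[n] u) (g^[n] v)
    ((hle (n + 1)).trans (by rw [Function.iterate_succ_apply]; exact hgn.monotone hu.1)) hUV
    (hgn.monotone hv.2)
  have hexp : Real.exp (1 / (k + 1)) ^ k ≤ Real.exp 1 := by
    rw [← Real.exp_nat_mul]
    apply Real.exp_le_exp.2
    rw [mul_one_div, div_le_one (by positivity)]
    linarith
  have hLe : Real.exp (L * (x - g^[n] x)) ≤ Real.exp L := by
    apply Real.exp_le_exp.2
    have : x - g^[n] x ≤ 1 := by linarith [hx.2, (hIn n).1]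
    nlinarith
  have hUV' : 0 < g^[n] v - g^[n] u := sub_pos.2 hUV
  have hvu : 0 < v - u := sub_pos.2 huv
  have hfUV : 0 < f^[k] (g^[n] v) - f^[k] (g^[n] u) := sub_pos.2 (hfk hUV)
  refine le_of_mul_le_mul_left ?_ hUV'
  calc _ ≤ _ := hD
    _ ≤ Real.exp L * ((Real.exp 1 * (g^[n] v - g^[n] u)) * (v - u)) := by
      gcongr
      exact hI.trans (by gcongr)
    _ = _ := by ring

lemma nhds_of_lt {f f' g g' : ℝ → ℝ} (hf : Nice f f') (hg : Nice g g')
    (hcomm : Function.Commute f g)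
    {x : ℝ} (hx : x ∈ Icc (0 : ℝ) 1) (hfx : f x = x) (hgx : g x < x) :
    ∀ᶠ z in 𝓝 x, z ∈ Icc (0 : ℝ) 1 ∧ f z = z := by
  obtain ⟨y, hy, hyx⟩ : x ∈ g '' Icc 0 1 :=
    intermediate_value_Icc zero_le_one hg.cont.continuousOn (by rw [hg.zero, hg.one]; exact hx)
  have hxy : x < y := by
    by_contra! h
    have := hg.mono.monotone h
    linarith
  have hfy : f y = y := by
    apply hg.mono.injective
    rw [← hcomm.eq, hyx, hfx]
  have c1 := core_s4 hf hg hcomm hx hfx hgx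
  have c2 := core_s4 hf hg hcomm hy hfy (by linarith)
  have hg0 := (hg.mapsTo hx).1
  filter_upwards [Icc_mem_nhds hgx hxy] with z hz
  refine ⟨⟨hg0.trans hz.1, hz.2.trans hy.2⟩, ?_⟩
  rcases le_total z x with h | h
  · exact c1 z ⟨hz.1, h⟩
  · exact c2 z ⟨by rw [hyx]; exact h, hz.2⟩

lemma nhds_of_ne {f f' g g' : ℝ → ℝ} (hf : Nice f f') (hg : Nice g g')
    (hcomm : Function.Commute f g)
    {x : ℝ} (hx : x ∈ Icc (0 : ℝ) 1) (hfx : f x = x) (hgx : g x ≠ x) :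
    ∀ᶠ z in 𝓝 x, z ∈ Icc (0 : ℝ) 1 ∧ f z = z := by
  rcases lt_or_gt_of_ne hgx with h | h
  · exact nhds_of_lt hf hg hcomm hx hfx h
  · have h1 := nhds_of_lt hf.refl hg.refl
      (fun y => by simp only [sub_sub_cancel]; rw [hcomm.eq]) (x := 1 - x)
      ⟨by linarith [hx.2], by linarith [hx.1]⟩ (by simp [hfx]) (by simp only [sub_sub_cancel]; linarith)
    have h2 : Tendsto (fun y : ℝ => 1 - y) (𝓝 x) (𝓝 (1 - x)) :=
      (continuous_const.sub continuous_id).tendsto x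
    filter_upwards [h2.eventually h1] with z hz
    obtain ⟨⟨h3, h4⟩, h5⟩ := hz
    simp only [sub_sub_cancel] at h5
    exact ⟨⟨by linarith, by linarith⟩, by linarith⟩

/-- Extension by the identity. -/
noncomputable def ext (f : ℝ → ℝ) (x : ℝ) : ℝ :=
  x + (f (max 0 (min 1 x)) - max 0 (min 1 x))

lemma ext_of_mem {f : ℝ → ℝ} {x : ℝ} (hx : x ∈ Icc (0 : ℝ) 1) : ext f x = f x := by
  simp [ext, min_eq_right hx.2, max_eq_right hx.1]

lemma ext_of_not_mem {f : ℝ → ℝ} (h0 : f 0 = 0) (h1 : f 1 = 1) {x : ℝ}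
    (hx : x ∉ Icc (0 : ℝ) 1) : ext f x = x := by
  rcases lt_or_ge x 0 with h | h
  · simp [ext, min_eq_right (by linarith : x ≤ 1), max_eq_left h.le, h0]
  · have : 1 < x := by
      by_contra! h'
      exact hx ⟨h, h'⟩
    simp [ext, min_eq_left this.le, h1]

lemma nice_ext {f : ℝ → ℝ} (hbij : BijOn f (Icc 0 1) (Icc 0 1))
    (h0 : f 0 = 0) (h1 : f 1 = 1) (h2 : ContDiffOn ℝ 2 f (Icc 0 1))
    (h' : ∀ x ∈ Icc (0 : ℝ) 1, 0 < derivWithin f (Icc 0 1) x) :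
    Nice (ext f) (derivWithin f (Icc 0 1)) := by
  have hud : UniqueDiffOn ℝ (Icc (0 : ℝ) 1) := uniqueDiffOn_Icc zero_lt_one
  have hd : ContDiffOn ℝ 1 (derivWithin f (Icc 0 1)) (Icc 0 1) :=
    h2.derivWithin hud (by norm_num)
  have hmvt : ∀ u ∈ Icc (0 : ℝ) 1, ∀ v ∈ Icc (0 : ℝ) 1, u < v →
      ∃ c ∈ Ioo u v, f v - f u = derivWithin f (Icc 0 1) c * (v - u) := by
    intro u hu v hv huv
    obtain ⟨c, hc, e⟩ := exists_hasDerivAt_eq_slope f (derivWithin f (Icc 0 1)) huv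
      (h2.continuousOn.mono (Icc_subset_Icc hu.1 hv.2)) (fun y hy => by
        have hyn : Icc (0 : ℝ) 1 ∈ 𝓝 y :=
          Icc_mem_nhds (lt_of_le_of_lt hu.1 hy.1) (lt_of_lt_of_le hy.2 hv.2)
        exact ((h2.differentiableOn (by norm_num)) y
          (mem_of_mem_nhds hyn)).hasDerivWithinAt.hasDerivAt hyn)
    refine ⟨c, hc, ?_⟩
    rw [e, div_mul_cancel₀]
    linarith
  have hmonI : ∀ u ∈ Icc (0 : ℝ) 1, ∀ v ∈ Icc (0 : ℝ) 1, u < v → f u < f v := by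
    intro u hu v hv huv
    obtain ⟨c, hc, e⟩ := hmvt u hu v hv huv
    have := h' c ⟨hu.1.trans hc.1.le, hc.2.le.trans hv.2⟩
    nlinarith [mul_pos this (sub_pos.2 huv)]
  refine ⟨?_, ?_, ?_, ?_, hd.continuousOn, h', ?_, ?_⟩
  · intro u v huv
    by_cases hu : u ∈ Icc (0 : ℝ) 1
    · by_cases hv : v ∈ Icc (0 : ℝ) 1
      · rw [ext_of_mem hu, ext_of_mem hv]; exact hmonI u hu v hv huv
      · rw [ext_of_mem hu, ext_of_not_mem h0 h1 hv]
        have := (hbij.mapsTo hu).2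
        have : 1 < v := by
          by_contra! h
          exact hv ⟨by linarith [hu.1], h⟩
        linarith
    · by_cases hv : v ∈ Icc (0 : ℝ) 1
      · rw [ext_of_mem hv, ext_of_not_mem h0 h1 hu]
        have := (hbij.mapsTo hv).1
        have : u < 0 := by
          by_contra! h
          exact hu ⟨h, by linarith [hv.2]⟩
        linarith
      · rwa [ext_of_not_mem h0 h1 hu, ext_of_not_mem h0 h1 hv]
  · have hp : Continuous (fun x : ℝ => max 0 (min 1 x)) := by fun_prop
    have hq : Continuous (fun x : ℝ => f (max 0 (min 1 x))) :=
      h2.continuousOn.comp_continuous hp (fun x => ⟨le_max_left _ _, by simp⟩)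
    exact continuous_id.add (hq.sub hp)
  · rw [ext_of_mem (by simp), h0]
  · rw [ext_of_mem (by simp), h1]
  · intro u hu v hv huv
    rw [ext_of_mem hu, ext_of_mem hv]
    exact hmvt u hu v hv huv
  · obtain ⟨K, hK⟩ := hd.exists_lipschitzOnWith one_ne_zero (convex_Icc 0 1) isCompact_Icc
    obtain ⟨w, hw, hmin⟩ := isCompact_Icc.exists_isMinOn (nonempty_Icc.2 zero_le_one)
      hd.continuousOn
    set d := derivWithin f (Icc 0 1)
    have hw0 : 0 < d w := h' w hw
    refine ⟨K / d w, by positivity, fun x hx y hy => ?_⟩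
    have h3 : d x - d y ≤ K * |x - y| := by
      have := hK.dist_le_mul x hx y hy
      rw [Real.dist_eq, Real.dist_eq] at this
      exact (le_abs_self _).trans this
    have h4 : d w ≤ d y := hmin hy
    have h5 := Real.add_one_le_exp (K / d w * |x - y|)
    have h6 : K * |x - y| ≤ d y * (K / d w * |x - y|) := by
      have : K * |x - y| = d w * (K / d w * |x - y|) := by field_simp
      rw [this]
      gcongr
    have h7 : 0 < d y := h' y hy
    nlinarith [mul_le_mul_of_nonneg_left h5 h7.le]

lemma comm_ext {f g : ℝ → ℝ} (hf : MapsTo f (Icc 0 1) (Icc 0 1))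
    (hg : MapsTo g (Icc 0 1) (Icc 0 1))
    (hf0 : f 0 = 0) (hf1 : f 1 = 1) (hg0 : g 0 = 0) (hg1 : g 1 = 1)
    (h : ∀ x ∈ Icc (0 : ℝ) 1, f (g x) = g (f x)) : Function.Commute (ext f) (ext g) := by
  intro x
  by_cases hx : x ∈ Icc (0 : ℝ) 1
  · rw [ext_of_mem hx, ext_of_mem hx, ext_of_mem (hf hx), ext_of_mem (hg hx), h x hx]
  · simp only [ext_of_not_mem hf0 hf1 hx, ext_of_not_mem hg0 hg1 hx]

lemma frontier_sub {f g f' g' : ℝ → ℝ} (hf : Nice (ext f) f') (hg : Nice (ext g) g')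
    (hcomm : Function.Commute (ext f) (ext g)) :
    fixedIn f \ interior (fixedIn f) ⊆ fixedIn g := by
  rintro x ⟨⟨hx, hfx⟩, hint⟩
  refine ⟨hx, ?_⟩
  by_contra hgx
  apply hint
  rw [mem_interior_iff_mem_nhds]
  filter_upwards [nhds_of_ne hf hg hcomm hx (by rwa [ext_of_mem hx])
    (by rwa [ext_of_mem hx])] with z hz
  exact ⟨hz.1, by rw [← ext_of_mem (f := f) hz.1]; exact hz.2⟩

lemma component {f g f' g' : ℝ → ℝ} (hf : Nice (ext f) f') (hg : Nice (ext g) g')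
    (hcomm : Function.Commute (ext f) (ext g)) :
    ∀ x ∈ fixedIn g, f '' connectedComponentIn (fixedIn g) x =
      connectedComponentIn (fixedIn g) x := by
  intro x hx
  have hfr := frontier_sub hg hf hcomm.symm
  set C := connectedComponentIn (fixedIn g) x with hC
  have hxC : x ∈ C := mem_connectedComponentIn hx
  have hCs : C ⊆ fixedIn g := connectedComponentIn_subset _ _
  have hCI : C ⊆ Icc 0 1 := fun y hy => (hCs hy).1
  have hcl : IsClosed (fixedIn g) := by
    have : fixedIn g = Icc 0 1 ∩ {y | ext g y = y} := by
      ext y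
      constructor
      · rintro ⟨h1, h2⟩; exact ⟨h1, by rw [mem_ofPred_eq, ext_of_mem h1, h2]⟩
      · rintro ⟨h1, h2⟩; exact ⟨h1, by rwa [mem_ofPred_eq, ext_of_mem h1] at h2⟩
    rw [this]
    exact isClosed_Icc.inter (isClosed_eq hg.cont continuous_id)
  have hpre : IsPreconnected C := isPreconnected_connectedComponentIn
  have hCcl : IsClosed C := by
    have h1 : closure C ⊆ C := hpre.closure.subset_connectedComponentIn (subset_closure hxC)
      (closure_minimal hCs hcl)
    exact isClosed_of_closure_subset h1
  have hCc : IsCompact C := isCompact_Icc.of_isClosed_subset hCcl hCI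
  obtain ⟨p, hpC, hpm⟩ := hCc.exists_isLeast ⟨x, hxC⟩
  obtain ⟨q, hqC, hqm⟩ := hCc.exists_isGreatest ⟨x, hxC⟩
  have hCe : C = Icc p q := Subset.antisymm (fun y hy => ⟨hpm hy, hqm hy⟩)
    (hpre.ordConnected.out hpC hqC)
  have hpq : p ≤ q := hpm hqC
  have hxp : p ≤ x := hpm hxC
  have hxq : x ≤ q := hqm hxC
  have hp : f p = p := by
    refine (hfr ⟨hCs hpC, fun hint => ?_⟩).2
    obtain ⟨ε, hε, hb⟩ := Metric.mem_nhds_iff.1 (mem_interior_iff_mem_nhds.1 hint)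
    have hsub : Icc (p - ε / 2) q ⊆ fixedIn g := by
      intro y hy
      rcases le_total y p with h | h
      · apply hb
        rw [Metric.mem_ball, Real.dist_eq, abs_lt]
        constructor <;> linarith [hy.1]
      · exact hCs (hCe ▸ ⟨h, hy.2⟩)
    have h1 : p - ε / 2 ∈ C := isPreconnected_Icc.subset_connectedComponentIn
      (⟨by linarith, hxq⟩ : x ∈ Icc (p - ε / 2) q) hsub ⟨le_rfl, by linarith⟩
    linarith [hpm h1]
  have hq : f q = q := by
    refine (hfr ⟨hCs hqC, fun hint => ?_⟩).2
    obtain ⟨ε, hε, hb⟩ := Metric.mem_nhds_iff.1 (mem_interior_iff_mem_nhds.1 hint)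
    have hsub : Icc p (q + ε / 2) ⊆ fixedIn g := by
      intro y hy
      rcases le_total q y with h | h
      · apply hb
        rw [Metric.mem_ball, Real.dist_eq, abs_lt]
        constructor <;> linarith [hy.2]
      · exact hCs (hCe ▸ ⟨hy.1, h⟩)
    have h1 : q + ε / 2 ∈ C := isPreconnected_Icc.subset_connectedComponentIn
      (⟨hxp, by linarith⟩ : x ∈ Icc p (q + ε / 2)) hsub ⟨by linarith, le_rfl⟩
    linarith [hqm h1]
  have himg : f '' C = ext f '' C := image_congr fun y hy => (ext_of_mem (hCI hy)).symm
  have hp2 : ext f p = p := by rw [ext_of_mem (hCI hpC), hp]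
  have hq2 : ext f q = q := by rw [ext_of_mem (hCI hqC), hq]
  rw [himg, hCe]
  apply Subset.antisymm
  · rintro _ ⟨y, hy, rfl⟩
    exact ⟨by rw [← hp2]; exact hf.mono.monotone hy.1, by
      have := hf.mono.monotone hy.2
      rwa [hq2] at this⟩
  · have := intermediate_value_Icc hpq hf.cont.continuousOn
    rwa [hp2, hq2] at this

end Kopell

/-- **Commuting diffeomorphisms on `I`.** If `f` and `g` are commuting
orientation-preserving C² diffeomorphisms of `I = [0,1]`, then `f` maps every connected
component of `Fix(g)` onto itself and vice versa, the frontier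
`∂Fix(f) = Fix(f) \ Int(Fix(f))` is contained in `Fix(g)` and vice versa; in particular
if both fixed point sets have empty interior then they are equal. -/
theorem commuting_diffeos_interval (f g : ℝ → ℝ)
    (hfbij : Set.BijOn f (Set.Icc 0 1) (Set.Icc 0 1))
    (hgbij : Set.BijOn g (Set.Icc 0 1) (Set.Icc 0 1))
    (hf0 : f 0 = 0) (hf1 : f 1 = 1) (hg0 : g 0 = 0) (hg1 : g 1 = 1)
    (hf2 : ContDiffOn ℝ 2 f (Set.Icc 0 1))
    (hg2 : ContDiffOn ℝ 2 g (Set.Icc 0 1))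
    (hf' : ∀ x ∈ Set.Icc (0 : ℝ) 1, 0 < derivWithin f (Set.Icc 0 1) x)
    (hg' : ∀ x ∈ Set.Icc (0 : ℝ) 1, 0 < derivWithin g (Set.Icc 0 1) x)
    (hcomm : ∀ x ∈ Set.Icc (0 : ℝ) 1, f (g x) = g (f x)) :
    (∀ x ∈ fixedIn g, f '' connectedComponentIn (fixedIn g) x =
      connectedComponentIn (fixedIn g) x) ∧
    (∀ x ∈ fixedIn f, g '' connectedComponentIn (fixedIn f) x =
      connectedComponentIn (fixedIn f) x) ∧
    (fixedIn f \ interior (fixedIn f) ⊆ fixedIn g) ∧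
    (fixedIn g \ interior (fixedIn g) ⊆ fixedIn f) ∧
    (interior (fixedIn f) = ∅ → interior (fixedIn g) = ∅ → fixedIn f = fixedIn g) := by
  have hf := Kopell.nice_ext hfbij hf0 hf1 hf2 hf'
  have hg := Kopell.nice_ext hgbij hg0 hg1 hg2 hg'
  have hc := Kopell.comm_ext hfbij.mapsTo hgbij.mapsTo hf0 hf1 hg0 hg1 hcomm
  have h1 := Kopell.frontier_sub hf hg hc
  have h2 := Kopell.frontier_sub hg hf hc.symm
  refine ⟨Kopell.component hf hg hc, Kopell.component hg hf hc.symm, h1, h2, fun e1 e2 => ?_⟩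
  rw [e1, Set.sdiff_empty] at h1
  rw [e2, Set.sdiff_empty] at h2
  exact Set.Subset.antisymm h1 h2
end

section
/- Abelian criterion for the interval: Let g₁, g₂, …, g_k be orientation-preserving C² diffeomorphisms of I = [0,1], each of which is fully supported, i.e., Fix(g_i) has empty interior. Suppose the commutativity graph of {g₁, …, g_k} is connected: the graph with vertex set {1,…,k} and an edge between i and j whenever g_i ∘ g_j = g_j ∘ g_i is connected. Then the subgroup of Diff²₊(I) generated by g₁, …, g_k is abelian. -/
/-- A permutation of `ℝ` representing an orientation-preserving C² diffeomorphism of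
`I = [0,1]`: it is the identity off `[0,1]`, is C² on `[0,1]`, and has positive
(one-sided, at the endpoints) derivative on `[0,1]`. -/
def IsDiffI (f : Equiv.Perm ℝ) : Prop :=
  (∀ x, x ∉ Set.Icc (0 : ℝ) 1 → f x = x) ∧
  ContDiffOn ℝ 2 f (Set.Icc 0 1) ∧
  ∀ x ∈ Set.Icc (0 : ℝ) 1, 0 < derivWithin f (Set.Icc 0 1) x

open Set Filter Topology

/-- Bounded distortion of secants. -/
def SecDist (f : ℝ → ℝ) (L : ℝ) : Prop :=
  ∀ u v x y x' y' : ℝ, 0 ≤ u → v ≤ 1 → u ≤ x → x < y → y ≤ v → u ≤ x' → x' < y' → y' ≤ v →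
    (f y - f x) * (y' - x') ≤ Real.exp (L * (v - u)) * ((f y' - f x') * (y - x))

/-- Secant slopes converge at `e`. -/
def SecLim (g : ℝ → ℝ) (e : ℝ) : Prop :=
  ∃ μ : ℝ, ∀ s t : ℕ → ℝ, (∀ n, s n ∈ Icc (0 : ℝ) 1) → (∀ n, t n ∈ Icc (0 : ℝ) 1) →
    (∀ n, s n ≠ t n) → Tendsto s atTop (𝓝 e) → Tendsto t atTop (𝓝 e) →
    Tendsto (fun n => (g (s n) - g (t n)) / (s n - t n)) atTop (𝓝 μ)

theorem secDist_iter {f : ℝ → ℝ} {L : ℝ} (hf : SecDist f L) (hm : StrictMono f)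
    (hI : MapsTo f (Icc 0 1) (Icc 0 1)) {u v x y x' y' : ℝ} (hu : u ∈ Icc (0 : ℝ) 1)
    (hv : v ∈ Icc (0 : ℝ) 1) (h1 : u ≤ x) (h2 : x < y) (h3 : y ≤ v) (h4 : u ≤ x')
    (h5 : x' < y') (h6 : y' ≤ v) (n : ℕ) :
    (f^[n] y - f^[n] x) * (y' - x') ≤
      Real.exp (L * ∑ i ∈ Finset.range n, (f^[i] v - f^[i] u)) *
        ((f^[n] y' - f^[n] x') * (y - x)) := by
  induction n with
  | zero => simp; nlinarith
  | succ n ih =>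
    have hmn : StrictMono (f^[n]) := hm.iterate n
    have hun : f^[n] u ∈ Icc (0 : ℝ) 1 := hI.iterate n hu
    have hvn : f^[n] v ∈ Icc (0 : ℝ) 1 := hI.iterate n hv
    have key := hf (f^[n] u) (f^[n] v) (f^[n] x) (f^[n] y) (f^[n] x') (f^[n] y') hun.1 hvn.2
      (hmn.monotone h1) (hmn h2) (hmn.monotone h3) (hmn.monotone h4) (hmn h5) (hmn.monotone h6)
    rw [Finset.sum_range_succ, mul_add, Real.exp_add]
    simp only [Function.iterate_succ_apply']
    have hA : 0 < f^[n] y - f^[n] x := sub_pos.2 (hmn h2)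
    have hB : 0 < f^[n] y' - f^[n] x' := sub_pos.2 (hmn h5)
    have hA1 : 0 < f (f^[n] y) - f (f^[n] x) := sub_pos.2 (hm (hmn h2))
    have hB1 : 0 < f (f^[n] y') - f (f^[n] x') := sub_pos.2 (hm (hmn h5))
    generalize Real.exp (L * ∑ i ∈ Finset.range n, (f^[i] v - f^[i] u)) = S at *
    have hE : 0 < Real.exp (L * (f^[n] v - f^[n] u)) := Real.exp_pos _
    generalize Real.exp (L * (f^[n] v - f^[n] u)) = E at *
    generalize f (f^[n] y) - f (f^[n] x) = A1 at *
    generalize f (f^[n] y') - f (f^[n] x') = B1 at *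
    generalize f^[n] y - f^[n] x = A at *
    generalize f^[n] y' - f^[n] x' = B at *
    have hp : 0 < y' - x' := sub_pos.2 h5
    have := mul_le_mul key ih (by positivity) (by positivity)
    have h' : (A * B) * (A1 * (y' - x')) ≤ (A * B) * (S * E * (B1 * (y - x))) := by
      linarith [this, show (A1 * B) * (A * (y' - x')) = (A * B) * (A1 * (y' - x')) by ring,
        show (E * (B1 * A)) * (S * (B * (y - x))) = (A * B) * (S * E * (B1 * (y - x))) by ring]
    exact le_of_mul_le_mul_left h' (by positivity)

theorem affine_coord {f : ℝ → ℝ} {L : ℝ} (hL : 0 ≤ L) (hf : SecDist f L) (hm : StrictMono f)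
    (hI : MapsTo f (Icc 0 1) (Icc 0 1)) {D : Set ℝ} (hD : D ⊆ Icc 0 1)
    (hsum : ∀ u ∈ D, ∀ v ∈ D, u < v → ∃ C : ℝ, ∀ n : ℕ,
      ∑ i ∈ Finset.range n, (f^[i] v - f^[i] u) ≤ C)
    {e : ℝ} (hlim : ∀ x ∈ D, Tendsto (fun n => f^[n] x) atTop (𝓝 e))
    {x0 x1 : ℝ} (h0 : x0 ∈ D) (h1 : x1 ∈ D) (h01 : x0 < x1) :
    ∃ W : ℝ → ℝ, InjOn W D ∧ ∀ g : ℝ → ℝ, SecLim g e → MapsTo g D D → 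
      (∀ x, g (f x) = f (g x)) → ∃ μ d : ℝ, ∀ x ∈ D, W (g x) = μ * W x + d := by
  set R : ℕ → ℝ → ℝ := fun n x => (f^[n] x - f^[n] x0) / (f^[n] x1 - f^[n] x0) with hR
  have hden : ∀ n, 0 < f^[n] x1 - f^[n] x0 := fun n => sub_pos.2 (hm.iterate n h01)
  have hbd : ∀ x ∈ D, ∀ y ∈ D, x < y → ∃ c C : ℝ, 0 < c ∧ ∀ n, c ≤ R n y - R n x ∧
      R n y - R n x ≤ C := by
    intro x hx y hy hxy
    have hu : min x x0 ∈ D := by rcases min_choice x x0 with h | h <;> rw [h] <;> assumption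
    have hv : max y x1 ∈ D := by rcases max_choice y x1 with h | h <;> rw [h] <;> assumption
    obtain ⟨C, hC⟩ := hsum _ hu _ hv (by
      exact lt_of_le_of_lt (min_le_left _ _) (lt_of_lt_of_le hxy (le_max_left _ _)))
    have hE : 0 < Real.exp (L * C) := Real.exp_pos _
    have hp : 0 < y - x := sub_pos.2 hxy
    have hq : 0 < x1 - x0 := sub_pos.2 h01
    refine ⟨(y - x) / (Real.exp (L * C) * (x1 - x0)), Real.exp (L * C) * (y - x) / (x1 - x0),
      by positivity, fun n => ?_⟩
    have hSE : Real.exp (L * ∑ i ∈ Finset.range n, (f^[i] (max y x1) - f^[i] (min x x0))) ≤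
        Real.exp (L * C) := Real.exp_le_exp.2 (mul_le_mul_of_nonneg_left (hC n) hL)
    have k1 := secDist_iter hf hm hI (hD hu) (hD hv) (min_le_left _ _) hxy (le_max_left _ _)
      (min_le_right _ _) h01 (le_max_right _ _) n
    have k2 := secDist_iter hf hm hI (hD hu) (hD hv) (min_le_right _ _) h01 (le_max_right _ _)
      (min_le_left _ _) hxy (le_max_left _ _) n
    have hA : 0 < f^[n] y - f^[n] x := sub_pos.2 (hm.iterate n hxy)
    have hB := hden n
    have e1 : R n y - R n x = (f^[n] y - f^[n] x) / (f^[n] x1 - f^[n] x0) := by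
      simp only [hR]; rw [← sub_div]; congr 1; ring
    rw [e1]
    have k1' := k1.trans (mul_le_mul_of_nonneg_right hSE (by positivity))
    have k2' := k2.trans (mul_le_mul_of_nonneg_right hSE (by positivity))
    constructor
    · rw [div_le_div_iff₀ (by positivity) hB]; linarith
    · rw [div_le_div_iff₀ hB hq]; linarith
  have hR0 : ∀ n, R n x0 = 0 := fun n => by simp [hR]
  have hbd' : ∀ x ∈ D, ∃ p q : ℝ, ∀ n, R n x ∈ Icc p q := by
    intro x hx
    rcases lt_trichotomy x x0 with h | h | h
    · obtain ⟨c, C, hc, hC⟩ := hbd x hx x0 h0 h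
      exact ⟨-C, -c, fun n => ⟨by linarith [(hC n).2, hR0 n], by linarith [(hC n).1, hR0 n]⟩⟩
    · exact ⟨0, 0, fun n => by rw [h, hR0]; simp⟩
    · obtain ⟨c, C, hc, hC⟩ := hbd x0 h0 x hx h
      exact ⟨c, C, fun n => ⟨by linarith [(hC n).1, hR0 n], by linarith [(hC n).2, hR0 n]⟩⟩
  let U : Ultrafilter ℕ := hyperfilter ℕ
  have hU : (U : Filter ℕ) ≤ atTop := by
    rw [← Nat.cofinite_eq_atTop]; exact hyperfilter_le_cofinite
  have hex : ∀ x, ∃ w, x ∈ D → Tendsto (fun n => R n x) U (𝓝 w) := by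
    intro x
    by_cases hx : x ∈ D
    · obtain ⟨p, q, h⟩ := hbd' x hx
      obtain ⟨w, -, hw⟩ := (isCompact_Icc (a := p) (b := q)).ultrafilter_le_nhds
        (U.map (fun n => R n x)) (by
          rw [Ultrafilter.coe_map, le_principal_iff, mem_map]
          exact Filter.univ_mem' h)
      exact ⟨w, fun _ => hw⟩
    · exact ⟨0, fun h => absurd h hx⟩
  choose W hW using hex
  have hlt : ∀ x ∈ D, ∀ y ∈ D, x < y → W x < W y := by
    intro x hx y hy hxy
    obtain ⟨c, C, hc, hC⟩ := hbd x hx y hy hxy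
    have := ge_of_tendsto ((hW y hy).sub (hW x hx)) (Filter.Eventually.of_forall fun n => (hC n).1)
    linarith
  refine ⟨W, ?_, ?_⟩
  · intro x hx y hy hxy
    rcases lt_trichotomy x y with h | h | h
    · exact absurd hxy (hlt x hx y hy h).ne
    · exact h
    · exact absurd hxy (hlt y hy x hx h).ne'
  · intro g ⟨μ, hμ⟩ hgD hc
    refine ⟨μ, W (g x0), fun x hx => ?_⟩
    have hcn : ∀ n x, g (f^[n] x) = f^[n] (g x) := fun n x => by
      have : Function.Commute g f := hc
      exact (this.iterate_right n) x
    by_cases hxx : x = x0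
    · have : W x0 = 0 := tendsto_nhds_unique (hW x0 h0) (by simp only [hR0]; exact tendsto_const_nhds)
      rw [hxx, this]; ring
    · have hne : ∀ n, f^[n] x ≠ f^[n] x0 := fun n h => hxx ((hm.iterate n).injective h)
      have t1 := (hμ (fun n => f^[n] x) (fun n => f^[n] x0) (fun n => hI.iterate n (hD hx))
        (fun n => hI.iterate n (hD h0)) hne (hlim x hx) (hlim x0 h0)).mono_left hU
      have t2 := (t1.mul (hW x hx)).add (hW (g x0) (hgD h0))
      refine tendsto_nhds_unique (hW (g x) (hgD hx)) (t2.congr fun n => ?_)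
      simp only [hR, hcn]
      have := sub_ne_zero.2 (hne n)
      have := (hden n).ne'
      field_simp
      ring

/-- Kopell-type conclusion. -/
theorem kopell_core {f : ℝ → ℝ} {L : ℝ} (hL : 0 ≤ L) (hf : SecDist f L) (hm : StrictMono f)
    (hI : MapsTo f (Icc 0 1) (Icc 0 1)) {D : Set ℝ} (hD : D ⊆ Icc 0 1)
    (hsum : ∀ u ∈ D, ∀ v ∈ D, u < v → ∃ C : ℝ, ∀ n : ℕ,
      ∑ i ∈ Finset.range n, (f^[i] v - f^[i] u) ≤ C)
    {e : ℝ} (hlim : ∀ x ∈ D, Tendsto (fun n => f^[n] x) atTop (𝓝 e))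
    (hfe : SecLim f e) (hfD : MapsTo f D D) (hfix : ∀ x ∈ D, f x ≠ x) 
    {x0 x1 : ℝ} (h0 : x0 ∈ D) (h1 : x1 ∈ D) (h01 : x0 < x1) :
    (∀ g : ℝ → ℝ, SecLim g e → MapsTo g D D → (∀ x, g (f x) = f (g x)) → 
      (∃ z ∈ D, g z = z) → ∀ x ∈ D, g x = x) ∧
    (∀ g h : ℝ → ℝ, SecLim g e → MapsTo g D D → (∀ x, g (f x) = f (g x)) → 
      SecLim h e → MapsTo h D D → (∀ x, h (f x) = f (h x)) → ∀ x ∈ D, g (h x) = h (g x)) := by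
  obtain ⟨W, hinj, hW⟩ := affine_coord hL hf hm hI hD hsum hlim h0 h1 h01
  obtain ⟨l, c, hlc⟩ := hW f hfe hfD (fun _ => rfl)
  have h01' : W x0 ≠ W x1 := fun h => h01.ne (hinj h0 h1 h)
  have hrel : ∀ g : ℝ → ℝ, MapsTo g D D → (∀ x, g (f x) = f (g x)) → 
      ∀ μ d : ℝ, (∀ x ∈ D, W (g x) = μ * W x + d) → (l - 1) * d = (μ - 1) * c := by
    intro g hgD hc μ d hg
    have a1 := hg _ (hfD h0)
    rw [hc, hlc _ (hgD h0), hlc _ h0, hg _ h0] at a1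
    linarith
  have hl1 : l = 1 → c ≠ 0 := by
    intro h h'
    apply hfix x0 h0
    apply hinj (hfD h0) h0
    rw [hlc _ h0, h, h']; ring
  constructor
  · intro g hge hgD hc ⟨z, hz, hgz⟩ x hx
    obtain ⟨μ, d, hg⟩ := hW g hge hgD hc
    have r := hrel g hgD hc μ d hg
    have hz1 := hg z hz
    rw [hgz] at hz1
    apply hinj (hgD hx) hx
    rw [hg x hx]
    have hμ : μ = 1 := by
      by_cases h : l = 1
      · have : (μ - 1) * c = 0 := by rw [← r, h]; ring
        rcases mul_eq_zero.1 this with h' | h'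
        · linarith
        · exact absurd h' (hl1 h)
      · have h3 : (μ - 1) * ((l - 1) * W z + c) = 0 := by linear_combination -r + (l - 1) * (- hz1)
        rcases mul_eq_zero.1 h3 with h' | h'
        · linarith
        · exfalso
          apply hfix z hz
          apply hinj (hfD hz) hz
          rw [hlc _ hz]; linarith
    subst hμ
    linarith
  · intro g h hge hgD hgc hhe hhD hhc x hx
    obtain ⟨μ, d, hg⟩ := hW g hge hgD hgc
    obtain ⟨ν, k, hh⟩ := hW h hhe hhD hhc
    have r := hrel g hgD hgc μ d hg
    have r' := hrel h hhD hhc ν k hh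
    apply hinj (hgD (hhD hx)) (hhD (hgD hx))
    rw [hg _ (hhD hx), hh _ hx, hh _ (hgD hx), hg _ hx]
    have : (μ - 1) * k = (ν - 1) * d := by
      by_cases hl : l = 1
      · have hc := hl1 hl
        have e1 : (μ - 1) = 0 := by
          have : (μ - 1) * c = 0 := by rw [← r, hl]; ring
          exact (mul_eq_zero.1 this).resolve_right hc
        have e2 : (ν - 1) = 0 := by
          have : (ν - 1) * c = 0 := by rw [← r', hl]; ring
          exact (mul_eq_zero.1 this).resolve_right hc
        rw [e1, e2]; ring
      · have : (l - 1) * ((μ - 1) * k - (ν - 1) * d) = 0 := by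
          linear_combination (μ - 1) * r' - (ν - 1) * r
        rcases mul_eq_zero.1 this with h' | h'
        · exact absurd (by linarith) hl
        · linarith
    linarith

namespace IsDiffI

variable {f : Equiv.Perm ℝ}

theorem mapsIcc (hf : IsDiffI f) : MapsTo f (Icc 0 1) (Icc 0 1) := by
  intro x hx
  by_contra h
  have := f.injective (hf.1 _ h)
  rw [this] at h
  exact h hx

theorem mvt (hf : IsDiffI f) {x y : ℝ} (hx : 0 ≤ x) (hxy : x < y) (hy : y ≤ 1) :
    ∃ c ∈ Ioo x y, f y - f x = derivWithin f (Icc 0 1) c * (y - x) := by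
  have hsub : Icc x y ⊆ Icc (0 : ℝ) 1 := Icc_subset_Icc hx hy
  have hd : DifferentiableOn ℝ f (Icc 0 1) := hf.2.1.differentiableOn (by norm_num)
  obtain ⟨c, hc, h⟩ := exists_deriv_eq_slope f hxy (hd.continuousOn.mono hsub)
    (hd.mono (Ioo_subset_Icc_self.trans hsub))
  refine ⟨c, hc, ?_⟩
  rw [derivWithin_of_mem_nhds (Icc_mem_nhds (by linarith [hc.1]) (by linarith [hc.2])), h]
  have : y - x ≠ 0 := by linarith
  field_simp

theorem strictMono (hf : IsDiffI f) : StrictMono f := by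
  intro x y hxy
  by_cases hx : x ∈ Icc (0 : ℝ) 1
  · by_cases hy : y ∈ Icc (0 : ℝ) 1
    · obtain ⟨c, hc, h⟩ := hf.mvt hx.1 hxy hy.2
      have := hf.2.2 c ⟨by linarith [hc.1, hx.1], by linarith [hc.2, hy.2]⟩
      have := mul_pos this (sub_pos.2 hxy)
      linarith
    · rw [hf.1 y hy]
      have h1 : 1 < y := by
        by_contra h
        exact hy ⟨by linarith [hx.1], by linarith⟩
      linarith [(hf.mapsIcc hx).2]
  · rw [hf.1 x hx]
    by_cases hy : y ∈ Icc (0 : ℝ) 1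
    · have h1 : x < 0 := by
        by_contra h
        exact hx ⟨by linarith, by linarith [hy.2]⟩
      linarith [(hf.mapsIcc hy).1]
    · rwa [hf.1 y hy]

theorem cont (hf : IsDiffI f) : Continuous f :=
  hf.strictMono.monotone.continuous_of_surjective f.surjective

theorem secLim (hf : IsDiffI f) {e : ℝ} (he : e ∈ Icc (0 : ℝ) 1) : SecLim f e := by
  refine ⟨derivWithin f (Icc 0 1) e, fun s t hs ht hne hse hte => ?_⟩
  have hc : ContinuousOn (derivWithin f (Icc 0 1)) (Icc 0 1) :=
    hf.2.1.continuousOn_derivWithin (uniqueDiffOn_Icc zero_lt_one) (by norm_num)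
  have key : ∀ n, ∃ c, min (s n) (t n) ≤ c ∧ c ≤ max (s n) (t n) ∧
      (f (s n) - f (t n)) / (s n - t n) = derivWithin f (Icc 0 1) c := by
    intro n
    have h0 : s n - t n ≠ 0 := sub_ne_zero.2 (hne n)
    rcases lt_or_gt_of_ne (hne n) with h | h
    · obtain ⟨c, hc, h'⟩ := hf.mvt (hs n).1 h (ht n).2
      refine ⟨c, (min_le_left _ _).trans hc.1.le, hc.2.le.trans (le_max_right _ _), ?_⟩
      rw [div_eq_iff h0]; linarith
    · obtain ⟨c, hc, h'⟩ := hf.mvt (ht n).1 h (hs n).2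
      refine ⟨c, (min_le_right _ _).trans hc.1.le, hc.2.le.trans (le_max_left _ _), ?_⟩
      rw [div_eq_iff h0]; linarith
  choose c h1 h2 h3 using key
  simp only [h3]
  have hce : Tendsto c atTop (𝓝 e) := by
    refine tendsto_of_tendsto_of_tendsto_of_le_of_le ?_ ?_ h1 h2
    · simpa using hse.min hte
    · simpa using hse.max hte
  refine (hc e he).tendsto.comp (tendsto_nhdsWithin_iff.2 ⟨hce, Eventually.of_forall fun n => ?_⟩)
  exact ⟨(le_min (hs n).1 (ht n).1).trans (h1 n), (h2 n).trans (max_le (hs n).2 (ht n).2)⟩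

theorem secDist (hf : IsDiffI f) : ∃ L, 0 ≤ L ∧ SecDist f L := by
  have hC : ContDiffOn ℝ 1 (derivWithin f (Icc 0 1)) (Icc 0 1) :=
    hf.2.1.derivWithin (uniqueDiffOn_Icc zero_lt_one) (by norm_num)
  obtain ⟨K, hK⟩ := hC.exists_lipschitzOnWith one_ne_zero (convex_Icc 0 1) isCompact_Icc
  obtain ⟨z, hz, hmin⟩ := isCompact_Icc.exists_isMinOn (nonempty_Icc.2 zero_le_one) hC.continuousOn
  set m := derivWithin f (Icc 0 1) z with hm
  have hmpos : 0 < m := hf.2.2 z hz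
  refine ⟨K / m, by positivity, ?_⟩
  intro u v x y x' y' hu hv h1 h2 h3 h4 h5 h6
  obtain ⟨c, hc, e1⟩ := hf.mvt (hu.trans h1) h2 (h3.trans hv)
  obtain ⟨c', hc', e2⟩ := hf.mvt (hu.trans h4) h5 (h6.trans hv)
  rw [e1, e2]
  have hcI : c ∈ Icc (0 : ℝ) 1 := ⟨by linarith [hc.1], by linarith [hc.2]⟩
  have hcI' : c' ∈ Icc (0 : ℝ) 1 := ⟨by linarith [hc'.1], by linarith [hc'.2]⟩
  have hd := hK.dist_le_mul c hcI c' hcI'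
  rw [Real.dist_eq, Real.dist_eq] at hd
  have hcc : |c - c'| ≤ v - u := by
    rw [abs_le]; constructor <;> linarith [hc.1, hc.2, hc'.1, hc'.2]
  have hmc : m ≤ derivWithin f (Icc 0 1) c' := hmin hcI'
  have hle := le_abs_self (derivWithin f (Icc 0 1) c - derivWithin f (Icc 0 1) c')
  generalize derivWithin f (Icc 0 1) c = F at *
  generalize derivWithin f (Icc 0 1) c' = F' at *
  have hK0 : (0 : ℝ) ≤ K := K.2
  have hvu : 0 ≤ v - u := by linarith
  have hexp := Real.add_one_le_exp ((K : ℝ) / m * (v - u))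
  have hF : F ≤ Real.exp ((K : ℝ) / m * (v - u)) * F' := by
    have a1 : F ≤ F' + K * (v - u) := by
      have := mul_le_mul_of_nonneg_left hcc hK0
      linarith
    have a2 : (K : ℝ) * (v - u) ≤ (K : ℝ) / m * (v - u) * F' := by
      have : (K : ℝ) * (v - u) = (K : ℝ) / m * (v - u) * m := by field_simp
      rw [this]
      exact mul_le_mul_of_nonneg_left hmc (by positivity)
    have a3 := mul_le_mul_of_nonneg_right hexp (hmpos.le.trans hmc)
    linarith
  have hpq : 0 ≤ (y - x) * (y' - x') := mul_nonneg (by linarith) (by linarith)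
  have := mul_le_mul_of_nonneg_right hF hpq
  linarith [show F * (y - x) * (y' - x') = F * ((y - x) * (y' - x')) by ring,
    show Real.exp ((K : ℝ) / m * (v - u)) * (F' * (y' - x') * (y - x)) =
      Real.exp ((K : ℝ) / m * (v - u)) * F' * ((y - x) * (y' - x')) by ring]

theorem component (hf : IsDiffI f) {x : ℝ} (hx : f x ≠ x) :
    ∃ a b : ℝ, 0 ≤ a ∧ b ≤ 1 ∧ a < x ∧ x < b ∧ f a = a ∧ f b = b ∧
      ((∀ y ∈ Ioo a b, f y < y) ∨ (∀ y ∈ Ioo a b, y < f y)) := by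
  have hS : IsClosed {y | f y = y} := isClosed_eq hf.cont continuous_id
  have hxI : x ∈ Icc (0 : ℝ) 1 := by
    by_contra h; exact hx (hf.1 x h)
  have f0 : f 0 = 0 := by
    have : Iio (0 : ℝ) ⊆ {y | f y = y} := fun y hy => hf.1 y fun h => absurd h.1 (not_le.2 hy)
    have := hS.closure_subset_iff.2 this
    rw [closure_Iio] at this
    exact this (show (0 : ℝ) ≤ 0 from le_rfl)
  have f1 : f 1 = 1 := by
    have : Ioi (1 : ℝ) ⊆ {y | f y = y} := fun y hy => hf.1 y fun h => absurd h.2 (not_le.2 hy)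
    have := hS.closure_subset_iff.2 this
    rw [closure_Ioi] at this
    exact this (show (1 : ℝ) ≤ 1 from le_rfl)
  have hA := (hS.inter isClosed_Iic).csSup_mem (s := {y | f y = y} ∩ Iic x) ⟨0, f0, hxI.1⟩
    ⟨x, fun y hy => hy.2⟩
  have hB := (hS.inter isClosed_Ici).csInf_mem (s := {y | f y = y} ∩ Ici x) ⟨1, f1, hxI.2⟩
    ⟨x, fun y hy => hy.2⟩
  have hA' : ∀ y ∈ {y | f y = y} ∩ Iic x, y ≤ sSup ({y | f y = y} ∩ Iic x) := fun y hy =>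
    le_csSup ⟨x, fun y hy => hy.2⟩ hy
  have hB' : ∀ y ∈ {y | f y = y} ∩ Ici x, sInf ({y | f y = y} ∩ Ici x) ≤ y := fun y hy =>
    csInf_le ⟨x, fun y hy => hy.2⟩ hy
  generalize sSup ({y | f y = y} ∩ Iic x) = a at *
  generalize sInf ({y | f y = y} ∩ Ici x) = b at *
  have hfa : f a = a := hA.1
  have hfb : f b = b := hB.1
  have hax : a < x := lt_of_le_of_ne hA.2 fun h => hx (h ▸ hfa)
  have hxb : x < b := lt_of_le_of_ne hB.2 fun h => hx (h ▸ hfb)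
  have hne : ∀ y ∈ Ioo a b, f y ≠ y := by
    intro y hy h
    rcases le_total y x with h' | h'
    · exact absurd (hA' y ⟨h, h'⟩) (not_le.2 hy.1)
    · exact absurd (hB' y ⟨h, h'⟩) (not_le.2 hy.2)
  refine ⟨a, b, hA' 0 ⟨f0, hxI.1⟩, hB' 1 ⟨f1, hxI.2⟩, hax, hxb, hfa, hfb, ?_⟩
  by_contra! hcon
  obtain ⟨⟨p, hp, hp'⟩, ⟨q, hq, hq'⟩⟩ := hcon
  obtain ⟨r, hr, hr'⟩ := isPreconnected_Ioo.intermediate_value₂ hq hp hf.cont.continuousOn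
    continuousOn_id hq' hp'
  exact hne r hr hr'

theorem iter_mem (hf : IsDiffI f) {a b : ℝ} (ha : f a = a) (hb : f b = b) : 
    MapsTo f (Ioo a b) (Ioo a b) := fun y hy =>
  ⟨by have := hf.strictMono hy.1; rwa [ha] at this, by have := hf.strictMono hy.2; rwa [hb] at this⟩

theorem lim_down (hf : IsDiffI f) {a b : ℝ} (ha : f a = a) (hb : f b = b)
    (hd : ∀ y ∈ Ioo a b, f y < y) {y : ℝ} (hy : y ∈ Ioo a b) :
    Tendsto (fun n => f^[n] y) atTop (𝓝 a) := by
  have hmem : ∀ n, f^[n] y ∈ Ioo a b := fun n => (hf.iter_mem ha hb).iterate n hy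
  have hanti : Antitone (fun n => f^[n] y) := antitone_nat_of_succ_le fun n => by
    rw [Function.iterate_succ_apply']; exact (hd _ (hmem n)).le
  have hbdd : BddBelow (range fun n => f^[n] y) := ⟨a, by rintro _ ⟨n, rfl⟩; exact (hmem n).1.le⟩
  have ht := tendsto_atTop_ciInf hanti hbdd
  set l := ⨅ n, f^[n] y
  have hfl : f l = l := isFixedPt_of_tendsto_iterate ht hf.cont.continuousAt
  have h1 : a ≤ l := ge_of_tendsto' ht fun n => (hmem n).1.le
  have h2 : l ≤ y := hanti.le_of_tendsto ht 0
  rcases h1.eq_or_lt with h | h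
  · rwa [h]
  · exact absurd hfl (hd l ⟨h, h2.trans_lt hy.2⟩).ne

theorem lim_up (hf : IsDiffI f) {a b : ℝ} (ha : f a = a) (hb : f b = b)
    (hd : ∀ y ∈ Ioo a b, y < f y) {y : ℝ} (hy : y ∈ Ioo a b) :
    Tendsto (fun n => f^[n] y) atTop (𝓝 b) := by
  have hmem : ∀ n, f^[n] y ∈ Ioo a b := fun n => (hf.iter_mem ha hb).iterate n hy
  have hanti : Monotone (fun n => f^[n] y) := monotone_nat_of_le_succ fun n => by
    rw [Function.iterate_succ_apply']; exact (hd _ (hmem n)).le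
  have hbdd : BddAbove (range fun n => f^[n] y) := ⟨b, by rintro _ ⟨n, rfl⟩; exact (hmem n).2.le⟩
  have ht := tendsto_atTop_ciSup hanti hbdd
  set l := ⨆ n, f^[n] y
  have hfl : f l = l := isFixedPt_of_tendsto_iterate ht hf.cont.continuousAt
  have h1 : l ≤ b := le_of_tendsto' ht fun n => (hmem n).2.le
  have h2 : y ≤ l := hanti.ge_of_tendsto ht 0
  rcases h1.eq_or_lt with h | h
  · rwa [← h]
  · exact absurd hfl (hd l ⟨hy.1.trans_le h2, h⟩).ne'

end IsDiffI

theorem tele_bound {s : ℕ → ℝ} (hs : ∀ n, s n ∈ Icc (0 : ℝ) 1) (N n : ℕ) :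
    |∑ i ∈ Finset.range n, (s (i + N) - s i)| ≤ N := by
  induction N with
  | zero => simp
  | succ N ih =>
    have : ∑ i ∈ Finset.range n, (s (i + (N + 1)) - s i) =
        ∑ i ∈ Finset.range n, (s (i + N) - s i) + (s (n + N) - s (0 + N)) := by
      rw [← Finset.sum_range_sub (fun i => s (i + N)), ← Finset.sum_add_distrib]
      refine Finset.sum_congr rfl fun i _ => ?_
      rw [show i + 1 + N = i + (N + 1) by ring]; ring
    rw [this]
    have h2 : |s (n + N) - s (0 + N)| ≤ 1 := by
      rw [abs_le]; constructor <;> linarith [(hs (n+N)).1, (hs (n+N)).2, (hs (0+N)).1, (hs (0+N)).2]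
    push_cast
    exact (abs_add_le _ _).trans (add_le_add ih h2)

namespace IsDiffI

variable {f : Equiv.Perm ℝ}

theorem sum_down (hf : IsDiffI f) {a b : ℝ} (h0 : 0 ≤ a) (h1 : b ≤ 1) (ha : f a = a) (hb : f b = b)
    (hd : ∀ y ∈ Ioo a b, f y < y) {u v : ℝ} (hu : u ∈ Ioo a b) (hv : v ∈ Ioo a b) :
    ∃ C : ℝ, ∀ n : ℕ, ∑ i ∈ Finset.range n, (f^[i] v - f^[i] u) ≤ C := by
  obtain ⟨N, hN⟩ := ((hf.lim_down ha hb hd hv).eventually_lt_const hu.1).exists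
  refine ⟨N, fun n => ?_⟩
  have hI : ∀ n, f^[n] v ∈ Icc (0 : ℝ) 1 := fun n =>
    hf.mapsIcc.iterate n ⟨by linarith [hv.1], by linarith [hv.2]⟩
  have t := (abs_le.1 (tele_bound hI N n)).1
  have : ∑ i ∈ Finset.range n, (f^[i] v - f^[i] u) ≤
      -∑ i ∈ Finset.range n, (f^[i + N] v - f^[i] v) := by
    rw [← Finset.sum_neg_distrib]
    refine Finset.sum_le_sum fun i _ => ?_
    have := (hf.strictMono.iterate i) hN
    rw [Function.iterate_add_apply]
    linarith
  linarith

theorem sum_up (hf : IsDiffI f) {a b : ℝ} (h0 : 0 ≤ a) (h1 : b ≤ 1) (ha : f a = a) (hb : f b = b)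
    (hd : ∀ y ∈ Ioo a b, y < f y) {u v : ℝ} (hu : u ∈ Ioo a b) (hv : v ∈ Ioo a b) :
    ∃ C : ℝ, ∀ n : ℕ, ∑ i ∈ Finset.range n, (f^[i] v - f^[i] u) ≤ C := by
  obtain ⟨N, hN⟩ := ((hf.lim_up ha hb hd hu).eventually_const_lt hv.2).exists
  refine ⟨N, fun n => ?_⟩
  have hI : ∀ n, f^[n] u ∈ Icc (0 : ℝ) 1 := fun n =>
    hf.mapsIcc.iterate n ⟨by linarith [hu.1], by linarith [hu.2]⟩
  have t := (abs_le.1 (tele_bound hI N n)).2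
  have : ∑ i ∈ Finset.range n, (f^[i] v - f^[i] u) ≤
      ∑ i ∈ Finset.range n, (f^[i + N] u - f^[i] u) := by
    refine Finset.sum_le_sum fun i _ => ?_
    have := (hf.strictMono.iterate i) hN
    rw [Function.iterate_add_apply]
    linarith
  linarith

/-- Interior-empty condition gives a moved point in every subinterval. -/
theorem not_fixed (g : Equiv.Perm ℝ)
    (hg : interior {x | x ∈ Icc (0 : ℝ) 1 ∧ g x = x} = ∅) {p q : ℝ} (hp : 0 ≤ p) (hq : q ≤ 1)
    (hpq : p < q) (h : ∀ x ∈ Ioo p q, g x = x) : False := by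
  have hsub : Ioo p q ⊆ interior {x | x ∈ Icc (0 : ℝ) 1 ∧ g x = x} :=
    interior_maximal (fun x hx => ⟨⟨by linarith [hx.1], by linarith [hx.2]⟩, h x hx⟩) isOpen_Ioo
  rw [hg] at hsub
  exact hsub (show (p + q) / 2 ∈ Ioo p q from ⟨by linarith, by linarith⟩)

theorem fix_sub {g : Equiv.Perm ℝ} (hf : IsDiffI f) (hg : IsDiffI g)
    (hgf : interior {x | x ∈ Icc (0 : ℝ) 1 ∧ g x = x} = ∅) (hc : Commute g f) {x : ℝ}
    (hx : g x = x) : f x = x := by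
  by_contra hfx
  have hcx : ∀ x, g (f x) = f (g x) := fun x => DFunLike.congr_fun hc.eq x
  have hcn : ∀ n, g (f^[n] x) = f^[n] x := fun n => by
    have h : Function.Commute g f := hcx
    have := (h.iterate_right n) x
    rwa [hx] at this
  obtain ⟨a, b, h0, h1, hax, hxb, ha, hb, hd | hd⟩ := hf.component hfx
  · obtain ⟨L, hL, hLd⟩ := hf.secDist
    have hl := hf.lim_down ha hb hd (y := x) ⟨hax, hxb⟩
    have hga : g a = a := by
      have := (hg.cont.tendsto a).comp hl
      refine tendsto_nhds_unique this (hl.congr fun n => (hcn n).symm)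
    have hDs : Ioc a x ⊆ Ioo a b := fun y hy => ⟨hy.1, hy.2.trans_lt hxb⟩
    have haI : a ∈ Icc (0 : ℝ) 1 := ⟨h0, by linarith⟩
    have hfD : MapsTo f (Ioc a x) (Ioc a x) := fun y hy =>
      ⟨(hf.iter_mem ha hb (hDs hy)).1, (hd y (hDs hy)).le.trans hy.2⟩
    have hgD : MapsTo g (Ioc a x) (Ioc a x) := fun y hy =>
      ⟨by have := hg.strictMono hy.1; rwa [hga] at this,
        by have := hg.strictMono.monotone hy.2; rwa [hx] at this⟩
    have hxD : x ∈ Ioc a x := ⟨hax, le_rfl⟩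
    have := (kopell_core hL hLd hf.strictMono hf.mapsIcc (D := Ioc a x)
      (fun y hy => ⟨by linarith [hy.1], by linarith [hy.2]⟩)
      (fun u hu v hv _ => hf.sum_down h0 h1 ha hb hd (hDs hu) (hDs hv))
      (fun y hy => hf.lim_down ha hb hd (hDs hy)) (hf.secLim haI) hfD
      (fun y hy => (hd y (hDs hy)).ne) (hfD hxD) hxD (hd x ⟨hax, hxb⟩)).1 g (hg.secLim haI) hgD hcx
      ⟨x, hxD, hx⟩
    exact not_fixed g hgf h0 (by linarith) hax fun y hy => this y ⟨hy.1, hy.2.le⟩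
  · obtain ⟨L, hL, hLd⟩ := hf.secDist
    have hl := hf.lim_up ha hb hd (y := x) ⟨hax, hxb⟩
    have hgb : g b = b := by
      have := (hg.cont.tendsto b).comp hl
      refine tendsto_nhds_unique this (hl.congr fun n => (hcn n).symm)
    have hDs : Ico x b ⊆ Ioo a b := fun y hy => ⟨hax.trans_le hy.1, hy.2⟩
    have hbI : b ∈ Icc (0 : ℝ) 1 := ⟨by linarith, h1⟩
    have hfD : MapsTo f (Ico x b) (Ico x b) := fun y hy =>
      ⟨hy.1.trans (hd y (hDs hy)).le, (hf.iter_mem ha hb (hDs hy)).2⟩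
    have hgD : MapsTo g (Ico x b) (Ico x b) := fun y hy =>
      ⟨by have := hg.strictMono.monotone hy.1; rwa [hx] at this,
        by have := hg.strictMono hy.2; rwa [hgb] at this⟩
    have hxD : x ∈ Ico x b := ⟨le_rfl, hxb⟩
    have := (kopell_core hL hLd hf.strictMono hf.mapsIcc (D := Ico x b)
      (fun y hy => ⟨by linarith [hy.1], by linarith [hy.2]⟩)
      (fun u hu v hv _ => hf.sum_up h0 h1 ha hb hd (hDs hu) (hDs hv))
      (fun y hy => hf.lim_up ha hb hd (hDs hy)) (hf.secLim hbI) hfD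
      (fun y hy => (hd y (hDs hy)).ne') hxD (hfD hxD) (hd x ⟨hax, hxb⟩)).1 g (hg.secLim hbI) hgD hcx
      ⟨x, hxD, hx⟩
    exact not_fixed g hgf (by linarith) h1 hxb fun y hy => this y ⟨hy.1.le, hy.2⟩

theorem comm_trans {g h : Equiv.Perm ℝ} (hf : IsDiffI f) (hg : IsDiffI g) (hh : IsDiffI h)
    (hff : interior {x | x ∈ Icc (0 : ℝ) 1 ∧ f x = x} = ∅)
    (hgf : Commute g f) (hfh : Commute f h) : Commute g h := by
  have hgx : ∀ x, g (f x) = f (g x) := fun x => DFunLike.congr_fun hgf.eq x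
  have hhx : ∀ x, h (f x) = f (h x) := fun x => DFunLike.congr_fun hfh.symm.eq x
  have fixg : ∀ x, f x = x → g x = x := fun x hx => fix_sub hg hf hff hgf.symm hx
  have fixh : ∀ x, f x = x → h x = x := fun x hx => fix_sub hh hf hff hfh hx
  ext x
  change g (h x) = h (g x)
  by_cases hfx : f x = x
  · rw [fixh x hfx, fixg x hfx, fixh x hfx]
  obtain ⟨a, b, h0, h1, hax, hxb, ha, hb, hd | hd⟩ := hf.component hfx
  all_goals
    obtain ⟨L, hL, hLd⟩ := hf.secDist
    have haI : a ∈ Icc (0 : ℝ) 1 := ⟨h0, by linarith⟩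
    have hbI : b ∈ Icc (0 : ℝ) 1 := ⟨by linarith, h1⟩
    have hxD : x ∈ Ioo a b := ⟨hax, hxb⟩
    have hfD := hf.iter_mem ha hb
    have hgD := hg.iter_mem (fixg a ha) (fixg b hb)
    have hhD := hh.iter_mem (fixh a ha) (fixh b hb)
  · exact (kopell_core hL hLd hf.strictMono hf.mapsIcc (D := Ioo a b)
      (fun y hy => ⟨by linarith [hy.1], by linarith [hy.2]⟩)
      (fun u hu v hv _ => hf.sum_down h0 h1 ha hb hd hu hv)
      (fun y hy => hf.lim_down ha hb hd hy) (hf.secLim haI) hfD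
      (fun y hy => (hd y hy).ne) (hfD hxD) hxD (hd x hxD)).2 g h (hg.secLim haI) hgD hgx
      (hh.secLim haI) hhD hhx x hxD
  · exact (kopell_core hL hLd hf.strictMono hf.mapsIcc (D := Ioo a b)
      (fun y hy => ⟨by linarith [hy.1], by linarith [hy.2]⟩)
      (fun u hu v hv _ => hf.sum_up h0 h1 ha hb hd hu hv)
      (fun y hy => hf.lim_up ha hb hd hy) (hf.secLim hbI) hfD
      (fun y hy => (hd y hy).ne') hxD (hfD hxD) (hd x hxD)).2 g h (hg.secLim hbI) hgD hgx
      (hh.secLim hbI) hhD hhx x hxD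

end IsDiffI

/-- **Abelian criterion for the interval.** Let `g 1, …, g k` be orientation-preserving
C² diffeomorphisms of `I = [0,1]`, each fully supported (fixed point set with empty
interior).  If the commutativity graph of the generators is connected (any two indices
are joined by a chain of commuting pairs), then the group they generate is abelian. -/
theorem abelian_criterion_interval {k : ℕ} (g : Fin k → Equiv.Perm ℝ)
    (hdiff : ∀ i, IsDiffI (g i))
    (hfull : ∀ i, interior {x | x ∈ Set.Icc (0 : ℝ) 1 ∧ g i x = x} = ∅)
    (hconn : ∀ i j : Fin k, Relation.ReflTransGen (fun a b => Commute (g a) (g b)) i j) :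
    ∀ u ∈ Subgroup.closure (Set.range g), ∀ v ∈ Subgroup.closure (Set.range g),
      Commute u v := by
  have hall : ∀ i j, Commute (g i) (g j) := by
    intro i j
    induction hconn i j with
    | refl => exact Commute.refl _
    | tail _ hbc ih => exact IsDiffI.comm_trans (hdiff _) (hdiff _) (hdiff _) (hfull _) ih hbc
  intro u hu v hv
  induction hu, hv using Subgroup.closure_induction₂ with
  | mem x y hx hy =>
    obtain ⟨i, rfl⟩ := hx
    obtain ⟨j, rfl⟩ := hy
    exact hall i j
  | one_left x hx => exact Commute.one_left _
  | one_right x hx => exact Commute.one_right _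
  | mul_left x y z _ _ _ h1 h2 => exact h1.mul_left h2
  | mul_right x y z _ _ _ h1 h2 => exact h1.mul_right h2
  | inv_left x y _ _ h => exact h.inv_left
  | inv_right x y _ _ h => exact h.inv_right
end

section
/- Abelian criterion for the circle: Let g₁, g₂, …, g_k be orientation-preserving C² diffeomorphisms of the circle S¹ = ℝ/ℤ, each of which is fully supported (Fix(g_i) has empty interior) and each of which has at least one fixed point. Suppose the commutativity graph of {g₁, …, g_k} is connected: the graph with vertex set {1,…,k} and an edge between i and j whenever g_i ∘ g_j = g_j ∘ g_i is connected. Then the subgroup of Diff²₊(S¹) generated by g₁, …, g_k is abelian. -/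
/-- A permutation of `S¹ = ℝ/ℤ` representing an orientation-preserving C²
diffeomorphism of the circle: it is induced by a C² map `F : ℝ → ℝ` with everywhere
positive derivative satisfying `F (x+1) = F x + 1`. -/
def IsDiffCircle (f : Equiv.Perm (AddCircle (1 : ℝ))) : Prop :=
  ∃ F : ℝ → ℝ, ContDiff ℝ 2 F ∧ (∀ x, 0 < deriv F x) ∧
    (∀ x, F (x + 1) = F x + 1) ∧ ∀ x : ℝ, f ↑x = ↑(F x)

open Set Filter Topology

section Holder
variable {Γ : Subgroup (ℝ ≃o ℝ)} {a b : ℝ}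

structure FreeOn (Γ : Subgroup (ℝ ≃o ℝ)) (a b : ℝ) : Prop where
  fixa : ∀ u ∈ Γ, u a = a
  fixb : ∀ u ∈ Γ, u b = b
  free : ∀ u ∈ Γ, ∀ x ∈ Ioo a b, u x = x → ∀ y ∈ Ioo a b, u y = y

lemma FreeOn.mem (H : FreeOn Γ a b) {u : ℝ ≃o ℝ} (hu : u ∈ Γ) {x : ℝ} (hx : x ∈ Ioo a b) :
    u x ∈ Ioo a b := by
  have h1 := u.strictMono hx.1
  have h2 := u.strictMono hx.2
  rw [H.fixa u hu] at h1
  rw [H.fixb u hu] at h2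
  exact ⟨h1, h2⟩

lemma FreeOn.eq (H : FreeOn Γ a b) {u v : ℝ ≃o ℝ} (hu : u ∈ Γ) (hv : v ∈ Γ) {x : ℝ}
    (hx : x ∈ Ioo a b) (h : u x = v x) {y : ℝ} (hy : y ∈ Ioo a b) : u y = v y := by
  have h1 : (u⁻¹ * v) x = x := by
    change u.symm (v x) = x
    rw [← h]; simp
  have h2 : u.symm (v y) = y := H.free _ (Γ.mul_mem (Γ.inv_mem hu) hv) x hx h1 y hy
  rw [OrderIso.symm_apply_eq] at h2
  exact h2.symm

lemma FreeOn.lt (H : FreeOn Γ a b) {u v : ℝ ≃o ℝ} (hu : u ∈ Γ) (hv : v ∈ Γ) {x : ℝ}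
    (hx : x ∈ Ioo a b) (h : u x < v x) {y : ℝ} (hy : y ∈ Ioo a b) : u y < v y := by
  by_contra! hc
  obtain ⟨z, hz, hz'⟩ := isPreconnected_Ioo.intermediate_value₂ hx hy
    u.continuous.continuousOn v.continuous.continuousOn h.le hc
  exact h.ne (H.eq hu hv hz hz' hx)

lemma FreeOn.le (H : FreeOn Γ a b) {u v : ℝ ≃o ℝ} (hu : u ∈ Γ) (hv : v ∈ Γ) {x : ℝ}
    (hx : x ∈ Ioo a b) (h : u x ≤ v x) {y : ℝ} (hy : y ∈ Ioo a b) : u y ≤ v y := by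
  by_contra! hc
  exact absurd (H.lt hv hu hy hc hx) (not_lt.2 h)

lemma FreeOn.arch (H : FreeOn Γ a b) {d : ℝ ≃o ℝ} (hd : d ∈ Γ) {x y : ℝ}
    (hx : x ∈ Ioo a b) (h : x < d x) (hy : y ∈ Ioo a b) : ∃ n : ℕ, y < (d ^ n) x := by
  by_contra! hc
  have hco : ∀ n : ℕ, (d ^ n) x = d^[n] x := by
    intro n
    induction n with
    | zero => rfl
    | succ n ih =>
      rw [Function.iterate_succ_apply', pow_succ', ← ih]; rfl
  have hmono : Monotone (fun n : ℕ => d^[n] x) := d.monotone.monotone_iterate_of_le_map h.le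
  have hbdd : BddAbove (range (fun n : ℕ => d^[n] x)) := by
    refine ⟨y, ?_⟩
    rintro _ ⟨n, rfl⟩
    simpa [hco] using hc n
  have ht := tendsto_atTop_ciSup hmono hbdd
  set L := ⨆ n : ℕ, d^[n] x
  have hfix : d L = L := isFixedPt_of_tendsto_iterate ht d.continuous.continuousAt
  have hxL : x ≤ L := le_ciSup hbdd 0
  have hLy : L ≤ y := ciSup_le (fun n => by simpa [hco] using hc n)
  exact h.ne' (H.free d hd L ⟨hx.1.trans_le hxL, hLy.trans_lt hy.2⟩ hfix x hx)

lemma FreeOn.floor (H : FreeOn Γ a b) {d u : ℝ ≃o ℝ} (hd : d ∈ Γ) (hu : u ∈ Γ) {x : ℝ}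
    (hx : x ∈ Ioo a b) (h : x < d x) :
    ∃ m : ℤ, (∀ y ∈ Ioo a b, (d ^ m) y ≤ u y) ∧ ∀ y ∈ Ioo a b, u y < (d ^ (m + 1)) y := by
  have hm : StrictMono (fun m : ℤ => (d ^ m) x) := by
    refine strictMono_int_of_lt_succ fun m => ?_
    rw [zpow_add_one]
    exact (d ^ m).strictMono h
  obtain ⟨n, hn⟩ := H.arch hd hx h (H.mem hu hx)
  obtain ⟨k, hk⟩ := H.arch hd (H.mem hu hx)
    (H.lt Γ.one_mem hd hx h (H.mem hu hx)) hx
  obtain ⟨m, hm1, hm2⟩ := Int.exists_greatest_of_bdd (P := fun m : ℤ => (d ^ m) x ≤ u x)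
    ⟨n, fun z hz => by
      by_contra! hc
      have := hm hc
      simp only [zpow_natCast] at this
      linarith⟩
    ⟨-k, by
      have : (d ^ (-(k:ℤ))) ((d ^ (k:ℤ)) (u x)) = u x := by
        change (d ^ (-(k:ℤ)) * d ^ (k:ℤ)) (u x) = u x
        rw [← zpow_add]; simp
      rw [← this, zpow_natCast]
      exact (d ^ (-(k:ℤ))).monotone hk.le⟩
  refine ⟨m, fun y hy => H.le (Γ.zpow_mem hd m) hu hx hm1 hy,
    fun y hy => H.lt hu (Γ.zpow_mem hd _) hx ?_ hy⟩
  by_contra! hc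
  have := hm2 _ hc
  omega

lemma FreeOn.comm_aux (H : FreeOn Γ a b) {u v : ℝ ≃o ℝ} (hu : u ∈ Γ) (hv : v ∈ Γ) {x : ℝ}
    (hx : x ∈ Ioo a b) : ¬ v (u x) < u (v x) := by
  intro hlt
  obtain ⟨c, hc⟩ : ∃ c, c = u * v * (v * u)⁻¹ := ⟨_, rfl⟩
  have hcΓ : c ∈ Γ := by
    rw [hc]; exact Γ.mul_mem (Γ.mul_mem hu hv) (Γ.inv_mem (Γ.mul_mem hv hu))
  have hcuv : ∀ y, c (v (u y)) = u (v y) := by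
    intro y
    have : c * (v * u) = u * v := by rw [hc]; group
    exact DFunLike.congr_fun this y
  have hcpos : ∀ y ∈ Ioo a b, y < c y := by
    intro y hy
    refine H.lt Γ.one_mem hcΓ (H.mem hv (H.mem hu hx)) ?_ hy
    rw [hcuv]; exact hlt
  -- no square root below c
  have key : ∀ d ∈ Γ, x < d x → ¬ d (d x) ≤ c x := by
    intro d hd hdx hdc
    obtain ⟨m, hm1, hm2⟩ := H.floor hd hu hx hdx
    obtain ⟨n, hn1, hn2⟩ := H.floor hd hv hx hdx
    have e1 : u (v x) < (d ^ (m + 1 + (n + 1))) x := by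
      rw [zpow_add]
      calc u (v x) < (d ^ (m+1)) (v x) := hm2 _ (H.mem hv hx)
        _ < (d ^ (m+1)) ((d ^ (n+1)) x) := (d ^ (m+1)).strictMono (hn2 _ hx)
    have e2 : (d ^ (n + m)) x ≤ v (u x) := by
      rw [zpow_add]
      calc (d ^ n) ((d ^ m) x) ≤ (d ^ n) (u x) := (d ^ n).monotone (hm1 _ hx)
        _ ≤ v (u x) := hn1 _ (H.mem hu hx)
    have e3 : (d * d) (v (u x)) ≤ c (v (u x)) :=
      H.le (Γ.mul_mem hd hd) hcΓ hx hdc (H.mem hv (H.mem hu hx))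
    have e4 : (d ^ (m + 1 + (n + 1))) x = (d * d) ((d ^ (n + m)) x) := by
      change _ = (d * d * d ^ (n+m)) x
      congr 1
      have : m + 1 + (n + 1) = 1 + 1 + (n + m) := by ring
      rw [this, zpow_add, zpow_add, zpow_one]
    have e5 := (d * d).monotone e2
    rw [hcuv] at e3
    rw [e4] at e1
    linarith
  -- hence c is the least positive element
  have least : ∀ e ∈ Γ, x < e x → c x ≤ e x := by
    intro e he hex
    by_contra! hec
    obtain ⟨f, hf⟩ : ∃ f, f = c * e⁻¹ := ⟨_, rfl⟩
    have hfΓ : f ∈ Γ := by rw [hf]; exact Γ.mul_mem hcΓ (Γ.inv_mem he)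
    have hfe : ∀ y, f (e y) = c y := fun y => by
      have : f * e = c := by rw [hf]; group
      exact DFunLike.congr_fun this y
    have hfpos : ∀ y ∈ Ioo a b, y < f y := fun y hy => by
      refine H.lt Γ.one_mem hfΓ (H.mem he hx) ?_ hy
      rw [hfe]; exact hec
    rcases le_or_gt (e x) (f x) with h | h
    · refine key e he hex ?_
      rw [← hfe]
      exact H.le he hfΓ hx h (H.mem he hx)
    · refine key f hfΓ (hfpos x hx) ?_
      rw [← hfe]
      exact f.monotone h.le
  have pow : ∀ w ∈ Γ, ∃ m : ℤ, ∀ y ∈ Ioo a b, w y = (c ^ m) y := by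
    intro w hw
    obtain ⟨m, hm1, hm2⟩ := H.floor hcΓ hw hx (hcpos x hx)
    refine ⟨m, fun y hy => H.eq hw (Γ.zpow_mem hcΓ m) hx ?_ hy⟩
    by_contra hne
    have h1 : (c ^ m) x < w x := lt_of_le_of_ne (hm1 x hx) (Ne.symm hne)
    have hz : ∀ y, (c ^ m) (((c ^ m)⁻¹ * w) y) = w y := fun y => by
      change ((c ^ m) * ((c ^ m)⁻¹ * w)) y = w y
      rw [mul_inv_cancel_left]
    have h2 := least ((c ^ m)⁻¹ * w) (Γ.mul_mem (Γ.inv_mem (Γ.zpow_mem hcΓ m)) hw) (by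
      rw [← (c ^ m).lt_iff_lt, hz]; exact h1)
    rw [← (c ^ m).le_iff_le, hz] at h2
    have h3 := hm2 x hx
    rw [zpow_add_one] at h3
    exact absurd h3 (not_lt.2 h2)
  obtain ⟨m, hm⟩ := pow u hu
  obtain ⟨n, hn⟩ := pow v hv
  rw [hn _ (H.mem hu hx), hm _ (H.mem hv hx), hm _ hx, hn _ hx] at hlt
  have : (c ^ n) ((c ^ m) x) = (c ^ m) ((c ^ n) x) := by
    change (c ^ n * c ^ m) x = (c ^ m * c ^ n) x
    rw [← zpow_add, ← zpow_add, add_comm]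
  linarith

lemma FreeOn.comm (H : FreeOn Γ a b) {u v : ℝ ≃o ℝ} (hu : u ∈ Γ) (hv : v ∈ Γ) {x : ℝ}
    (hx : x ∈ Ioo a b) : v (u x) = u (v x) :=
  le_antisymm (not_lt.1 (H.comm_aux hv hu hx)) (not_lt.1 (H.comm_aux hu hv hx))

end Holder

section Kopell

lemma contDiff_iter {g : ℝ → ℝ} (hg : ContDiff ℝ 1 g) (k : ℕ) : ContDiff ℝ 1 (g^[k]) := by
  induction k with
  | zero => exact contDiff_id
  | succ k ih => rw [Function.iterate_succ']; exact hg.comp ih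

lemma hasDerivAt_iter {f : ℝ → ℝ} (hf : Differentiable ℝ f) (n : ℕ) (x : ℝ) :
    HasDerivAt (f^[n]) (∏ i ∈ Finset.range n, deriv f (f^[i] x)) x := by
  induction n with
  | zero => simpa using hasDerivAt_id x
  | succ n ih =>
    rw [Function.iterate_succ', Finset.prod_range_succ, mul_comm]
    exact (hf (f^[n] x)).hasDerivAt.comp x ih

/-- orbits under a contraction towards `a` converge to `a` -/
lemma tendsto_orbit {f : ℝ → ℝ} {a b c : ℝ} (hfc : Continuous f) (hfm : StrictMono f)
    (fa : f a = a) (hlt : ∀ x ∈ Ioo a b, f x < x) (hc : c ∈ Ioo a b) :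
    (∀ n, a < f^[n] c) ∧ Antitone (fun n => f^[n] c) ∧
      Tendsto (fun n => f^[n] c) atTop (𝓝 a) := by
  have h1 : ∀ n, a < f^[n] c := by
    intro n
    have := (hfm.iterate n) hc.1
    rwa [Function.iterate_fixed fa] at this
  have h2 : Antitone (fun n => f^[n] c) := hfm.monotone.antitone_iterate_of_map_le (hlt c hc).le
  have hbdd : BddBelow (range (fun n : ℕ => f^[n] c)) := by
    refine ⟨a, ?_⟩
    rintro _ ⟨n, rfl⟩
    exact (h1 n).le
  have ht := tendsto_atTop_ciInf h2 hbdd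
  refine ⟨h1, h2, ?_⟩
  set L := ⨅ n : ℕ, f^[n] c
  have hfix : f L = L := isFixedPt_of_tendsto_iterate ht hfc.continuousAt
  have hL1 : a ≤ L := le_ciInf fun n => (h1 n).le
  have hL2 : L ≤ c := ciInf_le hbdd 0
  rcases hL1.eq_or_lt with h | h
  · rwa [h]
  · exact absurd hfix (hlt L ⟨h, hL2.trans_lt hc.2⟩).ne

lemma kopell_aux {f g : ℝ → ℝ} {a b c : ℝ} (hf : ContDiff ℝ 2 f) (hf' : ∀ x, 0 < deriv f x)
    (hg : ContDiff ℝ 1 g) (hgm : StrictMono g) (hcomm : ∀ x, f (g x) = g (f x))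
    (fa : f a = a) (hlt : ∀ x ∈ Ioo a b, f x < x) (hc : c ∈ Ioo a b) (gc : g c = c) :
    ∀ x ∈ Icc (f c) c, g x = x := by
  have hfm : StrictMono f := strictMono_of_deriv_pos hf'
  have hfd : Differentiable ℝ f := hf.differentiable (by norm_num)
  obtain ⟨o1, o2, o3⟩ := tendsto_orbit hf.continuous hfm fa hlt hc
  have hcom : Function.Commute f g := hcomm
  have gcn : ∀ n, g (f^[n] c) = f^[n] c := by
    intro n
    rw [← (hcom.iterate_left n).eq, gc]
  have ga : g a = a := by
    have h1 : Tendsto (fun n => g (f^[n] c)) atTop (𝓝 (g a)) :=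
      (hg.continuous.tendsto a).comp o3
    simp only [gcn] at h1
    exact tendsto_nhds_unique h1 o3
  have hgd : HasDerivAt g (deriv g a) a := (hg.differentiable (by norm_num) a).hasDerivAt
  have dga : deriv g a = 1 := by
    have h1 : Tendsto (fun n => f^[n] c) atTop (𝓝[≠] a) :=
      tendsto_nhdsWithin_iff.2 ⟨o3, Eventually.of_forall fun n => (o1 n).ne'⟩
    have h2 := hgd.tendsto_slope.comp h1
    have h3 : (slope g a ∘ fun n => f^[n] c) = fun _ => (1 : ℝ) := by
      funext n
      have : f^[n] c - a ≠ 0 := sub_ne_zero.2 (o1 n).ne'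
      simp only [Function.comp, slope_def_field, gcn, ga]
      exact div_self this
    rw [h3] at h2
    exact tendsto_nhds_unique h2 tendsto_const_nhds
  have dgka : ∀ k, deriv (g^[k]) a = 1 := by
    intro k
    have := (hgd.iterate a ga k).deriv
    rwa [dga, one_pow] at this
  -- distortion
  have hlog : ContDiff ℝ 1 (fun x => Real.log (deriv f x)) := by
    have : ContDiff ℝ 1 (deriv f) := by
      have h : ContDiff ℝ (1 + 1) f := by
        simpa [one_add_one_eq_two] using hf
      exact (contDiff_succ_iff_deriv.1 h).2.2
    exact this.log fun x => (hf' x).ne'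
  obtain ⟨K, hK⟩ := (hlog.contDiffOn (s := Icc a c)).exists_lipschitzOnWith (by norm_num)
    (convex_Icc a c) isCompact_Icc
  have orb : ∀ x ∈ Icc (f c) c, ∀ n, f^[n] x ∈ Icc (f^[n+1] c) (f^[n] c) := by
    intro x hx n
    refine ⟨?_, hfm.monotone.iterate n hx.2⟩
    rw [Function.iterate_succ_apply]
    exact hfm.monotone.iterate n hx.1
  have orbt : ∀ x ∈ Icc (f c) c, Tendsto (fun n => f^[n] x) atTop (𝓝 a) := by
    intro x hx
    exact tendsto_of_tendsto_of_tendsto_of_le_of_le ((tendsto_add_atTop_iff_nat 1).2 o3) o3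
      (fun n => (orb x hx n).1) (fun n => (orb x hx n).2)
  have ocn : ∀ n, f^[n] c ≤ c := fun n => o2 (Nat.zero_le n)
  have dist : ∀ x ∈ Icc (f c) c, ∀ y ∈ Icc (f c) c, ∀ n,
      Real.exp (-(K * (c - a))) * ∏ i ∈ Finset.range n, deriv f (f^[i] y)
        ≤ ∏ i ∈ Finset.range n, deriv f (f^[i] x) := by
    intro x hx y hy n
    have e1 : ∀ i, Real.log (deriv f (f^[i] y)) - Real.log (deriv f (f^[i] x))
        ≤ K * (f^[i] c - f^[i+1] c) := by
      intro i
      have hxi := orb x hx i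
      have hyi := orb y hy i
      have := hK.dist_le_mul (f^[i] y) ⟨(o1 _).le.trans hyi.1, hyi.2.trans (ocn i)⟩
        (f^[i] x) ⟨(o1 _).le.trans hxi.1, hxi.2.trans (ocn i)⟩
      rw [Real.dist_eq, Real.dist_eq] at this
      refine (le_abs_self _).trans (this.trans ?_)
      refine mul_le_mul_of_nonneg_left ?_ K.2
      rw [abs_le]
      constructor <;> linarith [hxi.1, hxi.2, hyi.1, hyi.2]
    have e2 : ∑ i ∈ Finset.range n, (Real.log (deriv f (f^[i] y)) - Real.log (deriv f (f^[i] x)))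
        ≤ K * (c - a) := by
      refine (Finset.sum_le_sum fun i _ => e1 i).trans ?_
      rw [← Finset.mul_sum, Finset.sum_range_sub' (fun i => f^[i] c)]
      refine mul_le_mul_of_nonneg_left ?_ K.2
      have := o1 n
      simp only [Function.iterate_zero, id]
      linarith
    rw [Finset.sum_sub_distrib] at e2
    have px : ∀ z, 0 < ∏ i ∈ Finset.range n, deriv f (f^[i] z) := fun z =>
      Finset.prod_pos fun i _ => hf' _
    have lg : ∀ z, Real.log (∏ i ∈ Finset.range n, deriv f (f^[i] z))
      = ∑ i ∈ Finset.range n, Real.log (deriv f (f^[i] z)) := fun z =>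
      Real.log_prod fun i _ => (hf' _).ne'
    rw [← lg, ← lg] at e2
    rw [← Real.exp_log (px x)]
    nth_rw 1 [← Real.exp_log (px y)]
    rw [← Real.exp_add]
    exact Real.exp_le_exp.2 (by linarith)
  have gmaps : ∀ k, ∀ x ∈ Icc (f c) c, g^[k] x ∈ Icc (f c) c := by
    intro k x hx
    have h1 := (hgm.monotone.iterate k) hx.1
    have h2 := (hgm.monotone.iterate k) hx.2
    rw [Function.iterate_fixed (show g (f c) = f c from gcn 1)] at h1
    rw [Function.iterate_fixed gc] at h2
    exact ⟨h1, h2⟩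
  have dlow : ∀ k, ∀ x ∈ Icc (f c) c, Real.exp (-(K * (c - a))) ≤ deriv (g^[k]) x := by
    intro k x hx
    have hgk := contDiff_iter hg k
    have hgkd : Differentiable ℝ (g^[k]) := hgk.differentiable (by norm_num)
    have lim : Tendsto (fun n => Real.exp (-(K * (c - a))) * deriv (g^[k]) (f^[n] x)) atTop
        (𝓝 (Real.exp (-(K * (c - a))) * 1)) := by
      refine Tendsto.const_mul _ ?_
      rw [← dgka k]
      exact ((hgk.continuous_deriv (by norm_num)).tendsto a).comp (orbt x hx)
    rw [mul_one] at lim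
    refine le_of_tendsto' lim fun n => ?_
    have c1 : HasDerivAt (g^[k] ∘ f^[n]) _ x :=
      (hgkd (f^[n] x)).hasDerivAt.comp x (hasDerivAt_iter hfd n x)
    have c2 : HasDerivAt (f^[n] ∘ g^[k]) _ x :=
      (hasDerivAt_iter hfd n (g^[k] x)).comp x (hgkd x).hasDerivAt
    have hc' : g^[k] ∘ f^[n] = f^[n] ∘ g^[k] := by
      funext z
      exact ((hcom.iterate_iterate n k).eq z).symm
    rw [hc'] at c1
    have heq := c1.unique c2
    have hd := dist x hx (g^[k] x) (gmaps k x hx) n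
    have pp : 0 < ∏ i ∈ Finset.range n, deriv f (f^[i] (g^[k] x)) :=
      Finset.prod_pos fun i _ => hf' _
    have nn : 0 ≤ deriv (g^[k]) (f^[n] x) := (hgm.monotone.iterate k).deriv_nonneg
    have := mul_le_mul_of_nonneg_left hd nn
    rw [heq] at this
    refine le_of_mul_le_mul_left ?_ pp
    linarith
  have mvt : ∀ k, ∀ x ∈ Icc (f c) c, ∀ y ∈ Icc (f c) c, x ≤ y →
      Real.exp (-(K * (c - a))) * (y - x) ≤ g^[k] y - g^[k] x := by
    intro k
    have hgk := contDiff_iter hg k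
    exact (convex_Icc (f c) c).mul_sub_le_image_sub_of_le_deriv hgk.continuous.continuousOn
      (hgk.differentiable (by norm_num)).differentiableOn
      (fun x hx => dlow k x (interior_subset hx))
  intro x hx
  by_contra hne
  have hconv : ∃ L, Tendsto (fun k => g^[k] x) atTop (𝓝 L) := by
    rcases lt_or_gt_of_ne hne with h | h
    · refine ⟨_, tendsto_atTop_ciInf (hgm.monotone.antitone_iterate_of_map_le h.le) ?_⟩
      refine ⟨f c, ?_⟩
      rintro _ ⟨n, rfl⟩
      exact (gmaps n x hx).1
    · refine ⟨_, tendsto_atTop_ciSup (hgm.monotone.monotone_iterate_of_le_map h.le) ?_⟩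
      refine ⟨c, ?_⟩
      rintro _ ⟨n, rfl⟩
      exact (gmaps n x hx).2
  obtain ⟨L, hL⟩ := hconv
  have hgx : g x ∈ Icc (f c) c := gmaps 1 x hx
  have hdiff : Tendsto (fun k => |g^[k] (g x) - g^[k] x|) atTop (𝓝 0) := by
    have h2 := (((tendsto_add_atTop_iff_nat 1).2 hL).sub hL).abs
    simpa [Function.iterate_succ_apply] using h2
  have hlow : ∀ k, Real.exp (-(K * (c - a))) * |g x - x| ≤ |g^[k] (g x) - g^[k] x| := by
    intro k
    rcases lt_or_gt_of_ne hne with h | h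
    · have := mvt k _ hgx _ hx h.le
      rw [abs_sub_comm, abs_of_pos (sub_pos.2 h), abs_sub_comm]
      exact this.trans (le_abs_self _)
    · have := mvt k _ hx _ hgx h.le
      rw [abs_of_pos (sub_pos.2 h)]
      exact this.trans (le_abs_self _)
  have h0 := ge_of_tendsto' hdiff hlow
  have hpos : 0 < Real.exp (-(K * (c - a))) * |g x - x| :=
    mul_pos (Real.exp_pos _) (abs_pos.2 (sub_ne_zero.2 hne))
  linarith

lemma kopell_lt {f g : ℝ → ℝ} {a b c : ℝ} (hf : ContDiff ℝ 2 f) (hf' : ∀ x, 0 < deriv f x)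
    (hg : ContDiff ℝ 1 g) (hgm : StrictMono g) (hcomm : ∀ x, f (g x) = g (f x))
    (fa : f a = a) (hlt : ∀ x ∈ Ioo a b, f x < x) (hc : c ∈ Ioo a b) (gc : g c = c) :
    ∀ x ∈ Ioo a b, g x = x := by
  have hfm : StrictMono f := strictMono_of_deriv_pos hf'
  have hcom : Function.Commute f g := hcomm
  obtain ⟨o1, o2, o3⟩ := tendsto_orbit hf.continuous hfm fa hlt hc
  have low : ∀ x, a < x → x ≤ c → g x = x := by
    intro x hax hxc
    have hex : ∃ n, f^[n] c ≤ x := ((o3.eventually (gt_mem_nhds hax)).exists).imp fun n h => h.le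
    classical
    have hspec := Nat.find_spec hex
    cases hN : Nat.find hex with
    | zero =>
      rw [hN] at hspec
      have : x = c := le_antisymm hxc hspec
      rw [this, gc]
    | succ m =>
      rw [hN, Function.iterate_succ_apply'] at hspec
      have hm := Nat.find_min hex (m := m) (by omega)
      push Not at hm
      have hcm : f^[m] c ∈ Ioo a b := ⟨o1 m, (o2 (Nat.zero_le m)).trans_lt hc.2⟩
      refine kopell_aux hf hf' hg hgm hcomm fa hlt hcm ?_ x ⟨hspec, hm.le⟩
      rw [← (hcom.iterate_left m).eq, gc]
  intro x hx
  obtain ⟨p1, p2, p3⟩ := tendsto_orbit hf.continuous hfm fa hlt hx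
  obtain ⟨n, hn⟩ := (p3.eventually (gt_mem_nhds hc.1)).exists
  have := low _ (p1 n) hn.le
  rw [← (hcom.iterate_left n).eq] at this
  exact (hfm.iterate n).injective this

lemma kopell {f g : ℝ → ℝ} {a b c : ℝ} (hf : ContDiff ℝ 2 f) (hf' : ∀ x, 0 < deriv f x)
    (hg : ContDiff ℝ 1 g) (hgm : StrictMono g) (hcomm : ∀ x, f (g x) = g (f x))
    (fa : f a = a) (fb : f b = b) (hne : ∀ x ∈ Ioo a b, f x ≠ x) (hc : c ∈ Ioo a b)
    (gc : g c = c) : ∀ x ∈ Ioo a b, g x = x := by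
  have key : ∀ x ∈ Ioo a b, ∀ y ∈ Ioo a b, f x < x → f y < y := by
    intro x hx y hy h
    by_contra! h2
    obtain ⟨z, hz, hz'⟩ := isPreconnected_Ioo.intermediate_value₂ hx hy
      hf.continuous.continuousOn continuousOn_id h.le h2
    exact hne z hz hz'
  rcases lt_or_gt_of_ne (hne c hc) with h | h
  · exact kopell_lt hf hf' hg hgm hcomm fa (fun x hx => key c hc x hx h) hc gc
  · have hgt : ∀ x ∈ Ioo a b, x < f x := by
      intro x hx
      by_contra! h2
      have := key x hx c hc (lt_of_le_of_ne h2 (hne x hx))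
      linarith
    have hd : ∀ x, HasDerivAt (fun x => - f (-x)) (deriv f (-x)) x := by
      intro x
      have h1 : HasDerivAt f (deriv f (-x)) (-x) :=
        (hf.differentiable (by norm_num) (-x)).hasDerivAt
      have := (h1.comp x (hasDerivAt_neg x)).fun_neg
      simpa [Function.comp_def] using this
    have := kopell_lt (f := fun x => - f (-x)) (g := fun x => - g (-x)) (a := -b) (b := -a)
      (c := -c) (hf.comp contDiff_neg).neg (fun x => by rw [(hd x).deriv]; exact hf' _)
      (hg.comp contDiff_neg).neg (fun x y hxy => neg_lt_neg (hgm (neg_lt_neg hxy)))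
      (fun x => by simp [hcomm]) (by simp [fb])
      (fun x hx => by
        have := hgt (-x) ⟨by linarith [hx.2], by linarith [hx.1]⟩
        linarith)
      ⟨neg_lt_neg hc.2, neg_lt_neg hc.1⟩ (by simp [gc])
    intro x hx
    have := this (-x) ⟨neg_lt_neg hx.2, neg_lt_neg hx.1⟩
    simpa using this

end Kopell

section Main

structure Good (F : ℝ → ℝ) : Prop where
  c2 : ContDiff ℝ 2 F
  dpos : ∀ x, 0 < deriv F x
  per : ∀ x, F (x + 1) = F x + 1
  fix : ∃ p, F p = p
  full : interior {x | F x = x} = ∅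

variable {F G H : ℝ → ℝ}

lemma Good.mono (hF : Good F) : StrictMono F := strictMono_of_deriv_pos hF.dpos

lemma Good.add_int (hF : Good F) (x : ℝ) (n : ℤ) : F (x + n) = F x + n :=
  CircleDeg1Lift.map_add_int ⟨⟨F, hF.mono.monotone⟩, hF.per⟩ x n

lemma Good.surj (hF : Good F) : Function.Surjective F :=
  hF.c2.continuous.surjective
    (CircleDeg1Lift.tendsto_atTop ⟨⟨F, hF.mono.monotone⟩, hF.per⟩)
    (CircleDeg1Lift.tendsto_atBot ⟨⟨F, hF.mono.monotone⟩, hF.per⟩)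

lemma Good.near (hF : Good F) (x : ℝ) : |F x - x| < 1 := by
  obtain ⟨p, hp⟩ := hF.fix
  have h1 : F (p + ⌊x - p⌋) = p + ⌊x - p⌋ := by rw [hF.add_int, hp]
  have h2 : F (p + ⌊x - p⌋ + 1) = p + ⌊x - p⌋ + 1 := by rw [hF.per, h1]
  have h3 := Int.floor_le (x - p)
  have h4 := Int.lt_floor_add_one (x - p)
  have h5 := hF.mono.monotone (show p + ⌊x - p⌋ ≤ x by linarith)
  have h6 := hF.mono (show x < p + ⌊x - p⌋ + 1 by linarith)
  rw [h1] at h5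
  rw [h2] at h6
  rw [abs_lt]
  constructor <;> linarith

lemma Good.gap (hF : Good F) {x : ℝ} (hx : F x ≠ x) :
    ∃ a b, F a = a ∧ F b = b ∧ x ∈ Ioo a b ∧ ∀ y ∈ Ioo a b, F y ≠ y := by
  obtain ⟨p, hp⟩ := hF.fix
  have h1 : F (p + ⌊x - p⌋) = p + ⌊x - p⌋ := by rw [hF.add_int, hp]
  have h2 : F (p + ⌊x - p⌋ + 1) = p + ⌊x - p⌋ + 1 := by rw [hF.per, h1]
  have h3 := Int.floor_le (x - p)
  have h4 := Int.lt_floor_add_one (x - p)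
  have hcl : IsClosed {y | F y = y} := isClosed_eq hF.c2.continuous continuous_id
  have hb1 : BddAbove ({y | F y = y} ∩ Iic x) := ⟨x, fun y hy => hy.2⟩
  have hb2 : BddBelow ({y | F y = y} ∩ Ici x) := ⟨x, fun y hy => hy.2⟩
  have ha := (hcl.inter isClosed_Iic).csSup_mem
    ⟨p + ⌊x - p⌋, h1, (by linarith : p + ⌊x - p⌋ ≤ x)⟩ hb1
  have hb := (hcl.inter isClosed_Ici).csInf_mem
    ⟨p + ⌊x - p⌋ + 1, h2, (by linarith : x ≤ p + ⌊x - p⌋ + 1)⟩ hb2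
  refine ⟨_, _, ha.1, hb.1, ⟨lt_of_le_of_ne ha.2 ?_, lt_of_le_of_ne hb.2 ?_⟩, ?_⟩
  · intro h; exact hx (h ▸ ha.1)
  · intro h; exact hx (by have := hb.1; rwa [← h] at this)
  · intro y hy hfy
    rcases le_total y x with h | h
    · exact absurd (le_csSup hb1 ⟨hfy, h⟩) (not_le.2 hy.1)
    · exact absurd (csInf_le hb2 ⟨hfy, h⟩) (not_le.2 hy.2)

lemma Good.fix_sub (hF : Good F) (hG : Good G) (hc : ∀ x, F (G x) = G (F x)) {x : ℝ}
    (hx : G x = x) : F x = x := by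
  by_contra hne
  obtain ⟨a, b, ha, hb, hxab, hab⟩ := hF.gap hne
  have := kopell hF.c2 hF.dpos (hG.c2.of_le (by norm_num)) hG.mono hc ha hb hab hxab hx
  have h2 : Ioo a b ⊆ interior {y | G y = y} := interior_maximal this isOpen_Ioo
  rw [hG.full] at h2
  exact h2 hxab

/-- The group of C¹ diffeomorphisms fixing `a`, `b` and commuting with `h`. -/
def centr (h : ℝ → ℝ) (a b : ℝ) : Subgroup (ℝ ≃o ℝ) where
  carrier := {u | ContDiff ℝ 1 u ∧ ContDiff ℝ 1 u.symm ∧ u a = a ∧ u b = b ∧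
    ∀ x, h (u x) = u (h x)}
  one_mem' := ⟨contDiff_id, contDiff_id, rfl, rfl, fun _ => rfl⟩
  mul_mem' := by
    rintro u v ⟨u1, u2, u3, u4, u5⟩ ⟨v1, v2, v3, v4, v5⟩
    refine ⟨u1.comp v1, v2.comp u2, ?_, ?_, ?_⟩
    · change u (v a) = a
      rw [v3, u3]
    · change u (v b) = b
      rw [v4, u4]
    · intro x
      change h (u (v x)) = u (v (h x))
      rw [u5, v5]
  inv_mem' := by
    rintro u ⟨u1, u2, u3, u4, u5⟩
    refine ⟨u2, u1, ?_, ?_, ?_⟩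
    · change u.symm a = a
      rw [OrderIso.symm_apply_eq, u3]
    · change u.symm b = b
      rw [OrderIso.symm_apply_eq, u4]
    · intro x
      change h (u.symm x) = u.symm (h x)
      rw [eq_comm, OrderIso.symm_apply_eq, ← u5, OrderIso.apply_symm_apply]

lemma centr_free (hG : Good G) {a b : ℝ} (ga : G a = a) (gb : G b = b)
    (hne : ∀ x ∈ Ioo a b, G x ≠ x) : FreeOn (centr G a b) a b where
  fixa := fun _ hu => hu.2.2.1
  fixb := fun _ hu => hu.2.2.2.1
  free := fun u hu _ hx hux =>
    kopell hG.c2 hG.dpos hu.1 u.strictMono hu.2.2.2.2 ga gb hne hx hux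

lemma Good.mem_centr (hF : Good F) {a b : ℝ} (fa : F a = a) (fb : F b = b)
    (hc : ∀ x, G (F x) = F (G x)) : hF.mono.orderIsoOfSurjective F hF.surj ∈ centr G a b := by
  refine ⟨hF.c2.of_le (by norm_num), ?_, fa, fb, hc⟩
  have := (hF.mono.orderIsoOfSurjective F hF.surj).toHomeomorph.contDiff_symm_deriv (n := 1)
    (f' := deriv F) (fun x => (hF.dpos x).ne')
    (fun x => (hF.c2.differentiable (by norm_num) x).hasDerivAt) (hF.c2.of_le (by norm_num))
  exact this

lemma Good.trans (hF : Good F) (hG : Good G) (hH : Good H) (hFG : ∀ x, F (G x) = G (F x))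
    (hGH : ∀ x, G (H x) = H (G x)) (x : ℝ) : F (H x) = H (F x) := by
  have s1 : ∀ y, G y = y → F y = y := fun y => hF.fix_sub hG hFG
  have s2 : ∀ y, G y = y → H y = y := fun y => hH.fix_sub hG fun x => (hGH x).symm
  by_cases hx : G x = x
  · rw [s2 x hx, s1 x hx, s2 x hx]
  · obtain ⟨a, b, ha, hb, hxab, hab⟩ := hG.gap hx
    exact (centr_free hG ha hb hab).comm
      (hH.mem_centr (s2 a ha) (s2 b hb) hGH)
      (hF.mem_centr (s1 a ha) (s1 b hb) fun x => (hFG x).symm) hxab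

lemma exists_good {f : Equiv.Perm (AddCircle (1 : ℝ))} (hd : IsDiffCircle f)
    (hfix : ∃ p, f p = p) (hfull : interior {p | f p = p} = ∅) :
    ∃ F, Good F ∧ ∀ x : ℝ, f ↑x = ↑(F x) := by
  obtain ⟨F, h1, h2, h3, h4⟩ := hd
  obtain ⟨p, hp⟩ := hfix
  induction p using QuotientAddGroup.induction_on with | _ p
  have hp' : ((F p - p : ℝ) : AddCircle (1 : ℝ)) = 0 := by
    rw [AddCircle.coe_sub, ← h4]
    exact sub_eq_zero.2 hp
  obtain ⟨n, hn⟩ := (AddCircle.coe_eq_zero_iff (1 : ℝ)).1 hp'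
  have hl : ∀ x : ℝ, f ↑x = ↑(F x - n) := by
    intro x
    rw [AddCircle.coe_sub, h4]
    have : ((n : ℝ) : AddCircle (1 : ℝ)) = 0 :=
      (AddCircle.coe_eq_zero_iff (1 : ℝ)).2 ⟨n, by simp⟩
    rw [this, sub_zero]
  refine ⟨fun x => F x - n, ⟨h1.sub contDiff_const, fun x => ?_, fun x => ?_, ⟨p, ?_⟩, ?_⟩, hl⟩
  · rw [deriv_sub_const]; exact h2 x
  · simp only [h3]; ring
  · simp at hn ⊢; linarith
  · by_contra hne
    obtain ⟨x, hx⟩ := nonempty_iff_ne_empty.2 hne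
    have ho : IsOpen ((fun x : ℝ => (x : AddCircle (1 : ℝ))) '' interior {x | F x - n = x}) :=
      QuotientAddGroup.isOpenMap_coe _ isOpen_interior
    have hs : ((fun x : ℝ => (x : AddCircle (1 : ℝ))) '' interior {x | F x - n = x}) ⊆
        interior {p | f p = p} := by
      refine interior_maximal ?_ ho
      rintro _ ⟨y, hy, rfl⟩
      have : F y - n = y := (interior_subset hy : y ∈ {x | F x - n = x})
      change f ↑y = ↑y
      rw [hl, this]
    rw [hfull] at hs
    exact hs ⟨x, hx, rfl⟩

lemma lift_comm {f g : Equiv.Perm (AddCircle (1 : ℝ))} (hF : Good F) (hG : Good G)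
    (hf : ∀ x : ℝ, f ↑x = ↑(F x)) (hg : ∀ x : ℝ, g ↑x = ↑(G x)) :
    Commute f g ↔ ∀ x, F (G x) = G (F x) := by
  constructor
  · intro hc
    have h1 : ∀ x : ℝ, ∃ n : ℤ, (n : ℝ) = F (G x) - G (F x) := by
      intro x
      have h2 : f (g ↑x) = g (f ↑x) := DFunLike.congr_fun hc.eq (x : AddCircle (1 : ℝ))
      rw [hg, hf, hf, hg] at h2
      have h3 : ((F (G x) - G (F x) : ℝ) : AddCircle (1 : ℝ)) = 0 := by
        rw [AddCircle.coe_sub, h2, sub_self]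
      obtain ⟨n, hn⟩ := (AddCircle.coe_eq_zero_iff (1 : ℝ)).1 h3
      exact ⟨n, by simpa using hn⟩
    choose n hn using h1
    have hcont : Continuous n := by
      rw [Int.isClosedEmbedding_coe_real.isInducing.continuous_iff]
      have : (Int.cast ∘ n : ℝ → ℝ) = fun x => F (G x) - G (F x) := funext hn
      rw [this]
      exact (hF.c2.continuous.comp hG.c2.continuous).sub
        (hG.c2.continuous.comp hF.c2.continuous)
    obtain ⟨q, hq⟩ := hG.fix
    have hn0 : n q = 0 := by
      have h4 := hn q
      rw [hq] at h4
      have h5 := hG.near (F q)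
      rw [abs_sub_comm, ← h4] at h5
      exact Int.abs_lt_one_iff.1 (by exact_mod_cast h5)
    intro x
    have h6 : n x = n q := PreconnectedSpace.constant inferInstance hcont
    have h7 := hn x
    rw [h6, hn0] at h7
    push_cast at h7
    linarith
  · intro h
    refine Equiv.ext fun p => ?_
    induction p using QuotientAddGroup.induction_on with | _ x
    change f (g (x : AddCircle (1 : ℝ))) = g (f (x : AddCircle (1 : ℝ)))
    rw [hg, hf, hf, hg, h]

end Main

/-- **Abelian criterion for the circle.** Let `g 1, …, g k` be orientation-preserving
C² diffeomorphisms of `S¹ = ℝ/ℤ`, each fully supported (fixed point set with empty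
interior) and each having at least one fixed point.  If the commutativity graph of the
generators is connected (any two indices are joined by a chain of commuting pairs),
then the group they generate is abelian. -/
theorem abelian_criterion_circle {k : ℕ} (g : Fin k → Equiv.Perm (AddCircle (1 : ℝ)))
    (hdiff : ∀ i, IsDiffCircle (g i))
    (hfix : ∀ i, ∃ p, g i p = p)
    (hfull : ∀ i, interior {p | g i p = p} = ∅)
    (hconn : ∀ i j : Fin k, Relation.ReflTransGen (fun a b => Commute (g a) (g b)) i j) :
    ∀ u ∈ Subgroup.closure (Set.range g), ∀ v ∈ Subgroup.closure (Set.range g),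
      Commute u v := by
  choose F hF hFl using fun i => exists_good (hdiff i) (hfix i) (hfull i)
  have hc : ∀ i j, Commute (g i) (g j) := by
    intro i j
    induction hconn i j with
    | refl => exact Commute.refl _
    | tail _ hbc ih =>
      rw [lift_comm (hF _) (hF _) (hFl _) (hFl _)] at hbc ih ⊢
      exact (hF _).trans (hF _) (hF _) ih hbc
  have := Subgroup.isMulCommutative_closure (k := Set.range g) (by
    rintro _ ⟨i, rfl⟩ _ ⟨j, rfl⟩
    exact (hc i j).eq)
  intro u hu v hv
  exact congrArg Subtype.val
    (this.is_comm.comm (⟨u, hu⟩ : Subgroup.closure (Set.range g)) ⟨v, hv⟩)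
end

section
/- The aba lemma: Let a and b be orientation-preserving homeomorphisms of I = [0,1], and let n₁, n₂, n₃, m₁, m₂, m₃ be integers with m₁ + m₂ ≠ m₃ such that a^{n₁} ∘ b^{m₃} ∘ a^{n₂} = b^{m₁} ∘ a^{n₃} ∘ b^{m₂}. If J is a nontrivial (nondegenerate) interval contained in Fix(a), then either J ⊆ Fix(b) or J ∩ Fix(b) = ∅. -/
theorem aba_apply_inv (f : Equiv.Perm ℝ) (x : ℝ) : f (f⁻¹ x) = x := by
  rw [← Equiv.Perm.mul_apply, mul_inv_cancel, Equiv.Perm.one_apply]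

theorem aba_inv_apply (f : Equiv.Perm ℝ) (x : ℝ) : f⁻¹ (f x) = x := by
  rw [← Equiv.Perm.mul_apply, inv_mul_cancel, Equiv.Perm.one_apply]

open Set in
/-- A permutation of `ℝ` preserving `[0,1]` and increasing there is increasing on `ℝ`. -/
theorem aba_strictMono (b : Equiv.Perm ℝ)
    (hb_off : ∀ x, x ∉ Set.Icc (0 : ℝ) 1 → b x = x)
    (hb_mono : StrictMonoOn b (Set.Icc 0 1)) : StrictMono b := by
  have hin : ∀ x ∈ Set.Icc (0 : ℝ) 1, b x ∈ Set.Icc (0 : ℝ) 1 := by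
    intro x hx
    by_contra h
    have h1 := b.injective (hb_off _ h)
    rw [h1] at h
    exact h hx
  intro x y hxy
  by_cases hx : x ∈ Set.Icc (0 : ℝ) 1 <;> by_cases hy : y ∈ Set.Icc (0 : ℝ) 1
  · exact hb_mono hx hy hxy
  · rw [hb_off y hy]
    have h1 := hin x hx
    simp only [mem_Icc, not_and_or, not_le] at hx hy h1
    rcases hy with hy | hy <;> linarith
  · rw [hb_off x hx]
    have h1 := hin y hy
    simp only [mem_Icc, not_and_or, not_le] at hx hy h1
    rcases hx with hx | hx <;> linarith
  · rw [hb_off x hx, hb_off y hy]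
    exact hxy

theorem aba_pow_strictMono (b : Equiv.Perm ℝ) (hb : StrictMono b) (n : ℕ) :
    StrictMono (b ^ n : Equiv.Perm ℝ) := by
  rw [Equiv.Perm.coe_pow]
  exact hb.iterate n

theorem aba_zpow_strictMono (b : Equiv.Perm ℝ) (hb : StrictMono b) (n : ℤ) :
    StrictMono (b ^ n : Equiv.Perm ℝ) := by
  cases n with
  | ofNat n => simpa using aba_pow_strictMono b hb n
  | negSucc n =>
    intro x y hxy
    rw [zpow_negSucc]
    apply (aba_pow_strictMono b hb (n + 1)).lt_iff_lt.1
    rw [aba_apply_inv, aba_apply_inv]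
    exact hxy

theorem aba_fixed_of_zpow (b : Equiv.Perm ℝ) (hb : StrictMono b) (k : ℤ) (hk : k ≠ 0) (x : ℝ)
    (h : (b ^ k) x = x) : b x = x := by
  have h2 : (b ^ k.natAbs) x = x := by
    rcases Int.natAbs_eq k with hk' | hk'
    · rw [hk', zpow_natCast] at h
      exact h
    · rw [hk', zpow_neg, zpow_natCast, Equiv.Perm.inv_eq_iff_eq] at h
      exact h.symm
  rw [Equiv.Perm.coe_pow] at h2
  have h3 := (Function.Commute.id_right (f := (b : ℝ → ℝ))).iterate_pos_eq_iff_map_eq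
    hb.monotone strictMono_id (x := x) (Int.natAbs_pos.2 hk)
  simpa [h2] using h3

/-- **The `aba` lemma.** Let `a` and `b` be orientation-preserving homeomorphisms of
`I = [0,1]` (modelled as permutations of `ℝ` which are the identity off `[0,1]` and
strictly increasing on `[0,1]`; such maps are automatically homeomorphisms of `[0,1]`).
Suppose `a ^ n₁ * b ^ m₃ * a ^ n₂ = b ^ m₁ * a ^ n₃ * b ^ m₂` with `m₁ + m₂ ≠ m₃`.
If `J` is a nondegenerate interval contained in `Fix(a)`, then either `J ⊆ Fix(b)` or
`J ∩ Fix(b) = ∅`. -/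
theorem aba_lemma (a b : Equiv.Perm ℝ)
    (ha_off : ∀ x, x ∉ Set.Icc (0 : ℝ) 1 → a x = x)
    (hb_off : ∀ x, x ∉ Set.Icc (0 : ℝ) 1 → b x = x)
    (ha_mono : StrictMonoOn a (Set.Icc 0 1))
    (hb_mono : StrictMonoOn b (Set.Icc 0 1))
    (n₁ n₂ n₃ m₁ m₂ m₃ : ℤ) (hm : m₁ + m₂ ≠ m₃)
    (hrel : a ^ n₁ * b ^ m₃ * a ^ n₂ = b ^ m₁ * a ^ n₃ * b ^ m₂)
    (J : Set ℝ) (hJI : J ⊆ Set.Icc 0 1) (hJconn : J.OrdConnected)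
    (hJnt : J.Nontrivial) (hJfix : ∀ x ∈ J, a x = x) :
    (∀ x ∈ J, b x = x) ∨ (∀ x ∈ J, b x ≠ x) := by
  have hb := aba_strictMono b hb_off hb_mono
  have hz := aba_zpow_strictMono b hb
  have hbc : Continuous b := hb.monotone.continuous_of_surjective b.surjective
  -- points of `J` whose relevant images stay in `J` are fixed by `b`
  have key : ∀ x ∈ J, (b ^ m₂) x ∈ J → (b ^ m₃) x ∈ J → b x = x := by
    intro x hx h2 h3
    have e := congrArg (fun f : Equiv.Perm ℝ => f x) hrel
    simp only [Equiv.Perm.mul_apply] at e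
    rw [Equiv.Perm.zpow_apply_eq_self_of_apply_eq_self (hJfix _ hx),
      Equiv.Perm.zpow_apply_eq_self_of_apply_eq_self (hJfix _ h3),
      Equiv.Perm.zpow_apply_eq_self_of_apply_eq_self (hJfix _ h2)] at e
    apply aba_fixed_of_zpow b hb (-m₃ + (m₁ + m₂)) (by omega)
    rw [zpow_add, zpow_add, Equiv.Perm.mul_apply, Equiv.Perm.mul_apply, ← e, zpow_neg,
      aba_inv_apply]
  have hcl : IsClosed {x | b x = x} := isClosed_eq hbc continuous_id
  have hinv : ∀ (m : ℤ) (x : ℝ), (b ^ m) ((b ^ (-m)) x) = x := by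
    intro m x
    rw [zpow_neg, aba_apply_inv]
  by_cases hex : ∃ p ∈ J, b p = p
  · left
    obtain ⟨p, hp, hbp⟩ := hex
    intro q hq
    rcases le_total p q with hpq | hpq
    · have hsub : Set.Icc p q ⊆ {x | b x = x} := by
        refine IsClosed.Icc_subset_of_forall_exists_gt (hcl.inter isClosed_Icc) hbp ?_
        rintro s ⟨hs, hs1, hs2⟩ y hy
        have hs' : ∀ m : ℤ, (b ^ m) s = s :=
          Equiv.Perm.zpow_apply_eq_self_of_apply_eq_self hs
        have hlt : ∀ m : ℤ, s < (b ^ m) q := fun m => by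
          have := hz m hs2
          rwa [hs' m] at this
        have hy : s < y := hy
        obtain ⟨z, hz0, hz1⟩ := exists_between
          (lt_min (lt_min hy hs2) (lt_min (hlt (-m₂)) (hlt (-m₃))))
        simp only [lt_min_iff] at hz1
        obtain ⟨⟨hzy, hzq⟩, hz2, hz3⟩ := hz1
        have hin : ∀ m : ℤ, z < (b ^ (-m)) q → (b ^ m) z ∈ J := by
          intro m hm
          have h1 := hz m hm
          rw [hinv] at h1
          have h2 := hz m hz0
          rw [hs'] at h2
          exact hJconn.out hp hq ⟨by linarith, h1.le⟩
        exact ⟨z, key z (hJconn.out hp hq ⟨by linarith, hzq.le⟩) (hin _ hz2) (hin _ hz3),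
          hz0, hzy.le⟩
      exact hsub ⟨hpq, le_rfl⟩
    · have hsub : Set.Icc q p ⊆ {x | b x = x} := by
        refine IsClosed.Icc_subset_of_forall_exists_lt (hcl.inter isClosed_Icc) hbp ?_
        rintro s ⟨hs, hs1, hs2⟩ y hy
        have hs' : ∀ m : ℤ, (b ^ m) s = s :=
          Equiv.Perm.zpow_apply_eq_self_of_apply_eq_self hs
        have hlt : ∀ m : ℤ, (b ^ m) q < s := fun m => by
          have := hz m hs1
          rwa [hs' m] at this
        have hy : y < s := hy
        obtain ⟨z, hz1, hz0⟩ := exists_between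
          (max_lt (max_lt hy hs1) (max_lt (hlt (-m₂)) (hlt (-m₃))))
        simp only [max_lt_iff] at hz1
        obtain ⟨⟨hzy, hzq⟩, hz2, hz3⟩ := hz1
        have hin : ∀ m : ℤ, (b ^ (-m)) q < z → (b ^ m) z ∈ J := by
          intro m hm
          have h1 := hz m hm
          rw [hinv] at h1
          have h2 := hz m hz0
          rw [hs'] at h2
          exact hJconn.out hq hp ⟨h1.le, by linarith⟩
        exact ⟨z, key z (hJconn.out hq hp ⟨hzq.le, by linarith⟩) (hin _ hz2) (hin _ hz3),
          hzy.le, hz0⟩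
      exact hsub ⟨le_rfl, hpq⟩
  · right
    intro x hx h
    exact hex ⟨x, hx, h⟩
end
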